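/- arXiv:1301.7215 — 5 statements merged into one kernel-verified Lean document; each statement's English description precedes it below -/
import Mathlib

section
/- Let V = {A ∈ Matrix (Fin 3) (Fin 3) ℂ : (I₃, A, A²) is linearly dependent over ℂ}, let R = MvPolynomial (Fin 3 × Fin 3) ℂ with its standard grading, and let I(V) be the vanishing ideal of V. For d ∈ ℕ, let h_d = dim_ℂ R_d − dim_ℂ (I(V) ∩ R_d), the dimension of the degree-d homogeneous component of the coordinate ring R/I(V). Then in the formal power series ring ℚ[[t]] (or ℤ[[t]]): (1 − t)⁶ · Σ_{d≥0} h_d t^d = 1 + 3t + 6t² − 10t³ + 10t⁴ − 5t⁵ + t⁶. -/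
namespace Stmt9
open MvPolynomial

abbrev Idx := Option (Fin 3 ⊕ Fin 3)
abbrev P := MvPolynomial Idx ℂ

noncomputable def lam : P := X none
noncomputable def x (i : Fin 3) : P := X (some (Sum.inl i))
noncomputable def y (i : Fin 3) : P := X (some (Sum.inr i))

noncomputable def z (p : Fin 3 × Fin 3) : P :=
  (if p.1 = p.2 then lam else 0) + x p.1 * y p.2

noncomputable def phi : MvPolynomial (Fin 3 × Fin 3) ℂ →ₐ[ℂ] P := aeval z

/-- the image of the degree `d` part -/
noncomputable def Im (d : ℕ) : Submodule ℂ P :=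
  (homogeneousSubmodule (Fin 3 × Fin 3) ℂ d).map phi.toLinearMap

def wx : Idx → ℕ
  | none => 1
  | some (Sum.inl _) => 1
  | some (Sum.inr _) => 0

def wy : Idx → ℕ
  | none => 1
  | some (Sum.inl _) => 0
  | some (Sum.inr _) => 1

/-- exponents of bidegree `(d, d)` -/
def E (d : ℕ) : Set (Idx →₀ ℕ) :=
  {m | m none + ∑ i, m (some (Sum.inl i)) = d ∧ m none + ∑ i, m (some (Sum.inr i)) = d}

noncomputable def S (d : ℕ) : Submodule ℂ P := restrictSupport ℂ (E d)

lemma weight_wx (m : Idx →₀ ℕ) :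
    Finsupp.weight wx m = m none + ∑ i, m (some (Sum.inl i)) := by
  rw [Finsupp.weight_apply, Finsupp.sum_fintype _ _ (by simp)]
  simp [Fintype.sum_option, wx]

lemma weight_wy (m : Idx →₀ ℕ) :
    Finsupp.weight wy m = m none + ∑ i, m (some (Sum.inr i)) := by
  rw [Finsupp.weight_apply, Finsupp.sum_fintype _ _ (by simp)]
  simp [Fintype.sum_option, wy]

lemma z_wx (p : Fin 3 × Fin 3) : IsWeightedHomogeneous wx (z p) 1 := by
  unfold z
  apply IsWeightedHomogeneous.add
  · split_ifs
    · exact isWeightedHomogeneous_X _ _ _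
    · exact isWeightedHomogeneous_zero _ _ _
  · exact (isWeightedHomogeneous_X ℂ wx (some (Sum.inl p.1))).mul
      (isWeightedHomogeneous_X ℂ wx (some (Sum.inr p.2)))

lemma z_wy (p : Fin 3 × Fin 3) : IsWeightedHomogeneous wy (z p) 1 := by
  unfold z
  apply IsWeightedHomogeneous.add
  · split_ifs
    · exact isWeightedHomogeneous_X _ _ _
    · exact isWeightedHomogeneous_zero _ _ _
  · exact (isWeightedHomogeneous_X ℂ wy (some (Sum.inl p.1))).mul
      (isWeightedHomogeneous_X ℂ wy (some (Sum.inr p.2)))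

lemma phi_hom (w : Idx → ℕ) (hw : ∀ p, IsWeightedHomogeneous w (z p) 1) {d : ℕ}
    {f : MvPolynomial (Fin 3 × Fin 3) ℂ} (hf : f.IsHomogeneous d) :
    IsWeightedHomogeneous w (phi f) d := by
  rw [phi, aeval_def, eval₂_eq]
  apply IsWeightedHomogeneous.sum
  intro m hm
  have hd : ∑ i ∈ m.support, m i = d := by
    have := hf (mem_support_iff.mp hm)
    rw [Finsupp.weight_apply] at this
    simpa [Finsupp.sum] using this
  apply IsWeightedHomogeneous.C_mul
  rw [← hd]
  apply IsWeightedHomogeneous.prod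
  intro i _
  simpa using (hw i).pow (m i)

lemma Im_le_S (d : ℕ) : Im d ≤ S d := by
  rintro _ ⟨f, hf, rfl⟩
  rw [S, mem_restrictSupport_iff]
  intro m hm
  have hm' := mem_support_iff.mp hm
  have h1 := phi_hom wx z_wx hf hm'
  have h2 := phi_hom wy z_wy hf hm'
  rw [weight_wx] at h1
  rw [weight_wy] at h2
  exact ⟨h1, h2⟩

noncomputable def Eequiv (d : ℕ) : E d ≃
    (Σ k : Fin (d + 1), ({u // u ∈ Finset.finsuppAntidiag (Finset.univ : Finset (Fin 3)) k.1} ×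
      {u // u ∈ Finset.finsuppAntidiag (Finset.univ : Finset (Fin 3)) k.1})) := by
  refine Equiv.ofBijective (fun m => ⟨⟨∑ i, m.1 (some (Sum.inl i)), by have := m.2.1; omega⟩,
    ⟨Finsupp.equivFunOnFinite.symm (fun i => m.1 (some (Sum.inl i))), by simp⟩,
    ⟨Finsupp.equivFunOnFinite.symm (fun i => m.1 (some (Sum.inr i))), by
      have := m.2.1; have := m.2.2; simp; omega⟩⟩) ⟨?_, ?_⟩
  · rintro ⟨m, hm⟩ ⟨n, hn⟩ h
    have e1 : ∀ i, m (some (Sum.inl i)) = n (some (Sum.inl i)) := fun i =>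
      congrArg (fun q => q.2.1.1 i) h
    have e2 : ∀ i, m (some (Sum.inr i)) = n (some (Sum.inr i)) := fun i =>
      congrArg (fun q => q.2.2.1 i) h
    apply Subtype.ext
    ext (_ | i | i)
    · have := hm.1; have := hn.1
      simp only [e1] at *
      omega
    · exact e1 i
    · exact e2 i
  · rintro ⟨⟨k, hk⟩, ⟨u, hu⟩, ⟨v, hv⟩⟩
    simp only [Finset.mem_finsuppAntidiag, Finset.subset_univ, and_true] at hu hv
    have hu' : ∑ i, u i = k := hu
    subst hu'
    refine ⟨⟨Finsupp.equivFunOnFinite.symm (fun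
      | none => d - ∑ i, u i
      | some (Sum.inl i) => u i
      | some (Sum.inr i) => v i), ?_⟩, ?_⟩
    · have hv' : ∑ i, v i = ∑ i, u i := hv
      constructor
      · simp; omega
      · simp [hv']; omega
    · refine Sigma.ext (Fin.ext rfl) (heq_of_eq (Prod.ext (Subtype.ext ?_) (Subtype.ext ?_)))
      · ext i; rfl
      · ext i; rfl

lemma finrank_S (d : ℕ) : Module.finrank ℂ (S d) =
    ∑ k ∈ Finset.range (d + 1), (Nat.choose (k + 2) 2) ^ 2 := by
  rw [S, Module.finrank_eq_nat_card_basis (basisRestrictSupport ℂ (E d)),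
    Nat.card_congr (Eequiv d), Nat.card_eq_fintype_card, Fintype.card_sigma,
    Finset.sum_range]
  refine Finset.sum_congr rfl fun k _ => ?_
  rw [Fintype.card_prod, Fintype.card_coe, Finset.card_finsuppAntidiag_nat_eq_choose]
  · simp only [Finset.card_univ, Fintype.card_fin]
    rw [show 3 + k.1 - 1 = k.1 + 2 by omega, sq, Nat.choose_symm_add]

instance (d : ℕ) : FiniteDimensional ℂ (S d) := by
  have : Finite (E d) := Finite.of_equiv _ (Eequiv d).symm
  exact Module.Finite.of_basis (basisRestrictSupport ℂ (E d))

open PowerSeries in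
lemma one_sub_mul_mk (f : ℕ → ℚ) : (1 - PowerSeries.X : PowerSeries ℚ) * PowerSeries.mk f =
    PowerSeries.C (f 0) + PowerSeries.X * PowerSeries.mk (fun n => f (n + 1) - f n) := by
  ext n
  rw [sub_mul, one_mul]
  rcases n with _ | n
  · simp
  · simp [PowerSeries.coeff_succ_X_mul, PowerSeries.coeff_C]

lemma choose_two (n : ℕ) : (Nat.choose (n + 2) 2 : ℚ) = (n + 2) * (n + 1) / 2 := by
  rw [Nat.cast_choose_two]; push_cast; ring

lemma series (h : ℕ → ℚ) (hh0 : h 0 = 1)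
    (hh : ∀ d, h (d + 1) = ∑ k ∈ Finset.range (d + 2), (Nat.choose (k + 2) 2 : ℚ) ^ 2 - 1) :
    (1 - PowerSeries.X : PowerSeries ℚ) ^ 6 * PowerSeries.mk h =
      1 + 3 * PowerSeries.X + 6 * PowerSeries.X ^ 2 - 10 * PowerSeries.X ^ 3
        + 10 * PowerSeries.X ^ 4 - 5 * PowerSeries.X ^ 5 + PowerSeries.X ^ 6 := by
  have key : (1 - PowerSeries.X : PowerSeries ℚ) * PowerSeries.mk h =
      PowerSeries.mk (fun n => ((n : ℚ) + 2) ^ 2 * (n + 1) ^ 2 / 4) - PowerSeries.X := by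
    rw [one_sub_mul_mk]
    ext n
    rcases n with _ | _ | n
    · simp [hh0]; norm_num
    · simp [hh0, hh, PowerSeries.coeff_succ_X_mul, PowerSeries.coeff_C, Finset.sum_range_succ,
        PowerSeries.coeff_X]
      norm_num [Nat.choose]
    · simp only [map_add, PowerSeries.coeff_succ_X_mul, PowerSeries.coeff_mk, map_sub,
        PowerSeries.coeff_C, PowerSeries.coeff_X, hh, Finset.sum_range_succ _ (n + 2), choose_two]
      simp
      ring
  have k2 : (1 - PowerSeries.X : PowerSeries ℚ) ^ 5 *
      PowerSeries.mk (fun n => ((n : ℚ) + 2) ^ 2 * (n + 1) ^ 2 / 4) =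
      1 + 4 * PowerSeries.X + PowerSeries.X ^ 2 := by
    have e : PowerSeries.mk (fun n => ((n : ℚ) + 2) ^ 2 * (n + 1) ^ 2 / 4) =
      PowerSeries.mk (fun n => ((4 + n).choose 4 : ℚ)) *
        (1 + 4 * PowerSeries.X + PowerSeries.X ^ 2) := by
      have c4 : ∀ n : ℕ, ((4 + n).choose 4 : ℚ) = (n+4)*(n+3)*(n+2)*(n+1)/24 := by
        intro n
        have := Nat.cast_add_choose ℚ (a := 4) (b := n)
        rw [this]
        have h4 : ((4 + n).factorial : ℚ) = (n+4)*(n+3)*(n+2)*(n+1) * n.factorial := by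
          rw [show 4 + n = n+1+1+1+1 by ring]
          simp only [Nat.factorial_succ]; push_cast; ring
        rw [h4]
        have : (n.factorial : ℚ) ≠ 0 := by positivity
        norm_num [Nat.factorial]
        field_simp
      have : (4 : PowerSeries ℚ) = PowerSeries.C 4 := (map_ofNat PowerSeries.C 4).symm
      rw [mul_add, mul_add, mul_one, this, ← mul_assoc, mul_comm _ (PowerSeries.C (4:ℚ)), mul_assoc]
      ext n
      rcases n with _ | _ | n
      · simp; norm_num
      · simp [PowerSeries.coeff_succ_mul_X, PowerSeries.coeff_mul_X_pow']; norm_num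
      · simp only [map_add, PowerSeries.coeff_succ_mul_X, PowerSeries.coeff_mk,
          PowerSeries.coeff_C_mul, PowerSeries.coeff_mul_X_pow', c4]
        simp
        ring
    rw [e, ← mul_assoc, mul_comm _ (PowerSeries.mk _),
      PowerSeries.mk_add_choose_mul_one_sub_pow_eq_one ℚ 4, one_mul]
  calc _ = (1 - PowerSeries.X : PowerSeries ℚ) ^ 5 *
        ((1 - PowerSeries.X : PowerSeries ℚ) * PowerSeries.mk h) := by ring
    _ = _ := by
      rw [key, mul_sub, k2]
      ring

lemma mul_mem {a b : ℕ} {f g : P} (hf : f ∈ Im a) (hg : g ∈ Im b) : f * g ∈ Im (a + b) := by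
  obtain ⟨f, hf, rfl⟩ := hf
  obtain ⟨g, hg, rfl⟩ := hg
  exact ⟨f * g, IsHomogeneous.mul hf hg, by simp⟩

lemma z_mem (p : Fin 3 × Fin 3) : z p ∈ Im 1 :=
  ⟨X p, isHomogeneous_X _ _, by simp [phi]⟩

lemma one_mem : (1 : P) ∈ Im 0 := ⟨1, isHomogeneous_one _ _, by simp⟩

lemma offdiag_mem {i j : Fin 3} (h : i ≠ j) : x i * y j ∈ Im 1 := by
  have := z_mem (i, j)
  simpa [z, h] using this

lemma diag_mem (i j : Fin 3) : x i * y i - x j * y j ∈ Im 1 := by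
  have := sub_mem (z_mem (i, i)) (z_mem (j, j))
  simpa [z] using this

/-- if the `λ^n`-multiples of traceless forms are in the image, so are `λ^n`-multiples of quadrics -/
lemma quad_mem (n : ℕ)
    (h1 : ∀ i j : Fin 3, i ≠ j → lam ^ n * (x i * y j) ∈ Im (n + 1))
    (h2 : ∀ i j : Fin 3, lam ^ n * (x i * y i - x j * y j) ∈ Im (n + 1))
    (i j k l : Fin 3) : lam ^ n * (x i * y j * (x k * y l)) ∈ Im (n + 2) := by
  have a1 : ∀ i j k l : Fin 3, i ≠ j → k ≠ l →
      lam ^ n * (x i * y j * (x k * y l)) ∈ Im (n + 2) := by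
    intro i j k l hij hkl
    have := mul_mem (h1 i j hij) (offdiag_mem hkl)
    rwa [mul_assoc] at this
  have a1' : ∀ i j k l : Fin 3, i ≠ l → k ≠ j →
      lam ^ n * (x i * y j * (x k * y l)) ∈ Im (n + 2) := by
    intro i j k l hij hkl
    have := a1 i l k j hij hkl
    convert this using 1; ring
  have a2 : ∀ i j k : Fin 3, i ≠ j →
      lam ^ n * (x i * y j * (x k * y k)) ∈ Im (n + 2) := by
    intro i j k hij
    obtain ⟨m, hm1, hm2⟩ : ∃ m : Fin 3, m ≠ i ∧ m ≠ j := by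
      revert hij; revert i j; decide
    have e1 := a1' i j m m hm1.symm hm2
    have e2 := mul_mem (h1 i j hij) (diag_mem k m)
    convert add_mem e1 e2 using 1; ring
  have a3 : ∀ i k : Fin 3, lam ^ n * (x i * y i * (x k * y k)) ∈ Im (n + 2) := by
    intro i k
    by_cases hik : i = k
    · subst hik
      obtain ⟨a, b, ha, hb, hab⟩ : ∃ a b : Fin 3, a ≠ i ∧ b ≠ i ∧ a ≠ b := by
        revert i; decide
      have e1 := mul_mem (h2 i a) (diag_mem i b)
      have e2 := a1' i i b b hb.symm hb
      have e3 := a1' i i a a ha.symm ha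
      have e4 := a1' a a b b hab hab.symm
      convert add_mem e1 (sub_mem (add_mem e2 e3) e4) using 1; ring
    · exact a1' _ _ _ _ hik (Ne.symm hik)
  by_cases hij : i = j
  · subst hij
    by_cases hkl : k = l
    · subst hkl; exact a3 _ _
    · have := a2 k l i hkl
      convert this using 1; ring
  · by_cases hkl : k = l
    · subst hkl; exact a2 _ _ _ hij
    · exact a1 _ _ _ _ hij hkl

lemma traceless_mem (n : ℕ) :
    (∀ i j : Fin 3, i ≠ j → lam ^ n * (x i * y j) ∈ Im (n + 1)) ∧
    (∀ i j : Fin 3, lam ^ n * (x i * y i - x j * y j) ∈ Im (n + 1)) := by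
  induction n with
  | zero => exact ⟨fun i j h => by simpa using offdiag_mem h, fun i j => by simpa using diag_mem i j⟩
  | succ n ih =>
    have q := quad_mem n ih.1 ih.2
    have hz : z (0, 0) = lam + x 0 * y 0 := by simp [z]
    constructor
    · intro i j h
      have e1 := mul_mem (ih.1 i j h) (z_mem (0, 0))
      rw [hz] at e1
      convert sub_mem e1 (q i j 0 0) using 1; ring
    · intro i j
      have e1 := mul_mem (ih.2 i j) (z_mem (0, 0))
      rw [hz] at e1
      convert sub_mem e1 (sub_mem (q i i 0 0) (q j j 0 0)) using 1; ring

lemma quad_mem' (n : ℕ) (i j k l : Fin 3) :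
    lam ^ n * (x i * y j * (x k * y l)) ∈ Im (n + 2) :=
  quad_mem n (traceless_mem n).1 (traceless_mem n).2 i j k l

/-- Exponents of `λ`-degree `a` and bidegree `(k, k)` in `x, y`. -/
def Ex (a k : ℕ) (m : Idx →₀ ℕ) : Prop :=
  m none = a ∧ ∑ i, m (some (Sum.inl i)) = k ∧ ∑ i, m (some (Sum.inr i)) = k

lemma Ex_zero {a : ℕ} {m : Idx →₀ ℕ} (h : Ex a 0 m) : (monomial m 1 : P) = lam ^ a := by
  obtain ⟨h0, h1, h2⟩ := h
  rw [lam, X_pow_eq_monomial]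
  simp only [Finset.sum_eq_zero_iff, Finset.mem_univ, true_imp_iff] at h1 h2
  congr 1
  suffices hm : m = Finsupp.single none a by rw [hm]
  ext (_ | i | i)
  · simp [h0]
  · simp [h1]
  · simp [h2]

lemma Ex_succ {a k : ℕ} {m : Idx →₀ ℕ} (h : Ex a (k + 1) m) :
    ∃ m' i j, Ex a k m' ∧ (monomial m 1 : P) = monomial m' 1 * (x i * y j) := by
  obtain ⟨h0, h1, h2⟩ := h
  obtain ⟨i, hi⟩ : ∃ i, m (some (Sum.inl i)) ≠ 0 := by
    by_contra! hc; simp [hc] at h1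
  obtain ⟨j, hj⟩ : ∃ j, m (some (Sum.inr j)) ≠ 0 := by
    by_contra! hc; simp [hc] at h2
  obtain ⟨m', rfl⟩ : ∃ m', m = m' + (Finsupp.single (some (Sum.inl i)) 1 +
      Finsupp.single (some (Sum.inr j)) 1) := by
    refine ⟨m - (Finsupp.single (some (Sum.inl i)) 1 + Finsupp.single (some (Sum.inr j)) 1),
      (tsub_add_cancel_of_le ?_).symm⟩
    intro q
    rcases q with _ | q | q
    · simp
    · by_cases hq : i = q
      · subst hq; simp; omega
      · simp [Finsupp.single_apply, hq]
    · by_cases hq : j = q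
      · subst hq; simp; omega
      · simp [Finsupp.single_apply, hq]
  refine ⟨m', i, j, ⟨?_, ?_, ?_⟩, ?_⟩
  · simpa using h0
  · simpa [Finset.sum_add_distrib, Finsupp.single_apply] using h1
  · simpa [Finset.sum_add_distrib, Finsupp.single_apply] using h2
  · simp [x, y, X, monomial_mul]

lemma high_mem (k : ℕ) : ∀ (a : ℕ) (m : Idx →₀ ℕ), Ex a (k + 2) m →
    (monomial m 1 : P) ∈ Im (a + (k + 2)) := by
  induction k with
  | zero =>
    intro a m h
    obtain ⟨m1, i, j, h1, e1⟩ := Ex_succ h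
    obtain ⟨m2, k, l, h2, e2⟩ := Ex_succ h1
    rw [e1, e2, Ex_zero h2, mul_assoc]
    exact quad_mem' a k l i j
  | succ k ih =>
    intro a m h
    obtain ⟨m1, i, j, h1, e1⟩ := Ex_succ h
    have q1 := mul_mem (ih a m1 h1) (z_mem (i, j))
    rw [e1]
    by_cases hij : i = j
    · subst hij
      have h2 : Ex (a + 1) (k + 2) (m1 + Finsupp.single none 1) := by
        obtain ⟨g0, g1, g2⟩ := h1
        exact ⟨by simp [g0], by simpa using g1, by simpa using g2⟩
      have q2 := ih _ _ h2
      have e : (monomial (m1 + Finsupp.single none 1) 1 : P) = monomial m1 1 * lam := by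
        simp [lam, X, monomial_mul]
      rw [e] at q2
      have hz : z (i, i) = lam + x i * y i := by simp [z]
      rw [hz] at q1
      rw [show a + 1 + (k + 2) = a + (k + 2) + 1 by ring] at q2
      have q3 := sub_mem q1 q2
      rw [mul_add, add_sub_cancel_left] at q3
      exact q3
    · have hz : z (i, j) = x i * y j := by simp [z, hij]
      rw [hz] at q1
      exact q1

lemma pow_mem (d : ℕ) : lam ^ (d + 1) + (d + 1 : ℂ) • (lam ^ d * (x 0 * y 0)) ∈ Im (d + 1) := by
  have hz : z (0, 0) = lam + x 0 * y 0 := by simp [z]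
  induction d with
  | zero => simpa [hz] using z_mem (0, 0)
  | succ d ih =>
    have e1 := mul_mem ih (z_mem (0, 0))
    have e2 := (Im (d + 2)).smul_mem (d + 1 : ℂ) (quad_mem' d 0 0 0 0)
    convert sub_mem e1 e2 using 1
    rw [hz]
    simp only [smul_eq_C_mul, map_add, map_natCast, map_one]
    push_cast
    ring

lemma S_le (d : ℕ) : S (d + 1) ≤ Im (d + 1) ⊔ Submodule.span ℂ {lam ^ d * (x 0 * y 0)} := by
  rw [S, restrictSupport_eq_span, Submodule.span_le]
  have he : lam ^ d * (x 0 * y 0) ∈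
      Im (d + 1) ⊔ Submodule.span ℂ {lam ^ d * (x 0 * y 0)} :=
    Submodule.mem_sup_right (Submodule.mem_span_singleton_self _)
  rintro _ ⟨m, ⟨h1, h2⟩, rfl⟩
  obtain ⟨k, hk⟩ : ∃ k, ∑ i, m (some (Sum.inl i)) = k := ⟨_, rfl⟩
  have hE : Ex (m none) k m := ⟨rfl, hk, by omega⟩
  rw [hk] at h1
  show (monomial m 1 : P) ∈ Im (d + 1) ⊔ Submodule.span ℂ {lam ^ d * (x 0 * y 0)}
  rcases k with _ | _ | k
  · rw [Ex_zero hE, show m none = d + 1 by omega]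
    have := sub_mem (Submodule.mem_sup_left (pow_mem d)) (Submodule.smul_mem _ (d + 1 : ℂ) he)
    simpa using this
  · obtain ⟨m', i, j, h', e⟩ := Ex_succ hE
    rw [e, Ex_zero h', show m none = d by omega]
    by_cases hij : i = j
    · subst hij
      have := add_mem (Submodule.mem_sup_left ((traceless_mem d).2 i 0)) he
      convert this using 1; ring
    · exact Submodule.mem_sup_left ((traceless_mem d).1 i j hij)
  · apply Submodule.mem_sup_left
    have := high_mem k _ _ hE
    rwa [show m none + (k + 2) = d + 1 by omega] at this

/-- evaluation at `λ = 1`, `x = y = 0` -/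
noncomputable def ev : P →ₐ[ℂ] ℂ := aeval (fun i : Idx => if i = none then 1 else 0)

noncomputable def M : P →ₗ[ℂ] ℂ :=
  (∑ i : Fin 3, ev.toLinearMap ∘ₗ (pderiv (some (Sum.inl i))).toLinearMap ∘ₗ
    (pderiv (some (Sum.inr i))).toLinearMap) - ev.toLinearMap ∘ₗ (pderiv none).toLinearMap

lemma M_apply (f : P) : M f = (∑ i : Fin 3, ev (pderiv (some (Sum.inl i))
    (pderiv (some (Sum.inr i)) f))) - ev (pderiv none f) := by
  simp [M]

lemma M_mul_z (f : P) (p : Fin 3 × Fin 3) : M (f * z p) = (if p.1 = p.2 then 1 else 0) * M f := by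
  obtain ⟨i, j⟩ := p
  fin_cases i <;> fin_cases j <;>
  simp [M_apply, z, lam, x, y, ev, Fin.sum_univ_three, pderiv_X, Pi.single_apply] <;> ring

lemma M_phi (g : MvPolynomial (Fin 3 × Fin 3) ℂ) : M (phi g) = 0 := by
  induction g using MvPolynomial.induction_on with
  | C a => simp [M_apply, phi]
  | add p q hp hq => simp [hp, hq]
  | mul_X p i hp =>
    rw [map_mul, show phi (X i) = z i by simp [phi], M_mul_z, hp, mul_zero]

lemma M_e (d : ℕ) : M (lam ^ d * (x 0 * y 0)) = 1 := by
  simp [M_apply, lam, x, y, ev, Fin.sum_univ_three, pderiv_X, Pi.single_apply]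

lemma finrank_Im_succ (d : ℕ) :
    Module.finrank ℂ (Im (d + 1)) + 1 = Module.finrank ℂ (S (d + 1)) := by
  have : FiniteDimensional ℂ (Im (d + 1)) := Submodule.finiteDimensional_of_le (Im_le_S _)
  apply le_antisymm
  · apply Submodule.finrank_lt_finrank_of_lt
    refine lt_of_le_of_ne (Im_le_S _) fun h => ?_
    have he : lam ^ d * (x 0 * y 0) ∈ S (d + 1) := by
      have : (lam ^ d * (x 0 * y 0) : P) = monomial (Finsupp.single none d +
          (Finsupp.single (some (Sum.inl 0)) 1 + Finsupp.single (some (Sum.inr 0)) 1)) 1 := by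
        rw [lam, X_pow_eq_monomial]; simp [x, y, X, monomial_mul]
      rw [this, S, monomial_mem_restrictSupport]
      left
      constructor <;> simp [Finset.sum_add_distrib, Finsupp.single_apply]
    rw [← h] at he
    obtain ⟨g, _, hg⟩ := he
    have h1 := M_phi g
    have h2 : phi g = lam ^ d * (x 0 * y 0) := hg
    rw [h2, M_e] at h1
    exact one_ne_zero h1
  · calc _ ≤ _ := Submodule.finrank_mono (S_le d)
      _ ≤ _ := Submodule.finrank_add_le_finrank_add_finrank _ _
      _ ≤ _ := by
        gcongr
        exact (finrank_span_le_card _).trans (by simp)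

lemma finrank_Im_zero : Module.finrank ℂ (Im 0) = 1 := by
  have h0 : Module.finrank ℂ (S 0) = 1 := by rw [finrank_S]; simp
  have h1 := Submodule.finrank_mono (Im_le_S 0)
  have : FiniteDimensional ℂ (Im 0) := Submodule.finiteDimensional_of_le (Im_le_S _)
  have h2 : Module.finrank ℂ (Im 0) ≠ 0 := by
    intro h
    have hb := Submodule.finrank_eq_zero.mp h
    have := one_mem
    rw [hb] at this
    exact one_ne_zero ((Submodule.mem_bot ℂ).mp this)
  omega

lemma rank_one {B : Matrix (Fin 3) (Fin 3) ℂ} (h : B.rank ≤ 1) :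
    ∃ u v : Fin 3 → ℂ, ∀ i j, B i j = u i * v j := by
  rw [Matrix.rank_eq_finrank_span_cols] at h
  obtain ⟨u, hu⟩ := finrank_le_one_iff.mp h
  choose c hc using fun j : Fin 3 => hu ⟨B.col j, Submodule.subset_span ⟨j, rfl⟩⟩
  refine ⟨u, c, fun i j => ?_⟩
  have := congrArg (fun q => q.1 i) (hc j)
  simp at this
  rw [mul_comm]; exact this.symm

lemma exists_form {A : Matrix (Fin 3) (Fin 3) ℂ}
    (h : ¬ LinearIndependent ℂ (fun r : Fin 3 => A ^ (r : ℕ))) :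
    ∃ (l : ℂ) (u v : Fin 3 → ℂ), ∀ i j, A i j = (if i = j then l else 0) + u i * v j := by
  suffices hs : ∃ l : ℂ, (A - l • 1).rank ≤ 1 by
    obtain ⟨l, hl⟩ := hs
    obtain ⟨u, v, huv⟩ := rank_one hl
    refine ⟨l, u, v, fun i j => ?_⟩
    rw [← huv]
    simp [Matrix.one_apply]
  rw [Fintype.not_linearIndependent_iff] at h
  obtain ⟨g, hg, i, hi⟩ := h
  simp only [Fin.sum_univ_three] at hg
  simp at hg
  by_cases h2 : g 2 = 0
  · by_cases h1 : g 1 = 0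
    · exfalso
      simp [h1, h2] at hg
      fin_cases i <;> simp_all
    · refine ⟨-(g 0 / g 1), ?_⟩
      have : A - (-(g 0 / g 1)) • (1 : Matrix (Fin 3) (Fin 3) ℂ) = 0 := by
        have h3 : g 1 • (A - (-(g 0 / g 1)) • (1 : Matrix (Fin 3) (Fin 3) ℂ)) = 0 := by
          rw [← hg, h2, smul_sub, smul_smul, mul_neg, mul_div_cancel₀ _ h1]
          module
        exact (smul_eq_zero.mp h3).resolve_left h1
      rw [this]; simp
  · obtain ⟨r, hr⟩ := IsAlgClosed.exists_eval₂_eq_zero (RingHom.id ℂ)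
      (Polynomial.C (g 2) * Polynomial.X ^ 2 + Polynomial.C (g 1) * Polynomial.X +
        Polynomial.C (g 0)) (by rw [Polynomial.degree_quadratic h2]; decide)
    simp at hr
    set s : ℂ := -(g 1 / g 2) - r with hs
    have hmul : (A - r • 1) * (A - s • 1) = 0 := by
      have h3 : g 2 • ((A - r • 1) * (A - s • 1)) = 0 := by
        have e1 : g 2 * (r + s) = - g 1 := by rw [hs]; field_simp; ring
        have e2 : g 2 * (r * s) = g 0 := by
          linear_combination r * e1 - hr
        have : g 2 • ((A - r • (1 : Matrix (Fin 3) (Fin 3) ℂ)) * (A - s • 1)) =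
            (g 2 * (r * s)) • (1 : Matrix (Fin 3) (Fin 3) ℂ) + (-(g 2 * (r + s))) • A
              + g 2 • A ^ 2 := by
          simp only [sub_mul, mul_sub, smul_mul_assoc, mul_smul_comm, one_mul, mul_one, pow_two]
          module
        rw [this, e1, e2, neg_neg, hg]
      exact (smul_eq_zero.mp h3).resolve_left h2
    have := Matrix.rank_add_rank_le_card_of_mul_eq_zero hmul
    simp at this
    by_cases hA : (A - r • 1).rank ≤ 1
    · exact ⟨r, hA⟩
    · exact ⟨s, by omega⟩

lemma form_dep {A : Matrix (Fin 3) (Fin 3) ℂ} (l : ℂ) (u v : Fin 3 → ℂ)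
    (hA : ∀ i j, A i j = (if i = j then l else 0) + u i * v j) :
    ¬ LinearIndependent ℂ (fun r : Fin 3 => A ^ (r : ℕ)) := by
  rw [Fintype.not_linearIndependent_iff]
  refine ⟨![l ^ 2 + l * (∑ i, u i * v i), -(2 * l + ∑ i, u i * v i), 1], ?_, 2, by simp⟩
  ext i j
  simp only [Fin.sum_univ_three]
  fin_cases i <;> fin_cases j <;>
  simp [pow_two, Matrix.mul_apply, Fin.sum_univ_three, hA] <;> ring

lemma mem_iff (V : Set (Matrix (Fin 3) (Fin 3) ℂ))
    (hV : V = {A | ¬ LinearIndependent ℂ (fun r : Fin 3 => A ^ (r : ℕ))})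
    (f : MvPolynomial (Fin 3 × Fin 3) ℂ) :
    (∀ A ∈ V, MvPolynomial.eval (fun p => A p.1 p.2) f = 0) ↔ phi f = 0 := by
  have key : ∀ c : Idx → ℂ, eval c (phi f) =
      eval (fun p : Fin 3 × Fin 3 => (if p.1 = p.2 then c none else 0) +
        c (some (Sum.inl p.1)) * c (some (Sum.inr p.2))) f := by
    intro c
    rw [phi, aeval_def, eval_eval₂]
    rw [← coe_eval₂Hom, eval]
    congr 1
    congr 1
    · ext; simp
    · funext p
      simp only [z, lam, x, y]
      split_ifs <;> simp
  constructor
  · intro h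
    apply MvPolynomial.funext
    intro c
    rw [key, map_zero]
    have := h (Matrix.of fun i j => (if i = j then c none else 0) +
        c (some (Sum.inl i)) * c (some (Sum.inr j))) (by
      rw [hV]
      exact form_dep (c none) (fun i => c (some (Sum.inl i))) (fun i => c (some (Sum.inr i)))
        (fun i j => rfl))
    exact this
  · intro h A hA
    rw [hV] at hA
    obtain ⟨l, u, v, huv⟩ := exists_form hA
    have := key (fun
      | none => l
      | some (Sum.inl i) => u i
      | some (Sum.inr i) => v i)
    rw [h, map_zero] at this
    rw [this]
    simp only [huv]

lemma finrank_diff (I : Ideal (MvPolynomial (Fin 3 × Fin 3) ℂ)) (hI : ∀ f, f ∈ I ↔ phi f = 0)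
    (d : ℕ) : (Module.finrank ℂ ↥(MvPolynomial.homogeneousSubmodule (Fin 3 × Fin 3) ℂ d) : ℚ)
      - (Module.finrank ℂ
          ↥(MvPolynomial.homogeneousSubmodule (Fin 3 × Fin 3) ℂ d ⊓
            Submodule.restrictScalars ℂ I) : ℚ) = Module.finrank ℂ (Im d) := by
  set H := MvPolynomial.homogeneousSubmodule (Fin 3 × Fin 3) ℂ d with hH
  have : FiniteDimensional ℂ H := Module.Finite.iff_fg.mpr (homogeneousSubmodule_fg _ _ d)
  have h1 := LinearMap.finrank_range_add_finrank_ker (phi.toLinearMap.domRestrict H)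
  have h2 : LinearMap.range (phi.toLinearMap.domRestrict H) = Im d := by
    rw [LinearMap.range_domRestrict]; rfl
  have h3 : (LinearMap.ker (phi.toLinearMap.domRestrict H)).map H.subtype =
      H ⊓ Submodule.restrictScalars ℂ I := by
    ext f
    simp [hI, and_comm]
  rw [← h3, Submodule.finrank_map_subtype_eq, ← h1, h2]
  push_cast; ring

end Stmt9

/-- The Hilbert series of the coordinate ring of the variety of `3×3` complex matrices
with minimal polynomial of degree at most `2` is
`(1 + 3t + 6t² - 10t³ + 10t⁴ - 5t⁵ + t⁶) / (1-t)⁶`. -/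
theorem stmt_9
    (V : Set (Matrix (Fin 3) (Fin 3) ℂ))
    (hV : V = {A | ¬ LinearIndependent ℂ (fun r : Fin 3 => A ^ (r : ℕ))})
    (I : Ideal (MvPolynomial (Fin 3 × Fin 3) ℂ))
    (hI : ∀ f : MvPolynomial (Fin 3 × Fin 3) ℂ, f ∈ I ↔
      ∀ A ∈ V, MvPolynomial.eval (fun p => A p.1 p.2) f = 0)
    (h : ℕ → ℚ)
    (hh : ∀ d : ℕ, h d =
      (Module.finrank ℂ ↥(MvPolynomial.homogeneousSubmodule (Fin 3 × Fin 3) ℂ d) : ℚ)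
      - (Module.finrank ℂ
          ↥(MvPolynomial.homogeneousSubmodule (Fin 3 × Fin 3) ℂ d ⊓
            Submodule.restrictScalars ℂ I) : ℚ)) :
    (1 - PowerSeries.X : PowerSeries ℚ) ^ 6 * PowerSeries.mk h =
      1 + 3 * PowerSeries.X + 6 * PowerSeries.X ^ 2 - 10 * PowerSeries.X ^ 3
        + 10 * PowerSeries.X ^ 4 - 5 * PowerSeries.X ^ 5 + PowerSeries.X ^ 6 := by
  have hI' : ∀ f, f ∈ I ↔ Stmt9.phi f = 0 := fun f => (hI f).trans (Stmt9.mem_iff V hV f)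
  have hd : ∀ d, h d = Module.finrank ℂ (Stmt9.Im d) := fun d => by
    rw [hh, Stmt9.finrank_diff I hI']
  apply Stmt9.series
  · rw [hd, Stmt9.finrank_Im_zero]; simp
  · intro d
    have h1 := Stmt9.finrank_Im_succ d
    rw [Stmt9.finrank_S] at h1
    rw [hd, eq_sub_iff_add_eq]
    exact_mod_cast h1
end

section
/- Identify polynomial functions on complex symmetric 3×3 matrices with the polynomial ring R' = MvPolynomial over the six indices {(i,j) : i ≤ j in Fin 3} over ℂ, the variable (i,j) evaluating to the (i,j) entry (= (j,i) entry) of a symmetric matrix. Let W = {A ∈ Matrix (Fin 3) (Fin 3) ℂ : Aᵀ = A and (I₃, A, A²) is linearly dependent over ℂ}, and let I(W) ⊂ R' be its vanishing ideal. Let S' ⊂ R' be the set of 3×3 minors of the 3×6 matrix over R' whose rows list the six entries b₁₁, b₁₂, b₁₃, b₂₂, b₂₃, b₃₃ of B, for B = I₃, B = the generic symmetric matrix, and B = its square, respectively. Then: (i) I(W) equals the ideal of R' generated by S' (in particular I(W) is generated by its degree-3 homogeneous component); (ii) the ℂ-linear span of S' equals the degree-3 homogeneous component of I(W); and (iii)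 this space has dimension 7 over ℂ. -/
open Matrix

set_option linter.all false

lemma koszul_syz {σ A : Type} [CommRing A] [Fintype σ]
    (Q : σ → MvPolynomial σ A) (J : Ideal (MvPolynomial σ A))
    (hJ : ∀ i j, MvPolynomial.X j * Q i - MvPolynomial.X i * Q j ∈ J)
    (h : σ → MvPolynomial σ A) (h0 : ∑ i, h i * MvPolynomial.X i = 0) :
    ∑ i, h i * Q i ∈ J := by
  classical
  let g : (σ →₀ ℕ) → MvPolynomial σ A := fun m =>
    if hm : ∃ k, m k ≠ 0 then
      MvPolynomial.monomial (m - Finsupp.single hm.choose 1) 1 * Q hm.choose else 0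
  let θ : MvPolynomial σ A →ₗ[A] MvPolynomial σ A := (MvPolynomial.basisMonomials σ A).constr A g
  have hθ : ∀ m, θ (MvPolynomial.monomial m 1) = g m := by
    intro m
    have := (MvPolynomial.basisMonomials σ A).constr_basis A g m
    simpa using this
  have key1 : ∀ m i, θ (MvPolynomial.monomial m 1 * MvPolynomial.X i)
      - MvPolynomial.monomial m 1 * Q i ∈ J := by
    intro m i
    have e1 : MvPolynomial.monomial m (1 : A) * MvPolynomial.X i
        = MvPolynomial.monomial (m + Finsupp.single i 1) 1 := by
      simp [MvPolynomial.X, MvPolynomial.monomial_mul]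
    rw [e1, hθ]
    have hm : ∃ k, (m + Finsupp.single i 1 : σ →₀ ℕ) k ≠ 0 := ⟨i, by simp⟩
    simp only [g, dif_pos hm]
    have hk := hm.choose_spec
    generalize hm.choose = k at hk
    by_cases hki : k = i
    · subst hki
      simp
    · have hmk : m k ≠ 0 := by
        simpa [Finsupp.single_apply, Ne.symm hki] using hk
      obtain ⟨m', rfl⟩ : ∃ m', m = m' + Finsupp.single k 1 := by
        refine ⟨m - Finsupp.single k 1, ?_⟩
        rw [tsub_add_cancel_of_le]
        simpa [Finsupp.single_le_iff] using Nat.one_le_iff_ne_zero.mpr hmk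
      have e2 : m' + Finsupp.single k 1 + Finsupp.single i 1 - Finsupp.single k 1
          = m' + Finsupp.single i 1 := by
        rw [add_right_comm, add_tsub_cancel_right]
      have e3 : ∀ j, MvPolynomial.monomial (m' + Finsupp.single j 1) (1 : A)
          = MvPolynomial.monomial m' 1 * MvPolynomial.X j := by
        intro j; simp [MvPolynomial.X, MvPolynomial.monomial_mul]
      rw [e2, e3, e3]
      have := J.mul_mem_left (MvPolynomial.monomial m' 1) (hJ k i)
      convert this using 1
      ring
  have key : ∀ p i, θ (p * MvPolynomial.X i) - p * Q i ∈ J := by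
    intro p i
    induction p using MvPolynomial.induction_on' with
    | monomial m a =>
      have : MvPolynomial.monomial m a = a • MvPolynomial.monomial m (1 : A) := by
        simp [MvPolynomial.smul_monomial]
      rw [this, smul_mul_assoc, map_smul, smul_mul_assoc, ← smul_sub, MvPolynomial.smul_eq_C_mul]
      exact J.mul_mem_left _ (key1 m i)
    | add p q hp hq =>
      have := J.add_mem hp hq
      rw [add_mul, map_add, add_mul]
      convert this using 1
      ring
  have h1 : ∑ i, (θ (h i * MvPolynomial.X i) - h i * Q i) ∈ J := J.sum_mem fun i _ => key _ _
  rw [Finset.sum_sub_distrib, ← map_sum, h0, map_zero, zero_sub] at h1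
  simpa using h1

abbrev Sg := {p : Fin 3 × Fin 3 // p.1 ≤ p.2}

lemma Sg_cases (p : Sg) : p = ⟨(0,0), le_refl _⟩ ∨ p = ⟨(0,1), by decide⟩ ∨ p = ⟨(0,2), by decide⟩ ∨
   p = ⟨(1,1), le_refl _⟩ ∨ p = ⟨(1,2), by decide⟩ ∨ p = ⟨(2,2), le_refl _⟩ := by
  revert p; decide

/-- value of the variable `p` at the symmetric matrix `s + l I`. -/
def ptv {E : Type} [CommRing E] (s00 s11 s22 s01 s02 s12 l : E) (p : Sg) : E :=
  (!![s00 + l, s01, s02; s01, s11 + l, s12; s02, s12, s22 + l] : Matrix _ _ E) p.1.1 p.1.2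

lemma normal_form (f : MvPolynomial Sg ℂ) :
    ∃ n0 n1 n2 n3 : MvPolynomial (Fin 4) ℂ, ∀ (E : Type) [CommRing E] (κ : ℂ →+* E)
      (s00 s11 s22 s01 s02 s12 l : E), s00 * s11 = s01 ^ 2 → s00 * s22 = s02 ^ 2 →
      s11 * s22 = s12 ^ 2 → s01 * s02 = s00 * s12 → s01 * s12 = s11 * s02 →
      s02 * s12 = s22 * s01 →
      MvPolynomial.eval₂ κ (ptv s00 s11 s22 s01 s02 s12 l) f
        = MvPolynomial.eval₂ κ ![s00, s11, s22, l] n0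
        + MvPolynomial.eval₂ κ ![s00, s11, s22, l] n1 * s01
        + MvPolynomial.eval₂ κ ![s00, s11, s22, l] n2 * s02
        + MvPolynomial.eval₂ κ ![s00, s11, s22, l] n3 * s12 := by
  induction f using MvPolynomial.induction_on with
  | C a =>
    refine ⟨MvPolynomial.C a, 0, 0, 0, ?_⟩
    intros
    simp
  | add p q hp hq =>
    obtain ⟨a0, a1, a2, a3, ha⟩ := hp
    obtain ⟨b0, b1, b2, b3, hb⟩ := hq
    refine ⟨a0 + b0, a1 + b1, a2 + b2, a3 + b3, ?_⟩
    intro E _ κ s00 s11 s22 s01 s02 s12 l h1 h2 h3 h4 h5 h6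
    simp only [MvPolynomial.eval₂_add]
    rw [ha E κ s00 s11 s22 s01 s02 s12 l h1 h2 h3 h4 h5 h6,
      hb E κ s00 s11 s22 s01 s02 s12 l h1 h2 h3 h4 h5 h6]
    ring
  | mul_X p i hp =>
    obtain ⟨a0, a1, a2, a3, ha⟩ := hp
    let x : Fin 4 → MvPolynomial (Fin 4) ℂ := MvPolynomial.X
    have fin : ∀ b0 b1 b2 b3 : MvPolynomial (Fin 4) ℂ,
      (∀ (E : Type) [CommRing E] (κ : ℂ →+* E)
      (s00 s11 s22 s01 s02 s12 l : E), s00 * s11 = s01 ^ 2 → s00 * s22 = s02 ^ 2 →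
      s11 * s22 = s12 ^ 2 → s01 * s02 = s00 * s12 → s01 * s12 = s11 * s02 →
      s02 * s12 = s22 * s01 → ∀ φ : MvPolynomial (Fin 4) ℂ →+* E,
        φ (x 0) = s00 → φ (x 1) = s11 → φ (x 2) = s22 → φ (x 3) = l →
       (φ a0 + φ a1 * s01 + φ a2 * s02 + φ a3 * s12) * ptv s00 s11 s22 s01 s02 s12 l i =
        φ b0 + φ b1 * s01 + φ b2 * s02 + φ b3 * s12) → 
       ∃ n0 n1 n2 n3 : MvPolynomial (Fin 4) ℂ, ∀ (E : Type) [CommRing E] (κ : ℂ →+* E)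
      (s00 s11 s22 s01 s02 s12 l : E), s00 * s11 = s01 ^ 2 → s00 * s22 = s02 ^ 2 →
      s11 * s22 = s12 ^ 2 → s01 * s02 = s00 * s12 → s01 * s12 = s11 * s02 →
      s02 * s12 = s22 * s01 →
      MvPolynomial.eval₂ κ (ptv s00 s11 s22 s01 s02 s12 l) (p * MvPolynomial.X i)
        = MvPolynomial.eval₂ κ ![s00, s11, s22, l] n0
        + MvPolynomial.eval₂ κ ![s00, s11, s22, l] n1 * s01
        + MvPolynomial.eval₂ κ ![s00, s11, s22, l] n2 * s02
        + MvPolynomial.eval₂ κ ![s00, s11, s22, l] n3 * s12 := by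
      intro b0 b1 b2 b3 hb
      refine ⟨b0, b1, b2, b3, ?_⟩
      intro E _ κ s00 s11 s22 s01 s02 s12 l h1 h2 h3 h4 h5 h6
      rw [MvPolynomial.eval₂_mul, MvPolynomial.eval₂_X,
        ha E κ s00 s11 s22 s01 s02 s12 l h1 h2 h3 h4 h5 h6]
      exact hb E κ s00 s11 s22 s01 s02 s12 l h1 h2 h3 h4 h5 h6
        (MvPolynomial.eval₂Hom κ ![s00, s11, s22, l]) (by simp [x]) (by simp [x]) (by simp [x])
        (by simp [x])
    rcases Sg_cases i with rfl | rfl | rfl | rfl | rfl | rfl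
    · apply fin (a0 * (x 0 + x 3)) (a1 * (x 0 + x 3)) (a2 * (x 0 + x 3)) (a3 * (x 0 + x 3))
      intro E _ κ s00 s11 s22 s01 s02 s12 l h1 h2 h3 h4 h5 h6 φ e0 e1 e2 e3
      simp only [map_mul, map_add, e0, e1, e2, e3, ptv]
      simp
      ring
    · apply fin (a1 * (x 0 * x 1)) a0 (a3 * x 1) (a2 * x 0)
      intro E _ κ s00 s11 s22 s01 s02 s12 l h1 h2 h3 h4 h5 h6 φ e0 e1 e2 e3
      simp only [map_mul, map_add, e0, e1, e2, e3, ptv]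
      simp
      linear_combination (-φ a1) * h1 + φ a2 * h4 + φ a3 * h5
    · apply fin (a2 * (x 0 * x 2)) (a3 * x 2) a0 (a1 * x 0)
      intro E _ κ s00 s11 s22 s01 s02 s12 l h1 h2 h3 h4 h5 h6 φ e0 e1 e2 e3
      simp only [map_mul, map_add, e0, e1, e2, e3, ptv]
      simp
      linear_combination (-φ a2) * h2 + φ a1 * h4 + φ a3 * h6
    · apply fin (a0 * (x 1 + x 3)) (a1 * (x 1 + x 3)) (a2 * (x 1 + x 3)) (a3 * (x 1 + x 3))
      intro E _ κ s00 s11 s22 s01 s02 s12 l h1 h2 h3 h4 h5 h6 φ e0 e1 e2 e3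
      simp only [map_mul, map_add, e0, e1, e2, e3, ptv]
      simp
      ring
    · apply fin (a3 * (x 1 * x 2)) (a2 * x 2) (a1 * x 1) a0
      intro E _ κ s00 s11 s22 s01 s02 s12 l h1 h2 h3 h4 h5 h6 φ e0 e1 e2 e3
      simp only [map_mul, map_add, e0, e1, e2, e3, ptv]
      simp
      linear_combination (-φ a3) * h3 + φ a1 * h5 + φ a2 * h6
    · apply fin (a0 * (x 2 + x 3)) (a1 * (x 2 + x 3)) (a2 * (x 2 + x 3)) (a3 * (x 2 + x 3))
      intro E _ κ s00 s11 s22 s01 s02 s12 l h1 h2 h3 h4 h5 h6 φ e0 e1 e2 e3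
      simp only [map_mul, map_add, e0, e1, e2, e3, ptv]
      simp
      ring

/-- the normal form vanishes if the polynomial vanishes at all `v vᵀ + l I`. -/
lemma vanish_general (f : MvPolynomial Sg ℂ)
    (hf : ∀ a b c l : ℂ,
      MvPolynomial.eval (ptv (a * a) (b * b) (c * c) (a * b) (a * c) (b * c) l) f = 0)
    (E : Type) [CommRing E] (κ : ℂ →+* E)
      (s00 s11 s22 s01 s02 s12 l : E) (h1 : s00 * s11 = s01 ^ 2) (h2 : s00 * s22 = s02 ^ 2)
      (h3 : s11 * s22 = s12 ^ 2) (h4 : s01 * s02 = s00 * s12) (h5 : s01 * s12 = s11 * s02)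
      (h6 : s02 * s12 = s22 * s01) :
      MvPolynomial.eval₂ κ (ptv s00 s11 s22 s01 s02 s12 l) f = 0 := by
  obtain ⟨n0, n1, n2, n3, hn⟩ := normal_form f
  have ev : ∀ a b c l : ℂ, MvPolynomial.eval ![a*a, b*b, c*c, l] n0
      + MvPolynomial.eval ![a*a, b*b, c*c, l] n1 * (a * b)
      + MvPolynomial.eval ![a*a, b*b, c*c, l] n2 * (a * c)
      + MvPolynomial.eval ![a*a, b*b, c*c, l] n3 * (b * c) = 0 := by
    intro a b c l
    rw [← hf a b c l]
    exact (hn ℂ (RingHom.id ℂ) (a*a) (b*b) (c*c) (a*b) (a*c) (b*c) l (by ring) (by ring) (by ring)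
      (by ring) (by ring) (by ring)).symm
  have ev4 : ∀ a b c l : ℂ, MvPolynomial.eval ![a*a, b*b, c*c, l] n0 = 0 ∧
      MvPolynomial.eval ![a*a, b*b, c*c, l] n1 * (a * b) = 0 ∧
      MvPolynomial.eval ![a*a, b*b, c*c, l] n2 * (a * c) = 0 ∧
      MvPolynomial.eval ![a*a, b*b, c*c, l] n3 * (b * c) = 0 := by
    intro a b c l
    have e0 := ev a b c l
    have e1 := ev (-a) b c l
    have e2 := ev a (-b) c l
    have e3 := ev a b (-c) l
    simp only [neg_mul_neg] at e1 e2 e3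
    refine ⟨?_, ?_, ?_, ?_⟩
    · linear_combination (e0 + e1 + e2 + e3) / 4
    · linear_combination (e0 - e1 - e2 + e3) / 4
    · linear_combination (e0 - e1 + e2 - e3) / 4
    · linear_combination (e0 + e1 - e2 - e3) / 4
  have zero_of : ∀ n : MvPolynomial (Fin 4) ℂ,
      (∀ a b c l : ℂ, MvPolynomial.eval ![a*a, b*b, c*c, l] n * (a * b * c) = 0) → n = 0 := by
    intro n h
    have : n * (MvPolynomial.X 0 * MvPolynomial.X 1 * MvPolynomial.X 2) = 0 := by
      apply MvPolynomial.funext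
      intro y
      obtain ⟨a, ha⟩ := IsAlgClosed.exists_eq_mul_self (y 0)
      obtain ⟨b, hb⟩ := IsAlgClosed.exists_eq_mul_self (y 1)
      obtain ⟨c, hc⟩ := IsAlgClosed.exists_eq_mul_self (y 2)
      have hy : y = ![a*a, b*b, c*c, y 3] := by
        ext i; fin_cases i <;> simp [ha, hb, hc]
      have := h a b c (y 3)
      rw [← hy] at this
      simp only [map_mul, MvPolynomial.eval_X, map_zero, ha, hb, hc]
      linear_combination (a * b * c) * this
    rcases mul_eq_zero.mp this with h | h
    · exact h
    · exfalso
      simp [MvPolynomial.X_ne_zero] at h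
  have z0 : n0 = 0 := zero_of _ fun a b c l => by rw [(ev4 a b c l).1, zero_mul]
  have z1 : n1 = 0 := zero_of _ fun a b c l => by linear_combination c * (ev4 a b c l).2.1
  have z2 : n2 = 0 := zero_of _ fun a b c l => by linear_combination b * (ev4 a b c l).2.2.1
  have z3 : n3 = 0 := zero_of _ fun a b c l => by linear_combination a * (ev4 a b c l).2.2.2
  rw [hn E κ s00 s11 s22 s01 s02 s12 l h1 h2 h3 h4 h5 h6]
  simp [z0, z1, z2, z3]

/-- the ideal of relations in the double cover. -/
def relIdeal {P : Type} [CommRing P] (y Q : Fin 5 → P) (Q0 : P) (J : Ideal P)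
    (l : Fin 5 → Fin 5 → P) (hl : ∀ i, Q i = ∑ j, l i j * y j)
    (hl2 : ∀ i, y i * Q0 - ∑ j, l i j * Q j ∈ J)
    (hT : ∀ j ∈ J, ∃ h : Fin 5 → P, j = ∑ i, h i * y i ∧ ∑ i, h i * Q i ∈ J) :
    Ideal (QuadraticAlgebra P Q0 0) where
  carrier := {g | ∃ h : Fin 5 → P, g.im = ∑ i, h i * y i ∧ g.re + ∑ i, h i * Q i ∈ J}
  zero_mem' := ⟨0, by simp⟩
  add_mem' := by
    rintro g g' ⟨h, h1, h2⟩ ⟨h', h1', h2'⟩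
    refine ⟨h + h', ?_, ?_⟩
    · simp [h1, h1', add_mul, Finset.sum_add_distrib]
    · have := J.add_mem h2 h2'
      convert this using 1
      simp only [QuadraticAlgebra.re_add, Pi.add_apply, add_mul, Finset.sum_add_distrib]
      ring
  smul_mem' := by
    rintro x g ⟨h, h1, h2⟩
    obtain ⟨k, k1, k2⟩ := hT _ h2
    refine ⟨fun j => x.re * h j + x.im * (k j - ∑ i, h i * l i j), ?_, ?_⟩
    · have hre : g.re = ∑ i, k i * y i - ∑ i, h i * ∑ j, l i j * y j := by
        simp only [← hl]
        rw [← k1]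
        ring
      rw [smul_eq_mul, QuadraticAlgebra.im_mul, hre, h1]
      simp only [Fin.sum_univ_five]
      ring
    · have m1 := J.mul_mem_left x.re h2
      have m2 := J.mul_mem_left x.im k2
      have m3 := J.mul_mem_left x.im
        (J.sum_mem (fun i (_ : i ∈ Finset.univ) => J.mul_mem_left (h i) (hl2 i)))
      have := J.add_mem (J.add_mem m1 m2) m3
      convert this using 1
      rw [smul_eq_mul, QuadraticAlgebra.re_mul, h1]
      simp only [Fin.sum_univ_five]
      ring

/-- coordinates and quadrics -/
abbrev yy {P : Type} [CommRing P] (a b c u w : P) : Fin 5 → P := ![a, b, c, u, w]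

abbrev qq {P : Type} [CommRing P] (a b c u w : P) : Fin 5 → P :=
  ![b * c, a * c - w * b, a * b - u * c, a ^ 2 - u * w - c ^ 2, a ^ 2 - u * w - b ^ 2]

lemma elim_lemma {P : Type} [CommRing P] (a b c u w t : P) (κ : ℂ →+* P)
    (kos : ∀ J : Ideal P, (∀ i j, yy a b c u w j * qq a b c u w i
      - yy a b c u w i * qq a b c u w j ∈ J) → ∀ h : Fin 5 → P, ∑ i, h i * yy a b c u w i = 0 →
      ∑ i, h i * qq a b c u w i ∈ J)
    (f : MvPolynomial Sg ℂ)
    (hf : ∀ a b c l : ℂ,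
      MvPolynomial.eval (ptv (a * a) (b * b) (c * c) (a * b) (a * c) (b * c) l) f = 0)
    (J : Ideal P) (hJ : ∀ i j, yy a b c u w j * qq a b c u w i
      - yy a b c u w i * qq a b c u w j ∈ J) :
    MvPolynomial.eval₂ κ (ptv u w 0 a b c t) f ∈ J := by
  let y := yy a b c u w
  let Q := qq a b c u w
  let J0 : Ideal P := Ideal.span (Set.range fun ij : Fin 5 × Fin 5 => y ij.2 * Q ij.1 - y ij.1 * Q ij.2)
  have hJ0 : ∀ i j, y j * Q i - y i * Q j ∈ J0 := fun i j => Ideal.subset_span ⟨(i, j), rfl⟩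
  have hle : J0 ≤ J := by
    rw [Ideal.span_le]
    rintro _ ⟨⟨i, j⟩, rfl⟩
    exact hJ i j
  apply hle
  let Q0 : P := b ^ 2 + c ^ 2 - a ^ 2 + u * w
  let l : Fin 5 → Fin 5 → P := ![![0, 0, b, 0, 0], ![0, -w, a, 0, 0], ![0, a, -u, 0, 0],
    ![a, 0, -c, -w, 0], ![a, -b, 0, 0, -u]]
  have hl : ∀ i, Q i = ∑ j, l i j * y j := by
    intro i
    fin_cases i <;> simp [Q, l, y, Fin.sum_univ_five] <;> ring
  have hl2 : ∀ i, y i * Q0 - ∑ j, l i j * Q j ∈ J0 := by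
    intro i
    fin_cases i
    · convert hJ0 0 3 using 1
      simp [Q, l, y, Q0, Fin.sum_univ_five]; ring
    · convert J0.add_mem (hJ0 1 3) (hJ0 1 4) using 1
      simp [Q, l, y, Q0, Fin.sum_univ_five]; ring
    · convert J0.add_mem (hJ0 2 3) (hJ0 2 4) using 1
      simp [Q, l, y, Q0, Fin.sum_univ_five]; ring
    · convert hJ0 3 4 using 1
      simp [Q, l, y, Q0, Fin.sum_univ_five]; ring
    · convert hJ0 4 3 using 1
      simp [Q, l, y, Q0, Fin.sum_univ_five]; ring
  have hT : ∀ j ∈ J0, ∃ h : Fin 5 → P, j = ∑ i, h i * y i ∧ ∑ i, h i * Q i ∈ J0 := by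
    intro j hj
    suffices h : ∃ h : Fin 5 → P, j = ∑ i, h i * y i ∧ ∑ i, h i * Q i = 0 by
      obtain ⟨h, h1, h2⟩ := h
      exact ⟨h, h1, by rw [h2]; exact J0.zero_mem⟩
    induction hj using Submodule.span_induction with
    | mem x hx =>
      obtain ⟨⟨i, j⟩, rfl⟩ := hx
      refine ⟨fun k => (if k = j then Q i else 0) - (if k = i then Q j else 0), ?_, ?_⟩
      · simp [sub_mul, Finset.sum_sub_distrib]; ring
      · simp [sub_mul, Finset.sum_sub_distrib]; ring
    | zero => exact ⟨0, by simp⟩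
    | add x x' _ _ h h' =>
      obtain ⟨h, h1, h2⟩ := h
      obtain ⟨h', h1', h2'⟩ := h'
      refine ⟨h + h', ?_, ?_⟩
      · simp [h1, h1', add_mul, Finset.sum_add_distrib]
      · simp [h2, h2', add_mul, Finset.sum_add_distrib]
    | smul r x _ h =>
      obtain ⟨h, h1, h2⟩ := h
      refine ⟨fun i => r * h i, ?_, ?_⟩
      · simp [h1, mul_assoc, Finset.mul_sum]
      · simp only [mul_assoc, ← Finset.mul_sum, h2, mul_zero]
  let K := relIdeal y Q Q0 J0 l hl hl2 hT
  have memK : ∀ (g : QuadraticAlgebra P Q0 0) (h : Fin 5 → P), g.im = ∑ i, h i * y i →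
    g.re + ∑ i, h i * Q i = 0 → g ∈ K := fun g h h1 h2 => ⟨h, h1, by rw [h2]; exact J0.zero_mem⟩
  let π : QuadraticAlgebra P Q0 0 →+* (QuadraticAlgebra P Q0 0) ⧸ K := Ideal.Quotient.mk K
  let ι : P →+* QuadraticAlgebra P Q0 0 := algebraMap _ _
  let q : QuadraticAlgebra P Q0 0 := ⟨0, 1⟩
  have eqK : ∀ g g' : QuadraticAlgebra P Q0 0, g - g' ∈ K → π g = π g' :=
    fun g g' h => Ideal.Quotient.eq.mpr h
  have main := vanish_general f hf _ ((π.comp ι).comp κ) (π (ι u + q)) (π (ι w + q)) (π q)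
    (π (ι a)) (π (ι b)) (π (ι c)) (π (ι t - q))
    (by
      rw [← map_mul, ← map_pow]
      apply eqK
      apply memK _ ![0, 0, 0, 1, 1]
      · simp [Fin.sum_univ_five, ι, q, y, pow_two]; try ring
      · simp [Fin.sum_univ_five, ι, q, Q, Q0, pow_two]; try ring)
    (by
      rw [← map_mul, ← map_pow]
      apply eqK
      apply memK _ ![0, 0, 0, 1, 0]
      · simp [Fin.sum_univ_five, ι, q, y, pow_two]; try ring
      · simp [Fin.sum_univ_five, ι, q, Q, Q0, pow_two]; try ring)
    (by
      rw [← map_mul, ← map_pow]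
      apply eqK
      apply memK _ ![0, 0, 0, 0, 1]
      · simp [Fin.sum_univ_five, ι, q, y, pow_two]; try ring
      · simp [Fin.sum_univ_five, ι, q, Q, Q0, pow_two]; try ring)
    (by
      rw [← map_mul, ← map_mul]
      apply eqK
      apply memK _ ![0, 0, -1, 0, 0]
      · simp [Fin.sum_univ_five, ι, q, y, pow_two]; try ring
      · simp [Fin.sum_univ_five, ι, q, Q, Q0, pow_two]; try ring)
    (by
      rw [← map_mul, ← map_mul]
      apply eqK
      apply memK _ ![0, -1, 0, 0, 0]
      · simp [Fin.sum_univ_five, ι, q, y, pow_two]; try ring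
      · simp [Fin.sum_univ_five, ι, q, Q, Q0, pow_two]; try ring)
    (by
      rw [← map_mul, ← map_mul]
      apply eqK
      apply memK _ ![-1, 0, 0, 0, 0]
      · simp [Fin.sum_univ_five, ι, q, y, pow_two]; try ring
      · simp [Fin.sum_univ_five, ι, q, Q, Q0, pow_two]; try ring)
  have e : ptv (π (ι u + q)) (π (ι w + q)) (π q)
    (π (ι a)) (π (ι b)) (π (ι c)) (π (ι t - q)) = fun p => (π.comp ι) (ptv u w 0 a b c t p) := by
    funext p
    rcases Sg_cases p with rfl | rfl | rfl | rfl | rfl | rfl <;> simp [ptv]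
  rw [e] at main
  have e2 := MvPolynomial.eval₂_comp_left (π.comp ι) κ (ptv u w 0 a b c t) f
  have e3 : (π.comp ι) (MvPolynomial.eval₂ κ (ptv u w 0 a b c t) f) = 0 := by
    rw [e2]; exact main
  obtain ⟨h, h1, h2⟩ : ι (MvPolynomial.eval₂ κ (ptv u w 0 a b c t) f) ∈ K :=
    Ideal.Quotient.eq_zero_iff_mem.mp e3
  have h3 := kos J0 hJ0 h (by rw [← h1]; simp [ι])
  have h4 := J0.sub_mem h2 h3
  simpa [ι, Q] using h4

lemma main_lemma (f : MvPolynomial Sg ℂ)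
    (hf : ∀ a b c l : ℂ,
      MvPolynomial.eval (ptv (a * a) (b * b) (c * c) (a * b) (a * c) (b * c) l) f = 0)
    (I : Ideal (MvPolynomial Sg ℂ)) (a b c x y z : MvPolynomial Sg ℂ)
    (ha : a = MvPolynomial.X ⟨(0,1), by decide⟩) (hb : b = MvPolynomial.X ⟨(0,2), by decide⟩)
    (hc : c = MvPolynomial.X ⟨(1,2), by decide⟩) (hx : x = MvPolynomial.X ⟨(0,0), le_refl _⟩)
    (hy : y = MvPolynomial.X ⟨(1,1), le_refl _⟩) (hz : z = MvPolynomial.X ⟨(2,2), le_refl _⟩)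
    (hI : ∀ i j, yy a b c (x - z) (y - z) j * qq a b c (x - z) (y - z) i
      - yy a b c (x - z) (y - z) i * qq a b c (x - z) (y - z) j ∈ I) :
    f ∈ I := by
  let P := MvPolynomial (Fin 5) (Polynomial ℂ)
  let Y : Fin 5 → P := MvPolynomial.X
  let β : P →+* MvPolynomial Sg ℂ := MvPolynomial.eval₂Hom
    (Polynomial.aeval z : Polynomial ℂ →ₐ[ℂ] MvPolynomial Sg ℂ).toRingHom (yy a b c (x - z) (y - z))
  let κ : ℂ →+* P := MvPolynomial.C.comp Polynomial.C
  have hβ : ∀ i, β (Y i) = yy a b c (x - z) (y - z) i := by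
    intro i; exact MvPolynomial.eval₂Hom_X' _ _ i
  have hY : yy (Y 0) (Y 1) (Y 2) (Y 3) (Y 4) = Y := by
    funext i; fin_cases i <;> rfl
  have hβt : β (MvPolynomial.C Polynomial.X) = z :=
    (MvPolynomial.eval₂Hom_C _ _ _).trans (by simp)
  have hβq : ∀ i, β (qq (Y 0) (Y 1) (Y 2) (Y 3) (Y 4) i) = qq a b c (x - z) (y - z) i := by
    intro i
    fin_cases i <;> simp [hβ]
  have key := elim_lemma (Y 0) (Y 1) (Y 2) (Y 3) (Y 4) (MvPolynomial.C Polynomial.X) κ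
    (by
      intro J hJ h h0
      rw [hY] at h0
      refine koszul_syz _ J ?_ h h0
      intro i j
      have := hJ i j
      rw [hY] at this
      exact this) f hf (I.comap β)
    (by
      intro i j
      rw [Ideal.mem_comap, hY, map_sub, map_mul, map_mul, hβ, hβ, hβq, hβq]
      exact hI i j)
  rw [Ideal.mem_comap, MvPolynomial.eval₂_comp_left] at key
  have e1 : β.comp κ = MvPolynomial.C := by
    apply RingHom.ext
    intro r
    exact (MvPolynomial.eval₂Hom_C _ _ _).trans (by simp [MvPolynomial.algebraMap_eq])
  have e2 : (β ∘ ptv (Y 3) (Y 4) 0 (Y 0) (Y 1) (Y 2) (MvPolynomial.C Polynomial.X))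
      = MvPolynomial.X := by
    funext p
    rcases Sg_cases p with rfl | rfl | rfl | rfl | rfl | rfl <;>
      simp [ptv, hβ, hβt, ha, hb, hc, hx, hy, hz]
  rw [e1, e2, MvPolynomial.eval₂_eta] at key
  exact key

abbrev RR := MvPolynomial Sg ℂ

noncomputable def gX : Matrix (Fin 3) (Fin 3) RR :=
  Matrix.of fun i j => MvPolynomial.X ⟨(min i j, max i j), min_le_max⟩

abbrev i00 : Sg := ⟨(0,0), le_refl _⟩
abbrev i01 : Sg := ⟨(0,1), by decide⟩
abbrev i02 : Sg := ⟨(0,2), by decide⟩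
abbrev i11 : Sg := ⟨(1,1), le_refl _⟩
abbrev i12 : Sg := ⟨(1,2), by decide⟩
abbrev i22 : Sg := ⟨(2,2), le_refl _⟩

noncomputable def gx (p : Sg) : RR := MvPolynomial.X p

def gd (p : Sg) : ℂ := if p.1.1 = p.1.2 then 1 else 0

noncomputable def gz (p : Sg) : RR := (gX ^ 2) p.1.1 p.1.2

lemma gX_apply : gX = !![gx i00, gx i01, gx i02; gx i01, gx i11, gx i12; gx i02, gx i12, gx i22] := by
  ext i j
  fin_cases i <;> fin_cases j <;> rfl

lemma gX_pow_one (p : Sg) : (gX ^ 1) p.1.1 p.1.2 = gx p := by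
  rcases Sg_cases p with rfl | rfl | rfl | rfl | rfl | rfl <;> simp [gX_apply]

lemma gX_pow_zero (p : Sg) : (gX ^ 0) p.1.1 p.1.2 = MvPolynomial.C (gd p) := by
  rw [pow_zero, Matrix.one_apply, gd]
  split_ifs <;> simp

lemma gz00 : gz i00 = gx i00 ^ 2 + gx i01 ^ 2 + gx i02 ^ 2 := by
  simp [gz, gX_apply, pow_two, add_assoc]
lemma gz01 : gz i01 = gx i00 * gx i01 + gx i01 * gx i11 + gx i02 * gx i12 := by
  simp [gz, gX_apply, pow_two, add_assoc]
lemma gz02 : gz i02 = gx i00 * gx i02 + gx i01 * gx i12 + gx i02 * gx i22 := by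
  simp [gz, gX_apply, pow_two, add_assoc]
lemma gz11 : gz i11 = gx i01 ^ 2 + gx i11 ^ 2 + gx i12 ^ 2 := by
  simp [gz, gX_apply, pow_two, add_assoc]
lemma gz12 : gz i12 = gx i01 * gx i02 + gx i11 * gx i12 + gx i12 * gx i22 := by
  simp [gz, gX_apply, pow_two, add_assoc]
lemma gz22 : gz i22 = gx i02 ^ 2 + gx i12 ^ 2 + gx i22 ^ 2 := by
  simp [gz, gX_apply, pow_two, add_assoc]

noncomputable def MM (p q : Sg) : RR := gx p * gz q - gx q * gz p

noncomputable def DD (p q r : Sg) : RR :=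
  MvPolynomial.C (gd p) * MM q r - MvPolynomial.C (gd q) * MM p r + MvPolynomial.C (gd r) * MM p q

lemma det_eq_DD (c : Fin 3 → Sg) :
    Matrix.det (Matrix.of fun r s : Fin 3 => (gX ^ (r : ℕ)) (c s).1.1 (c s).1.2)
      = DD (c 0) (c 1) (c 2) := by
  rw [Matrix.det_fin_three]
  simp only [Matrix.of_apply, Fin.val_zero, Fin.val_one, Fin.val_two, gX_pow_one, gX_pow_zero]
  simp only [DD, MM, gz]
  ring

/-- the set of minors -/
def SS : Set RR := { d | ∃ c : Fin 3 → Sg, Function.Injective c ∧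
      d = Matrix.det (Matrix.of fun r s : Fin 3 => (gX ^ (r : ℕ)) (c s).1.1 (c s).1.2) }

lemma DD_mem (p q r : Sg) (h1 : p ≠ q) (h2 : p ≠ r) (h3 : q ≠ r) : DD p q r ∈ SS := by
  refine ⟨![p, q, r], ?_, ?_⟩
  · intro i j hij
    fin_cases i <;> fin_cases j <;> simp_all
  · rw [det_eq_DD]; rfl

noncomputable def GG : Fin 7 → RR := ![DD i22 i01 i02, DD i22 i01 i12, DD i22 i02 i12,
  DD i00 i22 i01, DD i00 i22 i12, DD i11 i22 i02, DD i00 i11 i22]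

lemma GG_mem (k : Fin 7) : GG k ∈ SS := by
  fin_cases k <;> exact DD_mem _ _ _ (by decide) (by decide) (by decide)

lemma gd00 : gd i00 = 1 := rfl
lemma gd11 : gd i11 = 1 := rfl
lemma gd22 : gd i22 = 1 := rfl
lemma gd01 : gd i01 = 0 := rfl
lemma gd02 : gd i02 = 0 := rfl
lemma gd12 : gd i12 = 0 := rfl

lemma NN_mem (p q : Sg) : MM p q - MvPolynomial.C (gd p) * MM i22 q
    + MvPolynomial.C (gd q) * MM i22 p ∈ Submodule.span ℂ (Set.range GG) := by
  have hG : ∀ k, GG k ∈ Submodule.span ℂ (Set.range GG) :=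
    fun k => Submodule.subset_span ⟨k, rfl⟩
  have fin : ∀ n : Fin 7 → ℤ, MM p q - MvPolynomial.C (gd p) * MM i22 q
    + MvPolynomial.C (gd q) * MM i22 p = ∑ k, (n k : RR) * GG k → MM p q - MvPolynomial.C (gd p) * MM i22 q
    + MvPolynomial.C (gd q) * MM i22 p ∈ Submodule.span ℂ (Set.range GG) := by
    intro n h
    rw [h]
    refine Submodule.sum_mem _ fun k _ => ?_
    have := Submodule.smul_mem _ (n k : ℂ) (hG k)
    convert this using 1
    rw [MvPolynomial.smul_eq_C_mul]
    simp
  rcases Sg_cases p with rfl | rfl | rfl | rfl | rfl | rfl <;>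
  rcases Sg_cases q with rfl | rfl | rfl | rfl | rfl | rfl
  · exact fin ![0, 0, 0, 0, 0, 0, 0] (by
      simp [Fin.sum_univ_seven, GG, DD, MM, gz00, gz01, gz02, gz11, gz12, gz22, gd00, gd01, gd02,
        gd11, gd12, gd22] <;> ring)
  · exact fin ![0, 0, 0, -1, 0, 0, 0] (by
      simp [Fin.sum_univ_seven, GG, DD, MM, gz00, gz01, gz02, gz11, gz12, gz22, gd00, gd01, gd02,
        gd11, gd12, gd22] <;> ring)
  · exact fin ![0, -1, 0, 0, 0, 0, 0] (by
      simp [Fin.sum_univ_seven, GG, DD, MM, gz00, gz01, gz02, gz11, gz12, gz22, gd00, gd01, gd02,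
        gd11, gd12, gd22] <;> ring)
  · exact fin ![0, 0, 0, 0, 0, 0, 1] (by
      simp [Fin.sum_univ_seven, GG, DD, MM, gz00, gz01, gz02, gz11, gz12, gz22, gd00, gd01, gd02,
        gd11, gd12, gd22] <;> ring)
  · exact fin ![0, 0, 0, 0, -1, 0, 0] (by
      simp [Fin.sum_univ_seven, GG, DD, MM, gz00, gz01, gz02, gz11, gz12, gz22, gd00, gd01, gd02,
        gd11, gd12, gd22] <;> ring)
  · exact fin ![0, 0, 0, 0, 0, 0, 0] (by
      simp [Fin.sum_univ_seven, GG, DD, MM, gz00, gz01, gz02, gz11, gz12, gz22, gd00, gd01, gd02,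
        gd11, gd12, gd22] <;> ring)
  · exact fin ![0, 0, 0, 1, 0, 0, 0] (by
      simp [Fin.sum_univ_seven, GG, DD, MM, gz00, gz01, gz02, gz11, gz12, gz22, gd00, gd01, gd02,
        gd11, gd12, gd22] <;> ring)
  · exact fin ![0, 0, 0, 0, 0, 0, 0] (by
      simp [Fin.sum_univ_seven, GG, DD, MM, gz00, gz01, gz02, gz11, gz12, gz22, gd00, gd01, gd02,
        gd11, gd12, gd22] <;> ring)
  · exact fin ![1, 0, 0, 0, 0, 0, 0] (by
      simp [Fin.sum_univ_seven, GG, DD, MM, gz00, gz01, gz02, gz11, gz12, gz22, gd00, gd01, gd02,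
        gd11, gd12, gd22] <;> ring)
  · exact fin ![0, 0, -1, 1, 0, 0, 0] (by
      simp [Fin.sum_univ_seven, GG, DD, MM, gz00, gz01, gz02, gz11, gz12, gz22, gd00, gd01, gd02,
        gd11, gd12, gd22] <;> ring)
  · exact fin ![0, 1, 0, 0, 0, 0, 0] (by
      simp [Fin.sum_univ_seven, GG, DD, MM, gz00, gz01, gz02, gz11, gz12, gz22, gd00, gd01, gd02,
        gd11, gd12, gd22] <;> ring)
  · exact fin ![0, 0, 0, 0, 0, 0, 0] (by
      simp [Fin.sum_univ_seven, GG, DD, MM, gz00, gz01, gz02, gz11, gz12, gz22, gd00, gd01, gd02,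
        gd11, gd12, gd22] <;> ring)
  · exact fin ![0, 1, 0, 0, 0, 0, 0] (by
      simp [Fin.sum_univ_seven, GG, DD, MM, gz00, gz01, gz02, gz11, gz12, gz22, gd00, gd01, gd02,
        gd11, gd12, gd22] <;> ring)
  · exact fin ![-1, 0, 0, 0, 0, 0, 0] (by
      simp [Fin.sum_univ_seven, GG, DD, MM, gz00, gz01, gz02, gz11, gz12, gz22, gd00, gd01, gd02,
        gd11, gd12, gd22] <;> ring)
  · exact fin ![0, 0, 0, 0, 0, 0, 0] (by
      simp [Fin.sum_univ_seven, GG, DD, MM, gz00, gz01, gz02, gz11, gz12, gz22, gd00, gd01, gd02,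
        gd11, gd12, gd22] <;> ring)
  · exact fin ![0, 0, 0, 0, 0, 1, 0] (by
      simp [Fin.sum_univ_seven, GG, DD, MM, gz00, gz01, gz02, gz11, gz12, gz22, gd00, gd01, gd02,
        gd11, gd12, gd22] <;> ring)
  · exact fin ![0, 0, 1, 0, 0, 0, 0] (by
      simp [Fin.sum_univ_seven, GG, DD, MM, gz00, gz01, gz02, gz11, gz12, gz22, gd00, gd01, gd02,
        gd11, gd12, gd22] <;> ring)
  · exact fin ![0, 0, 0, 0, 0, 0, 0] (by
      simp [Fin.sum_univ_seven, GG, DD, MM, gz00, gz01, gz02, gz11, gz12, gz22, gd00, gd01, gd02,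
        gd11, gd12, gd22] <;> ring)
  · exact fin ![0, 0, 0, 0, 0, 0, -1] (by
      simp [Fin.sum_univ_seven, GG, DD, MM, gz00, gz01, gz02, gz11, gz12, gz22, gd00, gd01, gd02,
        gd11, gd12, gd22] <;> ring)
  · exact fin ![0, 0, 1, -1, 0, 0, 0] (by
      simp [Fin.sum_univ_seven, GG, DD, MM, gz00, gz01, gz02, gz11, gz12, gz22, gd00, gd01, gd02,
        gd11, gd12, gd22] <;> ring)
  · exact fin ![0, 0, 0, 0, 0, -1, 0] (by
      simp [Fin.sum_univ_seven, GG, DD, MM, gz00, gz01, gz02, gz11, gz12, gz22, gd00, gd01, gd02,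
        gd11, gd12, gd22] <;> ring)
  · exact fin ![0, 0, 0, 0, 0, 0, 0] (by
      simp [Fin.sum_univ_seven, GG, DD, MM, gz00, gz01, gz02, gz11, gz12, gz22, gd00, gd01, gd02,
        gd11, gd12, gd22] <;> ring)
  · exact fin ![-1, 0, 0, 0, 0, 0, 0] (by
      simp [Fin.sum_univ_seven, GG, DD, MM, gz00, gz01, gz02, gz11, gz12, gz22, gd00, gd01, gd02,
        gd11, gd12, gd22] <;> ring)
  · exact fin ![0, 0, 0, 0, 0, 0, 0] (by
      simp [Fin.sum_univ_seven, GG, DD, MM, gz00, gz01, gz02, gz11, gz12, gz22, gd00, gd01, gd02,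
        gd11, gd12, gd22] <;> ring)
  · exact fin ![0, 0, 0, 0, 1, 0, 0] (by
      simp [Fin.sum_univ_seven, GG, DD, MM, gz00, gz01, gz02, gz11, gz12, gz22, gd00, gd01, gd02,
        gd11, gd12, gd22] <;> ring)
  · exact fin ![0, -1, 0, 0, 0, 0, 0] (by
      simp [Fin.sum_univ_seven, GG, DD, MM, gz00, gz01, gz02, gz11, gz12, gz22, gd00, gd01, gd02,
        gd11, gd12, gd22] <;> ring)
  · exact fin ![0, 0, -1, 0, 0, 0, 0] (by
      simp [Fin.sum_univ_seven, GG, DD, MM, gz00, gz01, gz02, gz11, gz12, gz22, gd00, gd01, gd02,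
        gd11, gd12, gd22] <;> ring)
  · exact fin ![1, 0, 0, 0, 0, 0, 0] (by
      simp [Fin.sum_univ_seven, GG, DD, MM, gz00, gz01, gz02, gz11, gz12, gz22, gd00, gd01, gd02,
        gd11, gd12, gd22] <;> ring)
  · exact fin ![0, 0, 0, 0, 0, 0, 0] (by
      simp [Fin.sum_univ_seven, GG, DD, MM, gz00, gz01, gz02, gz11, gz12, gz22, gd00, gd01, gd02,
        gd11, gd12, gd22] <;> ring)
  · exact fin ![0, 0, 0, 0, 0, 0, 0] (by
      simp [Fin.sum_univ_seven, GG, DD, MM, gz00, gz01, gz02, gz11, gz12, gz22, gd00, gd01, gd02,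
        gd11, gd12, gd22] <;> ring)
  · exact fin ![0, 0, 0, 0, 0, 0, 0] (by
      simp [Fin.sum_univ_seven, GG, DD, MM, gz00, gz01, gz02, gz11, gz12, gz22, gd00, gd01, gd02,
        gd11, gd12, gd22] <;> ring)
  · exact fin ![0, 0, 0, 0, 0, 0, 0] (by
      simp [Fin.sum_univ_seven, GG, DD, MM, gz00, gz01, gz02, gz11, gz12, gz22, gd00, gd01, gd02,
        gd11, gd12, gd22] <;> ring)
  · exact fin ![0, 0, 0, 0, 0, 0, 0] (by
      simp [Fin.sum_univ_seven, GG, DD, MM, gz00, gz01, gz02, gz11, gz12, gz22, gd00, gd01, gd02,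
        gd11, gd12, gd22] <;> ring)
  · exact fin ![0, 0, 0, 0, 0, 0, 0] (by
      simp [Fin.sum_univ_seven, GG, DD, MM, gz00, gz01, gz02, gz11, gz12, gz22, gd00, gd01, gd02,
        gd11, gd12, gd22] <;> ring)
  · exact fin ![0, 0, 0, 0, 0, 0, 0] (by
      simp [Fin.sum_univ_seven, GG, DD, MM, gz00, gz01, gz02, gz11, gz12, gz22, gd00, gd01, gd02,
        gd11, gd12, gd22] <;> ring)
  · exact fin ![0, 0, 0, 0, 0, 0, 0] (by
      simp [Fin.sum_univ_seven, GG, DD, MM, gz00, gz01, gz02, gz11, gz12, gz22, gd00, gd01, gd02,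
        gd11, gd12, gd22] <;> ring)

lemma span_SS : Submodule.span ℂ SS = Submodule.span ℂ (Set.range GG) := by
  apply le_antisymm
  · rw [Submodule.span_le]
    rintro _ ⟨c, -, rfl⟩
    rw [det_eq_DD]
    have h := Submodule.add_mem _ (Submodule.sub_mem _
      (Submodule.smul_mem _ (gd (c 0)) (NN_mem (c 1) (c 2)))
      (Submodule.smul_mem _ (gd (c 1)) (NN_mem (c 0) (c 2))))
      (Submodule.smul_mem _ (gd (c 2)) (NN_mem (c 0) (c 1)))
    refine (congrArg (· ∈ Submodule.span ℂ (Set.range GG)) ?_).mp h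
    simp only [DD, MvPolynomial.smul_eq_C_mul]
    ring
  · apply Submodule.span_mono
    rintro _ ⟨k, rfl⟩
    exact GG_mem k

noncomputable def evp (x00 x01 x02 x11 x12 x22 : ℂ) : RR →+* ℂ :=
  MvPolynomial.eval fun p => (!![x00, x01, x02; x01, x11, x12; x02, x12, x22] : Matrix _ _ ℂ) p.1.1 p.1.2

lemma GG_indep : LinearIndependent ℂ GG := by
  rw [Fintype.linearIndependent_iff]
  intro g hg
  have ev : ∀ x00 x01 x02 x11 x12 x22 : ℂ,
      ∑ k, g k * evp x00 x01 x02 x11 x12 x22 (GG k) = 0 := by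
    intro x00 x01 x02 x11 x12 x22
    have := congrArg (evp x00 x01 x02 x11 x12 x22) hg
    rw [map_sum, map_zero] at this
    rw [← this]
    refine Finset.sum_congr rfl fun k _ => ?_
    rw [MvPolynomial.smul_eq_C_mul, map_mul]
    simp [evp]
  have e1 := ev 1 0 0 (-1) 0 0
  have e2 := ev 0 1 0 0 0 0
  have e3 := ev 0 0 0 0 1 0
  have e4 := ev 0 0 1 0 0 0
  have e5 := ev 0 1 0 0 1 0
  have e6 := ev 0 1 0 0 (-1) 0
  have e7 := ev 0 1 1 0 0 0
  simp [Fin.sum_univ_seven, GG, DD, MM, gz00, gz01, gz02, gz11, gz12, gz22, gd00, gd01, gd02, gd11,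
    gd12, gd22, gx, evp] at e1 e2 e3 e4 e5 e6 e7
  intro i
  fin_cases i <;> simp <;> grind

lemma finrank_SS : Module.finrank ℂ (Submodule.span ℂ SS) = 7 := by
  rw [span_SS, finrank_span_eq_card GG_indep]
  rfl

lemma kos_mem (i j : Fin 5) :
    yy (gx i01) (gx i02) (gx i12) (gx i00 - gx i22) (gx i11 - gx i22) j
      * qq (gx i01) (gx i02) (gx i12) (gx i00 - gx i22) (gx i11 - gx i22) i
    - yy (gx i01) (gx i02) (gx i12) (gx i00 - gx i22) (gx i11 - gx i22) i
      * qq (gx i01) (gx i02) (gx i12) (gx i00 - gx i22) (gx i11 - gx i22) j ∈ Ideal.span SS := by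
  have h := NN_mem ((![i01, i02, i12, i00, i11] : Fin 5 → Sg) j)
    ((![i01, i02, i12, i00, i11] : Fin 5 → Sg) i)
  rw [← span_SS] at h
  have h2 := Submodule.span_le_restrictScalars ℂ RR SS h
  rw [Submodule.restrictScalars_mem] at h2
  refine (congrArg (· ∈ Ideal.span SS) ?_).mp h2
  clear h h2
  fin_cases i <;> fin_cases j <;>
    simp [MM, gz00, gz01, gz02, gz11, gz12, gz22, gd00, gd01, gd02, gd11, gd12, gd22] <;> ring

lemma gz_hom (p : Sg) : (gz p).IsHomogeneous 2 := by
  rw [gz, pow_two, Matrix.mul_apply]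
  refine MvPolynomial.IsHomogeneous.sum _ _ _ fun i _ => ?_
  exact (MvPolynomial.isHomogeneous_X _ _).mul (MvPolynomial.isHomogeneous_X _ _)

lemma MM_hom (p q : Sg) : (MM p q).IsHomogeneous 3 :=
  ((MvPolynomial.isHomogeneous_X _ _).mul (gz_hom q)).sub
    ((MvPolynomial.isHomogeneous_X _ _).mul (gz_hom p))

lemma DD_hom (p q r : Sg) : (DD p q r).IsHomogeneous 3 := by
  have h : ∀ (a : ℂ) p q, (MvPolynomial.C a * MM p q).IsHomogeneous 3 := by
    intro a p q
    have := (MvPolynomial.isHomogeneous_C Sg a).mul (MM_hom p q)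
    simpa using this
  exact ((h _ _ _).sub (h _ _ _)).add (h _ _ _)

lemma SS_hom (d : RR) (hd : d ∈ SS) : d.IsHomogeneous 3 := by
  obtain ⟨c, -, rfl⟩ := hd
  rw [det_eq_DD]
  exact DD_hom _ _ _

lemma comp_mem (S : Set RR) (hS : ∀ s ∈ S, s.IsHomogeneous 3) (f : RR) (hf : f ∈ Ideal.span S) :
    MvPolynomial.homogeneousComponent 3 f ∈ Submodule.span ℂ S := by
  suffices h : ∀ a : RR, MvPolynomial.homogeneousComponent 3 (a * f) ∈ Submodule.span ℂ S by
    simpa using h 1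
  induction hf using Submodule.span_induction with
  | mem x hx =>
    intro a
    induction a using MvPolynomial.induction_on' with
    | monomial m r =>
      have h1 : (MvPolynomial.monomial m r * x).IsHomogeneous (m.degree + 3) :=
        (MvPolynomial.isHomogeneous_monomial r rfl).mul (hS x hx)
      rw [MvPolynomial.homogeneousComponent_of_mem h1]
      split_ifs with h
      · have hm : m = 0 := by
          rw [← Finsupp.degree_eq_zero_iff]
          omega
        subst hm
        have := Submodule.smul_mem _ r (Submodule.subset_span (R := ℂ) hx)
        rwa [MvPolynomial.smul_eq_C_mul] at this
      · exact Submodule.zero_mem _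
    | add p q hp hq =>
      rw [add_mul, map_add]
      exact Submodule.add_mem _ hp hq
  | zero => simp
  | add x y _ _ hx hy =>
    intro a
    rw [mul_add, map_add]
    exact Submodule.add_mem _ (hx a) (hy a)
  | smul b x _ hx =>
    intro a
    rw [smul_eq_mul, ← mul_assoc]
    exact hx _

lemma eval_gX (A : Matrix (Fin 3) (Fin 3) ℂ) (hA : Aᵀ = A) :
    (MvPolynomial.eval (fun p : Sg => A p.1.1 p.1.2)).mapMatrix gX = A := by
  have h : ∀ i j, A i j = A j i := fun i j => congrFun (congrFun hA j) i
  ext i j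
  rw [RingHom.mapMatrix_apply, Matrix.map_apply, gX, Matrix.of_apply, MvPolynomial.eval_X]
  rcases le_total i j with hij | hij
  · simp [hij]
  · simp [hij, h i j]

lemma eval_SS (A : Matrix (Fin 3) (Fin 3) ℂ) (hA : Aᵀ = A)
    (hdep : ¬ LinearIndependent ℂ (fun r : Fin 3 => A ^ (r : ℕ))) (d : RR) (hd : d ∈ SS) :
    MvPolynomial.eval (fun p : Sg => A p.1.1 p.1.2) d = 0 := by
  obtain ⟨c, -, rfl⟩ := hd
  obtain ⟨g, hg, i, hi⟩ := Fintype.not_linearIndependent_iff.mp hdep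
  rw [RingHom.map_det]
  apply Matrix.exists_vecMul_eq_zero_iff.mp
  refine ⟨g, fun h => hi (by rw [h]; rfl), ?_⟩
  funext s
  have e : ∀ r : Fin 3, MvPolynomial.eval (fun p : Sg => A p.1.1 p.1.2)
      ((gX ^ (r : ℕ)) (c s).1.1 (c s).1.2) = (A ^ (r : ℕ)) (c s).1.1 (c s).1.2 := by
    intro r
    have := map_pow (MvPolynomial.eval (fun p : Sg => A p.1.1 p.1.2)).mapMatrix gX (r : ℕ)
    rw [eval_gX A hA] at this
    exact congrFun (congrFun this _) _
  have h2 := congrFun (congrFun hg (c s).1.1) (c s).1.2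
  simp only [Matrix.sum_apply, Matrix.smul_apply, smul_eq_mul, Matrix.zero_apply] at h2
  simp only [Matrix.vecMul, dotProduct, RingHom.mapMatrix_apply, Matrix.map_apply, Matrix.of_apply,
    e, Pi.zero_apply]
  exact h2

lemma pt_mem (a b c l : ℂ) : ∃ A : Matrix (Fin 3) (Fin 3) ℂ, Aᵀ = A ∧
    (¬ LinearIndependent ℂ (fun r : Fin 3 => A ^ (r : ℕ))) ∧
    (fun p : Sg => A p.1.1 p.1.2)
      = ptv (a * a) (b * b) (c * c) (a * b) (a * c) (b * c) l := by
  refine ⟨!![a * a + l, a * b, a * c; a * b, b * b + l, b * c; a * c, b * c, c * c + l], ?_, ?_, rfl⟩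
  · ext i j
    fin_cases i <;> fin_cases j <;> rfl
  · rw [Fintype.not_linearIndependent_iff]
    refine ⟨![l ^ 2 + (a * a + b * b + c * c) * l, -(2 * l + (a * a + b * b + c * c)), 1], ?_,
      2, by simp⟩
    ext i j
    fin_cases i <;> fin_cases j <;>
      simp [Fin.sum_univ_three, pow_two, Matrix.one_apply] <;> ring

lemma mem_iff (f : RR) : f ∈ Ideal.span SS ↔
    ∀ A : Matrix (Fin 3) (Fin 3) ℂ, (Aᵀ = A ∧
      ¬ LinearIndependent ℂ (fun r : Fin 3 => A ^ (r : ℕ))) →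
      MvPolynomial.eval (fun p : Sg => A p.1.1 p.1.2) f = 0 := by
  constructor
  · rintro hf A ⟨h1, h2⟩
    have : Ideal.span SS ≤ RingHom.ker (MvPolynomial.eval (fun p : Sg => A p.1.1 p.1.2)) := by
      rw [Ideal.span_le]
      exact fun d hd => eval_SS A h1 h2 d hd
    exact this hf
  · intro h
    refine main_lemma f ?_ _ (gx i01) (gx i02) (gx i12) (gx i00) (gx i11) (gx i22)
      rfl rfl rfl rfl rfl rfl kos_mem
    intro a b c l
    obtain ⟨A, h1, h2, h3⟩ := pt_mem a b c l
    rw [← h3]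
    exact h A ⟨h1, h2⟩

/-- For the variety `W` of complex symmetric `3×3` matrices with minimal polynomial
of degree at most `2`, in the coordinate ring of symmetric matrices (polynomials in
the six variables `(i,j)`, `i ≤ j`): the vanishing ideal of `W` is generated by the
`3×3` minors of the `3×6` matrix whose rows list the entries of `I₃`, of the generic
symmetric matrix and of its square; their ℂ-span is the degree-3 homogeneous
component of the vanishing ideal; and this space has dimension `7`. -/
theorem stmt_11
    (Xs : Matrix (Fin 3) (Fin 3) (MvPolynomial {p : Fin 3 × Fin 3 // p.1 ≤ p.2} ℂ))
    (hXs : ∀ i j : Fin 3, Xs i j = MvPolynomial.X ⟨(min i j, max i j), min_le_max⟩)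
    (W : Set (Matrix (Fin 3) (Fin 3) ℂ))
    (hW : W = {A | Aᵀ = A ∧ ¬ LinearIndependent ℂ (fun r : Fin 3 => A ^ (r : ℕ))})
    (S' : Set (MvPolynomial {p : Fin 3 × Fin 3 // p.1 ≤ p.2} ℂ))
    (hS' : S' = { d | ∃ c : Fin 3 → {p : Fin 3 × Fin 3 // p.1 ≤ p.2}, Function.Injective c ∧
      d = Matrix.det (Matrix.of fun r s : Fin 3 =>
        (Xs ^ (r : ℕ)) (c s).1.1 (c s).1.2) }) :
    (∀ f : MvPolynomial {p : Fin 3 × Fin 3 // p.1 ≤ p.2} ℂ, f ∈ Ideal.span S' ↔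
      ∀ A ∈ W, MvPolynomial.eval (fun p => A p.1.1 p.1.2) f = 0) ∧
    (∀ f : MvPolynomial {p : Fin 3 × Fin 3 // p.1 ≤ p.2} ℂ, f ∈ Submodule.span ℂ S' ↔
      (f.IsHomogeneous 3 ∧ ∀ A ∈ W, MvPolynomial.eval (fun p => A p.1.1 p.1.2) f = 0)) ∧
    Module.finrank ℂ (Submodule.span ℂ S') = 7 := by
  
  obtain rfl : Xs = gX := by
    ext1 i j
    exact hXs i j
  subst hW
  have hSS : S' = SS := hS'
  rw [hSS]
  refine ⟨fun f => mem_iff f, fun f => ⟨fun hf => ⟨?_, ?_⟩, fun hf => ?_⟩, finrank_SS⟩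
  · have hle : Submodule.span ℂ SS ≤ MvPolynomial.homogeneousSubmodule _ ℂ 3 := by
      rw [Submodule.span_le]
      exact fun d hd => SS_hom d hd
    exact hle hf
  · have h2 := Submodule.span_le_restrictScalars ℂ RR SS hf
    rw [Submodule.restrictScalars_mem] at h2
    exact (mem_iff f).mp h2
  · have h := comp_mem SS SS_hom f ((mem_iff f).mpr hf.2)
    rwa [MvPolynomial.homogeneousComponent_of_mem hf.1, if_pos rfl] at h
end

section
/- Let R' = MvPolynomial over the six indices {(i,j) : i ≤ j in Fin 3} over ℂ with its standard grading (polynomial functions on complex symmetric 3×3 matrices), let W = {A ∈ Matrix (Fin 3) (Fin 3) ℂ : Aᵀ = A and (I₃, A, A²) is linearly dependent over ℂ}, and let I(W) ⊂ R' be its vanishing ideal. For d ∈ ℕ, let h_d = dim_ℂ R'_d − dim_ℂ (I(W) ∩ R'_d), the dimension of the degree-d component of R'/I(W). Then in the formal power series ring ℚ[[t]] (or ℤ[[t]]): (1 − t)⁴ · Σ_{d≥0} h_d t^d = 1 + 2t + 3t² − 3t³ + t⁴. -/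
open Matrix

namespace HS12

lemma exists_rank_one {B : Matrix (Fin 3) (Fin 3) ℂ} (hs : Bᵀ = B) (hr : B.rank ≤ 1) :
    ∃ v : Fin 3 → ℂ, ∀ i j, B i j = v i * v j := by
  have hs' : ∀ i j, B i j = B j i := fun i j => by
    conv_lhs => rw [← hs]
    rfl
  obtain ⟨u, hu⟩ := finrank_le_one_iff.mp hr
  have h1 : ∀ j, ∃ c : ℂ, ∀ i, B i j = c * u.1 i := by
    intro j
    obtain ⟨c, hc⟩ := hu ⟨B.mulVecLin (Pi.single j 1), ⟨_, rfl⟩⟩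
    refine ⟨c, fun i => ?_⟩
    have := congrFun (congrArg Subtype.val hc) i
    simpa using this.symm
  choose c hc using h1
  have hm : ∀ i j k l, B i j * B k l = B i l * B k j := by
    intro i j k l
    rw [hc j i, hc l k, hc l i, hc j k]; ring
  by_cases hd : ∃ i, B i i ≠ 0
  · obtain ⟨i, hi⟩ := hd
    obtain ⟨s, hs2⟩ := IsAlgClosed.exists_pow_nat_eq (B i i) (n := 2) (by norm_num)
    have hs0 : s ≠ 0 := by rintro rfl; simp at hs2; exact hi hs2.symm
    refine ⟨fun j => B i j / s, fun j k => ?_⟩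
    have := hm i i j k
    rw [hs' j i] at this
    field_simp
    rw [hs2]; linear_combination this
  · push Not at hd
    refine ⟨0, fun i j => ?_⟩
    have := hm i j j i
    rw [hd, hd, hs' j i] at this
    simpa using this

lemma mem_W_iff (A : Matrix (Fin 3) (Fin 3) ℂ) :
    (Aᵀ = A ∧ ¬ LinearIndependent ℂ (fun r : Fin 3 => A ^ (r : ℕ))) ↔
    ∃ (c : ℂ) (v : Fin 3 → ℂ), ∀ i j, A i j = (if i = j then c else 0) + v i * v j := by
  constructor
  · rintro ⟨hs, hA⟩
    rw [Fintype.not_linearIndependent_iff] at hA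
    obtain ⟨g, hg, i, hi⟩ := hA
    simp only [Fin.sum_univ_three, Fin.val_zero, Fin.val_one, Fin.val_two, pow_zero, pow_one] at hg
    have key : ∀ c : ℂ, (A - c • (1 : Matrix (Fin 3) (Fin 3) ℂ)).rank ≤ 1 →
        ∃ (c : ℂ) (v : Fin 3 → ℂ), ∀ i j, A i j = (if i = j then c else 0) + v i * v j := by
      intro c hc
      obtain ⟨v, hv⟩ := exists_rank_one (by simp [hs]) hc
      refine ⟨c, v, fun i j => ?_⟩
      rw [← hv]
      simp [Matrix.one_apply]
    by_cases h2 : g 2 = 0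
    · by_cases h1 : g 1 = 0
      · exfalso
        have h0 : g 0 = 0 := by
          have := congrFun (congrFun hg 0) 0
          simpa [h1, h2] using this
        fin_cases i <;> simp_all
      · apply key (-(g 0) / g 1)
        have : A - (-(g 0) / g 1) • (1 : Matrix (Fin 3) (Fin 3) ℂ) = 0 := by
          have h3 : A = (g 1)⁻¹ • (g 1 • A) := by rw [smul_smul, inv_mul_cancel₀ h1, one_smul]
          have h4 : g 1 • A = -(g 0 • (1 : Matrix (Fin 3) (Fin 3) ℂ)) := by
            rw [h2, zero_smul, add_zero] at hg
            exact eq_neg_of_add_eq_zero_right hg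
          rw [h3, h4, smul_neg, smul_smul, neg_div, neg_smul, div_eq_inv_mul]
          simp
        rw [this, Matrix.rank_zero]; norm_num
    · obtain ⟨s, hs2⟩ := IsAlgClosed.exists_pow_nat_eq (discrim (g 2) (g 1) (g 0)) (n := 2) (by norm_num)
      unfold discrim at hs2
      set p := (-(g 1) + s) / (2 * g 2) with hp
      set q := (-(g 1) - s) / (2 * g 2) with hq
      have e1 : p + q = - g 1 / g 2 := by rw [hp, hq]; field_simp; ring
      have e2 : p * q = g 0 / g 2 := by
        rw [hp, hq]; field_simp
        linear_combination - hs2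
      have hmul : (A - p • (1 : Matrix (Fin 3) (Fin 3) ℂ)) * (A - q • (1 : Matrix (Fin 3) (Fin 3) ℂ)) = 0 := by
        have h3 : A ^ 2 - (p + q) • A + (p * q) • (1 : Matrix (Fin 3) (Fin 3) ℂ) = 0 := by
          rw [e1, e2]
          have : (g 2)⁻¹ • (g 0 • 1 + g 1 • A + g 2 • A ^ 2) = 0 := by rw [hg, smul_zero]
          rw [← this, smul_add, smul_add, smul_smul, smul_smul, smul_smul, inv_mul_cancel₀ h2, one_smul,
            neg_div, neg_smul, div_eq_inv_mul, div_eq_inv_mul]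
          abel
        rw [← h3]
        simp only [sub_mul, mul_sub, smul_mul_assoc, mul_smul_comm, one_mul, mul_one, smul_sub, smul_smul, add_smul, pow_two, mul_comm q p]
        abel
      have hr := Matrix.rank_add_rank_le_card_of_mul_eq_zero hmul
      simp only [Fintype.card_fin] at hr
      by_cases hp1 : (A - p • (1 : Matrix (Fin 3) (Fin 3) ℂ)).rank ≤ 1
      · exact key p hp1
      · exact key q (by omega)
  · rintro ⟨c, v, h⟩
    have hA : A = Matrix.of (fun i j => (if i = j then c else 0) + v i * v j) := by
      ext i j; simp [h]
    refine ⟨?_, ?_⟩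
    · ext i j
      rw [Matrix.transpose_apply, h, h, mul_comm]
      simp [eq_comm]
    · rw [Fintype.not_linearIndependent_iff]
      let n := v 0 ^ 2 + v 1 ^ 2 + v 2 ^ 2
      refine ⟨![c ^ 2 + c * n, -(2 * c + n), 1], ?_, 2, by simp⟩
      simp only [Fin.sum_univ_three, Fin.val_zero, Fin.val_one, Fin.val_two, pow_zero, pow_one]
      ext i j
      fin_cases i <;> fin_cases j <;>
        simp [pow_two, Matrix.mul_apply, Fin.sum_univ_three, h, n] <;> ring

open MvPolynomial

abbrev Idx := {p : Fin 3 × Fin 3 // p.1 ≤ p.2}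

noncomputable def lam : MvPolynomial (Fin 4) ℂ := X 0

noncomputable def xx (i : Fin 3) : MvPolynomial (Fin 4) ℂ := X i.succ

noncomputable def G (i j : Fin 3) : MvPolynomial (Fin 4) ℂ :=
  (if i = j then lam else 0) + xx i * xx j

lemma G_comm (i j : Fin 3) : G i j = G j i := by
  unfold G; rw [mul_comm]; simp [eq_comm]

lemma G_self (i : Fin 3) : G i i = lam + xx i * xx i := by simp [G]

lemma G_ne {i j : Fin 3} (h : i ≠ j) : G i j = xx i * xx j := by simp [G, h]

noncomputable def phi : MvPolynomial Idx ℂ →ₐ[ℂ] MvPolynomial (Fin 4) ℂ :=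
  aeval (fun p => G p.1.1 p.1.2)

noncomputable def S (d : ℕ) : Submodule ℂ (MvPolynomial (Fin 4) ℂ) :=
  (homogeneousSubmodule Idx ℂ d).map phi.toLinearMap

lemma one_mem_S : (1 : MvPolynomial (Fin 4) ℂ) ∈ S 0 :=
  ⟨1, isHomogeneous_one _ _, by simp⟩

lemma S_mul_G {d : ℕ} {f : MvPolynomial (Fin 4) ℂ} (hf : f ∈ S d) (i j : Fin 3) :
    f * G i j ∈ S (d + 1) := by
  wlog hij : i ≤ j generalizing i j
  · rw [G_comm]; exact this j i (le_of_not_ge hij)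
  obtain ⟨p, hp, rfl⟩ := hf
  refine ⟨p * X ⟨(i, j), hij⟩, ?_, by simp [phi]⟩
  exact IsHomogeneous.mul hp (isHomogeneous_X _ _)

lemma G_mem (i j : Fin 3) : G i j ∈ S 1 := by
  simpa using S_mul_G one_mem_S i j

lemma GG_mem (i j k l : Fin 3) : G i j * G k l ∈ S 2 := S_mul_G (G_mem i j) k l

lemma exists_third (a b : Fin 3) : ∃ c : Fin 3, c ≠ a ∧ c ≠ b := by
  revert a b; decide

lemma lam_ab {a b : Fin 3} (h : a ≠ b) : lam * xx a * xx b ∈ S 2 := by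
  obtain ⟨c, ha, hb⟩ := exists_third a b
  have := (S 2).sub_mem (GG_mem a b c c) (GG_mem a c b c)
  rw [G_ne h, G_self, G_ne ha.symm, G_ne hb.symm] at this
  convert this using 1; ring

lemma quartic_ne {a b : Fin 3} (h : a ≠ b) (c e : Fin 3) : xx a * xx b * xx c * xx e ∈ S 2 := by
  by_cases hce : c = e
  · subst hce
    have := (S 2).sub_mem (GG_mem a b c c) (lam_ab h)
    rw [G_ne h, G_self] at this
    convert this using 1; ring
  · have := GG_mem a b c e
    rw [G_ne h, G_ne hce] at this
    convert this using 1; ring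

lemma quartic (a b c e : Fin 3) : xx a * xx b * xx c * xx e ∈ S 2 := by
  by_cases hab : a = b
  swap
  · exact quartic_ne hab c e
  by_cases hac : a = c
  swap
  · convert quartic_ne hac b e using 1; ring
  by_cases hae : a = e
  swap
  · convert quartic_ne hae b c using 1; ring
  subst hab hac hae
  obtain ⟨y, hy, -⟩ := exists_third a a
  obtain ⟨z, hza, hzy⟩ := exists_third a y
  have h1 := (S 2).sub_mem (GG_mem a a y y) (GG_mem a y a y)
  have h2 := (S 2).sub_mem (GG_mem a a z z) (GG_mem a z a z)
  have h3 := (S 2).sub_mem (GG_mem y y z z) (GG_mem y z y z)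
  have h4 := (S 2).sub_mem (GG_mem a a a a) ((S 2).sub_mem ((S 2).add_mem h1 h2) h3)
  rw [G_ne hy.symm, G_ne hza.symm, G_ne hzy.symm, G_self, G_self, G_self] at h4
  convert h4 using 1; ring

noncomputable def pr (m : List (Fin 3)) : MvPolynomial (Fin 4) ℂ := (m.map xx).prod

@[simp] lemma pr_nil : pr [] = 1 := rfl

@[simp] lemma pr_cons (a : Fin 3) (m : List (Fin 3)) : pr (a :: m) = xx a * pr m := by
  simp [pr]

lemma lam_step {n l j : ℕ} (hl : 1 ≤ l)
    (H : ∀ m : List (Fin 3), m.length = l → lam ^ j * pr m ∈ S n) (m : List (Fin 3))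
    (hm : m.length = l) : lam ^ (j + 1) * pr m ∈ S (n + 1) := by
  match m, hm with
  | [], hm => simp at hm; omega
  | a :: m', hm =>
    obtain ⟨i, hi, -⟩ := exists_third a a
    have h1 := S_mul_G (H (a :: m') hm) i i
    have h2 := S_mul_G (H (i :: m') (by simpa using hm)) i a
    have h3 := (S (n + 1)).sub_mem h1 h2
    rw [G_self, G_ne hi, pr_cons, pr_cons] at h3
    rw [pr_cons]
    convert h3 using 1; ring

lemma big (k j : ℕ) (m : List (Fin 3)) (hm : m.length = 2 * (k + 2)) :
    lam ^ j * pr m ∈ S (j + (k + 2)) := by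
  induction k generalizing j m with
  | zero =>
    induction j generalizing m with
    | zero =>
      match m, hm with
      | [a, b, c, e], _ =>
        simpa [mul_assoc] using quartic a b c e
    | succ j ih =>
      have := lam_step (by norm_num) (fun m hm => ih m hm) m hm
      convert this using 2
  | succ k ihk =>
    induction j generalizing m with
    | zero =>
      match m, hm with
      | a :: b :: m', hm =>
        have hm' : m'.length = 2 * (k + 2) := by simp at hm; omega
        have h0 := S_mul_G (ihk 0 m' hm') a b
        have h1 := ihk 1 m' hm'
        rw [show 1 + (k + 2) = 0 + (k + 2) + 1 by ring] at h1
        rw [show 0 + (k + 1 + 2) = 0 + (k + 2) + 1 by ring]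
        by_cases hab : a = b
        · subst hab
          rw [G_self] at h0
          convert (S _).sub_mem h0 h1 using 1
          rw [pr_cons, pr_cons]; ring
        · rw [G_ne hab] at h0
          convert h0 using 1
          rw [pr_cons, pr_cons]; ring
    | succ j ih =>
      have := lam_step (by omega) (fun m hm => ih m hm) m hm
      convert this using 2; ring

lemma quad_ne {a b : Fin 3} (h : a ≠ b) (j : ℕ) : lam ^ j * (xx a * xx b) ∈ S (j + 1) := by
  induction j with
  | zero => simpa [G_ne h] using G_mem a b
  | succ j ih =>
    obtain ⟨c, ha, hb⟩ := exists_third a b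
    have h1 := S_mul_G ih c c
    have h2 := big 0 j [a, b, c, c] rfl
    have h3 := (S (j + 1 + 1)).sub_mem h1 h2
    rw [G_self] at h3
    convert h3 using 1
    simp; ring

lemma quad_self (a : Fin 3) (j : ℕ) :
    lam ^ (j + 1) + ((j : ℂ) + 1) • (lam ^ j * (xx a * xx a)) ∈ S (j + 1) := by
  induction j with
  | zero => simpa [G_self] using G_mem a a
  | succ j ih =>
    have h1 := S_mul_G ih a a
    have h2 := (S (j + 1 + 1)).smul_mem ((j : ℂ) + 1) (big 0 j [a, a, a, a] rfl)
    have h3 := (S (j + 1 + 1)).sub_mem h1 h2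
    rw [G_self] at h3
    convert h3 using 1
    simp [MvPolynomial.smul_eq_C_mul]; ring

lemma all_mem (j k : ℕ) (m : List (Fin 3)) (hm : m.length = 2 * k) :
    lam ^ j * pr m ∈ S (j + k) ⊔ Submodule.span ℂ {lam ^ (j + k)} := by
  match k, m, hm with
  | 0, [], _ =>
    simpa using Submodule.mem_sup_right (Submodule.mem_span_singleton_self _)
  | 1, [a, b], _ =>
    by_cases hab : a = b
    · subst hab
      have h1 : lam ^ (j + 1) + ((j : ℂ) + 1) • (lam ^ j * (xx a * xx a)) ∈
        S (j + 1) ⊔ Submodule.span ℂ {lam ^ (j + 1)} := Submodule.mem_sup_left (quad_self a j)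
      have h2 : lam ^ (j + 1) ∈ S (j + 1) ⊔ Submodule.span ℂ {lam ^ (j + 1)} :=
        Submodule.mem_sup_right (Submodule.mem_span_singleton_self _)
      have h3 := Submodule.smul_mem _ ((j : ℂ) + 1)⁻¹ (Submodule.sub_mem _ h1 h2)
      rw [add_sub_cancel_left, smul_smul, inv_mul_cancel₀ (Nat.cast_add_one_ne_zero j), one_smul] at h3
      simpa using h3
    · exact Submodule.mem_sup_left (by simpa using quad_ne hab j)
  | k + 2, m, hm => exact Submodule.mem_sup_left (big k j m hm)

def w : Fin 4 → ℕ := ![2, 1, 1, 1]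

lemma V_le (d : ℕ) : weightedHomogeneousSubmodule ℂ w (2 * d) ≤
    S d ⊔ Submodule.span ℂ {lam ^ d} := by
  intro p hp
  rw [mem_weightedHomogeneousSubmodule] at hp
  induction hp using IsWeightedHomogeneous.induction_on with
  | zero => exact Submodule.zero_mem _
  | add p q _ _ h1 h2 => exact Submodule.add_mem _ h1 h2
  | monomial s r hs =>
    rw [Finsupp.weight_apply, Finsupp.sum_fintype _ _ (by simp)] at hs
    simp [Fin.sum_univ_four, w] at hs
    have h1 := all_mem (s 0) (d - s 0)
      (List.replicate (s 1) 0 ++ (List.replicate (s 2) 1 ++ List.replicate (s 3) 2))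
      (by simp; omega)
    rw [show s 0 + (d - s 0) = d by omega] at h1
    have h2 := Submodule.smul_mem _ r h1
    convert h2 using 1
    rw [MvPolynomial.monomial_eq, Finsupp.prod_fintype _ _ (by simp)]
    simp [Fin.prod_univ_four, pr, lam, xx, MvPolynomial.smul_eq_C_mul, mul_assoc]

lemma G_wh (i j : Fin 3) : IsWeightedHomogeneous w (G i j) 2 := by
  have h0 : IsWeightedHomogeneous w lam 2 := isWeightedHomogeneous_X ℂ w 0
  have hx : ∀ i, IsWeightedHomogeneous w (xx i) 1 := by
    intro i
    have := isWeightedHomogeneous_X ℂ w i.succ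
    have e : w i.succ = 1 := by fin_cases i <;> rfl
    rwa [e] at this
  unfold G
  refine IsWeightedHomogeneous.add ?_ ((hx i).mul (hx j))
  split_ifs
  · exact h0
  · exact isWeightedHomogeneous_zero _ _ _

lemma S_le (d : ℕ) : S d ≤ weightedHomogeneousSubmodule ℂ w (2 * d) := by
  rintro _ ⟨p, hp, rfl⟩
  change IsWeightedHomogeneous 1 p d at hp
  induction hp using IsWeightedHomogeneous.induction_on with
  | zero => simp
  | add p q _ _ h1 h2 => rw [map_add]; exact Submodule.add_mem _ h1 h2
  | monomial s r hs =>
    rw [Finsupp.weight_apply, Finsupp.sum_fintype _ _ (by simp)] at hs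
    simp only [AlgHom.toLinearMap_apply, phi, aeval_monomial, mem_weightedHomogeneousSubmodule]
    rw [Finsupp.prod_fintype _ _ (by simp)]
    refine IsWeightedHomogeneous.C_mul ?_ r
    have := IsWeightedHomogeneous.prod (w := w) Finset.univ
      (fun i : Idx => G i.1.1 i.1.2 ^ s i) (fun i => s i * 2)
      (fun i _ => by simpa using (G_wh i.1.1 i.1.2).pow (s i))
    convert this using 1
    rw [← hs, ← Finset.sum_mul]
    simp [mul_comm]

noncomputable def P : Fin 4 → ℂ := ![1, 0, 0, 0]

noncomputable def D (f : MvPolynomial (Fin 4) ℂ) : ℂ :=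
  2 * eval P (pderiv 0 f) - ∑ i : Fin 3, eval P (pderiv i.succ (pderiv i.succ f))

lemma D_mul_G (f : MvPolynomial (Fin 4) ℂ) (i j : Fin 3) :
    D (f * G i j) = D f * eval P (G i j) := by
  unfold D G lam xx
  fin_cases i <;> fin_cases j <;>
    simp [Fin.sum_univ_three, P, pderiv_X, Pi.single_apply] <;> ring

lemma D_phi (p : MvPolynomial Idx ℂ) : D (phi p) = 0 := by
  induction p using MvPolynomial.induction_on with
  | C a => simp [phi, D, algebraMap_eq]
  | add p q hp hq =>
    have : D (phi (p + q)) = D (phi p) + D (phi q) := by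
      simp only [D, map_add, Finset.sum_add_distrib]; ring
    rw [this, hp, hq, add_zero]
  | mul_X p i hp =>
    have : phi (X i) = G i.1.1 i.1.2 := by simp [phi]
    rw [map_mul, this, D_mul_G, hp, zero_mul]

lemma D_lam (d : ℕ) : D (lam ^ d) = 2 * d := by
  simp [D, lam, P, pderiv_X, Derivation.leibniz_pow]

instance (d : ℕ) : FiniteDimensional ℂ (weightedHomogeneousSubmodule ℂ w d) :=
  Module.Finite.iff_fg.mpr (weightedHomogeneousSubmodule_fg (R := ℂ) w
    (by intro i; fin_cases i <;> simp [w]) d)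

instance (d : ℕ) : FiniteDimensional ℂ (homogeneousSubmodule Idx ℂ d) :=
  Module.Finite.iff_fg.mpr (homogeneousSubmodule_fg _ _ d)

instance (d : ℕ) : FiniteDimensional ℂ (S d) := by unfold S; infer_instance

lemma sup_eq (d : ℕ) : S d ⊔ Submodule.span ℂ {lam ^ d} =
    weightedHomogeneousSubmodule ℂ w (2 * d) := by
  refine le_antisymm (sup_le (S_le d) ?_) (V_le d)
  rw [Submodule.span_singleton_le_iff_mem]
  have : IsWeightedHomogeneous w lam 2 := isWeightedHomogeneous_X ℂ w 0
  simpa [mul_comm] using this.pow d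

lemma finrank_S_zero : Module.finrank ℂ (S 0) =
    Module.finrank ℂ (weightedHomogeneousSubmodule ℂ w (2 * 0)) := by
  rw [← sup_eq, sup_eq_left.mpr]
  rw [Submodule.span_singleton_le_iff_mem]
  simpa using one_mem_S

lemma finrank_S_succ (d : ℕ) : Module.finrank ℂ (S (d + 1)) + 1 =
    Module.finrank ℂ (weightedHomogeneousSubmodule ℂ w (2 * (d + 1))) := by
  rw [← sup_eq]
  have h := Submodule.finrank_sup_add_finrank_inf_eq (S (d + 1))
    (Submodule.span ℂ {lam ^ (d + 1)})
  have hl : lam ^ (d + 1) ∉ S (d + 1) := by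
    rintro ⟨p, -, hp⟩
    have h1 := D_phi p
    rw [AlgHom.toLinearMap_apply] at hp
    rw [hp, D_lam] at h1
    norm_cast at h1
  have h0 : lam ^ (d + 1) ≠ 0 := fun h => hl (h ▸ Submodule.zero_mem _)
  have hinf : S (d + 1) ⊓ Submodule.span ℂ {lam ^ (d + 1)} = ⊥ := by
    rw [← disjoint_iff]
    exact (Submodule.disjoint_span_singleton' h0).mpr hl
  rw [hinf, finrank_bot, finrank_span_singleton h0] at h
  omega

lemma finrank_V (d : ℕ) : Module.finrank ℂ (weightedHomogeneousSubmodule ℂ w (2 * d)) =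
    ∑ k ∈ Finset.range (d + 1), ∑ a ∈ Finset.range (2 * k + 1), (2 * k - a + 1) := by
  rw [weightedHomogeneousSubmodule_eq_finsupp_supported]
  have h1 := Module.finrank_eq_nat_card_basis
    (basisRestrictSupport ℂ {s : Fin 4 →₀ ℕ | Finsupp.weight w s = 2 * d})
  refine h1.trans ?_
  let A : Finset (Σ _ : ℕ, Σ _ : ℕ, ℕ) := (Finset.range (d + 1)).sigma
    (fun k => (Finset.range (2 * k + 1)).sigma (fun a => Finset.range (2 * k - a + 1)))
  let F : (Σ _ : ℕ, Σ _ : ℕ, ℕ) → (Fin 4 →₀ ℕ) := fun t =>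
    Finsupp.equivFunOnFinite.symm ![d - t.1, t.2.1, t.2.2, 2 * t.1 - t.2.1 - t.2.2]
  have hA : A.card = ∑ k ∈ Finset.range (d + 1), ∑ a ∈ Finset.range (2 * k + 1), (2 * k - a + 1) := by
    simp [A, Finset.card_sigma]
  have himg : {s : Fin 4 →₀ ℕ | Finsupp.weight w s = 2 * d} = F '' A := by
    ext s
    simp only [Set.mem_ofPred_eq, Set.mem_image, Finset.mem_coe]
    rw [Finsupp.weight_apply, Finsupp.sum_fintype _ _ (by simp)]
    simp only [Fin.sum_univ_four, w, smul_eq_mul]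
    constructor
    · intro hs
      simp at hs
      refine ⟨⟨d - s 0, s 1, s 2⟩, ?_, ?_⟩
      · simp [A]; omega
      · ext i
        fin_cases i <;> simp [F] <;> omega
    · rintro ⟨⟨k, a, b⟩, ht, rfl⟩
      simp [A] at ht
      simp [F]; omega
  have hinj : Set.InjOn F A := by
    rintro ⟨k, a, b⟩ ht ⟨k', a', b'⟩ ht' h
    simp [A] at ht ht'
    have e0 := DFunLike.congr_fun h 0
    have e1 := DFunLike.congr_fun h 1
    have e2 := DFunLike.congr_fun h 2
    simp [F] at e0 e1 e2
    obtain rfl : k = k' := by omega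
    subst e1 e2
    rfl
  rw [himg, ← hA, Nat.card_coe_set_eq, hinj.ncard_image, Set.ncard_coe_finset]

lemma finrank_V' (d : ℕ) :
    (Module.finrank ℂ (weightedHomogeneousSubmodule ℂ w (2 * d)) : ℚ) =
    (d + 1) * (4 * d ^ 2 + 11 * d + 6) / 6 := by
  have h1 : ∀ n : ℕ, ((∑ a ∈ Finset.range (n + 1), (n - a + 1) : ℕ) : ℚ) = (n + 1) * (n + 2) / 2 := by
    intro n
    have := Finset.sum_range_reflect (fun i => i + 1) (n + 1)
    simp only [Nat.add_sub_cancel] at this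
    have h2 : ∑ a ∈ Finset.range (n + 1), (n - a + 1) = ∑ a ∈ Finset.range (n + 1), (a + 1) := by
      rw [← this]
    rw [h2]
    clear this h2
    induction n with
    | zero => simp
    | succ n ih => rw [Finset.sum_range_succ, Nat.cast_add, ih]; push_cast; ring
  rw [finrank_V]
  induction d with
  | zero => simp
  | succ d ih =>
    rw [Finset.sum_range_succ, Nat.cast_add, ih, h1]; push_cast; ring


lemma mem_I_iff (W : Set (Matrix (Fin 3) (Fin 3) ℂ))
    (hW : W = {A | Aᵀ = A ∧ ¬ LinearIndependent ℂ (fun r : Fin 3 => A ^ (r : ℕ))})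
    (f : MvPolynomial Idx ℂ) :
    (∀ A ∈ W, MvPolynomial.eval (fun p : Idx => A p.1.1 p.1.2) f = 0) ↔ phi f = 0 := by
  have hev : ∀ y : Fin 4 → ℂ, eval y (phi f) =
      eval (fun p : Idx => (if p.1.1 = p.1.2 then y 0 else 0) + y p.1.1.succ * y p.1.2.succ) f := by
    intro y
    have : (eval y).comp (phi : MvPolynomial Idx ℂ →+* MvPolynomial (Fin 4) ℂ) =
        eval (fun p : Idx =>
          (if p.1.1 = p.1.2 then y 0 else 0) + y p.1.1.succ * y p.1.2.succ) := by
      apply MvPolynomial.ringHom_ext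
      · intro r; simp [phi, algebraMap_eq]
      · intro p
        simp only [RingHom.comp_apply, RingHom.coe_coe, phi, aeval_X, G, lam, xx, eval_X, map_add,
          map_mul]
        split_ifs <;> simp
    exact congrFun (congrArg DFunLike.coe this) f
  subst hW
  constructor
  · intro h
    apply MvPolynomial.funext
    intro y
    rw [hev, map_zero]
    exact h (Matrix.of fun i j => (if i = j then y 0 else 0) + y i.succ * y j.succ)
      ((mem_W_iff _).mpr ⟨y 0, fun i => y i.succ, fun i j => rfl⟩)
  · intro h A hA
    obtain ⟨c, v, hcv⟩ := (mem_W_iff A).mp hA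
    have := hev (Fin.cons c v)
    rw [h, map_zero] at this
    simp only [Fin.cons_zero, Fin.cons_succ, ← hcv] at this
    exact this.symm

lemma finrank_quot (I : Ideal (MvPolynomial Idx ℂ)) (hI : ∀ f, f ∈ I ↔ phi f = 0) (d : ℕ) :
    Module.finrank ℂ (homogeneousSubmodule Idx ℂ d) =
    Module.finrank ℂ (S d) + Module.finrank ℂ
      ↥(homogeneousSubmodule Idx ℂ d ⊓ Submodule.restrictScalars ℂ I) := by
  have h := LinearMap.finrank_range_add_finrank_ker
    (phi.toLinearMap.domRestrict (homogeneousSubmodule Idx ℂ d))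
  rw [LinearMap.range_domRestrict] at h
  rw [← h]
  congr 1
  have hmap : (LinearMap.ker (phi.toLinearMap.domRestrict (homogeneousSubmodule Idx ℂ d))).map
      (homogeneousSubmodule Idx ℂ d).subtype =
      homogeneousSubmodule Idx ℂ d ⊓ Submodule.restrictScalars ℂ I := by
    ext f
    simp only [Submodule.mem_map, LinearMap.mem_ker, Submodule.mem_inf,
      Submodule.restrictScalars_mem, hI]
    constructor
    · rintro ⟨⟨g, hg⟩, h1, rfl⟩
      exact ⟨hg, h1⟩
    · rintro ⟨h1, h2⟩
      exact ⟨⟨f, h1⟩, h2, rfl⟩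
  rw [← hmap]
  exact (Submodule.equivMapOfInjective _ (Submodule.injective_subtype _) _).finrank_eq

lemma series (h : ℕ → ℚ) (h0 : h 0 = 1)
    (h1 : ∀ d : ℕ, h (d + 1) = ((d : ℚ) + 2) * (4 * (d + 1) ^ 2 + 11 * (d + 1) + 6) / 6 - 1) :
    (1 - PowerSeries.X : PowerSeries ℚ) ^ 4 * PowerSeries.mk h =
      1 + 2 * PowerSeries.X + 3 * PowerSeries.X ^ 2 - 3 * PowerSeries.X ^ 3
        + PowerSeries.X ^ 4 := by
  have e : (1 - PowerSeries.X : PowerSeries ℚ) ^ 4 * PowerSeries.mk h =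
      PowerSeries.mk h - PowerSeries.C 4 * (PowerSeries.X ^ 1 * PowerSeries.mk h)
      + PowerSeries.C 6 * (PowerSeries.X ^ 2 * PowerSeries.mk h)
      - PowerSeries.C 4 * (PowerSeries.X ^ 3 * PowerSeries.mk h)
      + PowerSeries.X ^ 4 * PowerSeries.mk h := by
    simp only [map_ofNat]; ring
  have e' : (1 + 2 * PowerSeries.X + 3 * PowerSeries.X ^ 2 - 3 * PowerSeries.X ^ 3
        + PowerSeries.X ^ 4 : PowerSeries ℚ) =
      1 + PowerSeries.C 2 * PowerSeries.X ^ 1 + PowerSeries.C 3 * PowerSeries.X ^ 2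
        - PowerSeries.C 3 * PowerSeries.X ^ 3 + PowerSeries.X ^ 4 := by
    simp only [map_ofNat]; ring
  rw [e, e']
  ext n
  simp only [map_add, map_sub, PowerSeries.coeff_C_mul, PowerSeries.coeff_X_pow_mul',
    PowerSeries.coeff_mk, PowerSeries.coeff_X_pow, PowerSeries.coeff_one]
  match n with
  | 0 => simp [h0]
  | 1 => simp [h0, h1]; norm_num
  | 2 => simp [h0, h1 0, h1 1]; norm_num
  | 3 => simp [h0, h1 0, h1 1, h1 2]; norm_num
  | 4 => simp [h0, h1 0, h1 1, h1 2, h1 3]; norm_num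
  | n + 5 =>
    simp only [show n + 5 - 1 = n + 3 + 1 by omega, show n + 5 - 2 = n + 2 + 1 by omega,
      show n + 5 - 3 = n + 1 + 1 by omega, show n + 5 - 4 = n + 1 by omega,
      show n + 5 = n + 4 + 1 by omega, h1]
    simp
    ring

end HS12

/-- The Hilbert series of the coordinate ring of the variety of complex symmetric
`3×3` matrices with minimal polynomial of degree at most `2` is
`(1 + 2t + 3t² - 3t³ + t⁴) / (1-t)⁴`. -/
theorem stmt_12
    (W : Set (Matrix (Fin 3) (Fin 3) ℂ))
    (hW : W = {A | Aᵀ = A ∧ ¬ LinearIndependent ℂ (fun r : Fin 3 => A ^ (r : ℕ))})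
    (I : Ideal (MvPolynomial {p : Fin 3 × Fin 3 // p.1 ≤ p.2} ℂ))
    (hI : ∀ f : MvPolynomial {p : Fin 3 × Fin 3 // p.1 ≤ p.2} ℂ, f ∈ I ↔
      ∀ A ∈ W, MvPolynomial.eval (fun p => A p.1.1 p.1.2) f = 0)
    (h : ℕ → ℚ)
    (hh : ∀ d : ℕ, h d =
      (Module.finrank ℂ
        ↥(MvPolynomial.homogeneousSubmodule {p : Fin 3 × Fin 3 // p.1 ≤ p.2} ℂ d) : ℚ)
      - (Module.finrank ℂ
          ↥(MvPolynomial.homogeneousSubmodule {p : Fin 3 × Fin 3 // p.1 ≤ p.2} ℂ d ⊓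
            Submodule.restrictScalars ℂ I) : ℚ)) :
    (1 - PowerSeries.X : PowerSeries ℚ) ^ 4 * PowerSeries.mk h =
      1 + 2 * PowerSeries.X + 3 * PowerSeries.X ^ 2 - 3 * PowerSeries.X ^ 3
        + PowerSeries.X ^ 4 := by
  refine HS12.series h ?_ ?_
  · rw [hh, HS12.finrank_quot I (fun f => (hI f).trans (HS12.mem_I_iff W hW f)) 0,
      HS12.finrank_S_zero]
    have := HS12.finrank_V' 0
    push_cast
    rw [this]; norm_num
  · intro d
    rw [hh, HS12.finrank_quot I (fun f => (hI f).trans (HS12.mem_I_iff W hW f)) (d + 1)]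
    have h1 := HS12.finrank_V' (d + 1)
    rw [← HS12.finrank_S_succ] at h1
    push_cast at h1 ⊢
    linear_combination h1
end

section
/- Let n ≥ 2 and 0 ≤ k ≤ n−2. Let f ∈ MvPolynomial (Fin n × Fin n) ℂ be homogeneous of degree d with d < (n−k)(n−k−1), and suppose f is invariant under special unitary conjugation on Hermitian matrices: for every g in the special unitary group (g·g* = 1, det g = 1) and every Hermitian A ∈ Matrix (Fin n) (Fin n) ℂ, f(g·A·g*) = f(A). If f(A) = 0 for every Hermitian A whose powers A^0, A^1, …, A^{n−k−1} are linearly dependent over ℂ (i.e. A has at most n−k−1 distinct eigenvalues), then f(A) = 0 for every Hermitian matrix A. -/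
open MvPolynomial in
theorem line_derivative {n : ℕ} (p : MvPolynomial (Fin n) ℂ) (z v : Fin n → ℂ) :
    Polynomial.derivative (aeval (fun l => Polynomial.C (z l) + Polynomial.C (v l) * Polynomial.X) p)
    = ∑ l, Polynomial.C (v l) *
      aeval (fun l => Polynomial.C (z l) + Polynomial.C (v l) * Polynomial.X) (pderiv l p) := by
  induction p using MvPolynomial.induction_on with
  | C a => simp
  | add p q hp hq => simp [hp, hq, mul_add, Finset.sum_add_distrib]
  | mul_X p i hp =>
    have e : ∀ l, Polynomial.C (v l) *
        aeval (fun l => Polynomial.C (z l) + Polynomial.C (v l) * Polynomial.X)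
          (pderiv l (p * X i)) =
        (if i = l then Polynomial.C (v l) *
          aeval (fun l => Polynomial.C (z l) + Polynomial.C (v l) * Polynomial.X) p else 0) +
        (Polynomial.C (v l) *
          aeval (fun l => Polynomial.C (z l) + Polynomial.C (v l) * Polynomial.X) (pderiv l p)) *
          (Polynomial.C (z i) + Polynomial.C (v i) * Polynomial.X) := by
      intro l
      by_cases hl : i = l
      · subst hl
        simp [Derivation.leibniz]; ring
      · simp [Derivation.leibniz, hl, pderiv_X_of_ne hl]; ring
    rw [Finset.sum_congr rfl fun l _ => e l, Finset.sum_add_distrib, ← Finset.sum_mul, ← hp]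
    simp
    ring

open MvPolynomial in
theorem eval_line {n : ℕ} (p : MvPolynomial (Fin n) ℂ) (z v : Fin n → ℂ) (t : ℂ) :
    Polynomial.eval t (aeval (fun l => Polynomial.C (z l) + Polynomial.C (v l) * Polynomial.X) p)
    = eval (fun l => z l + v l * t) p := by
  induction p using MvPolynomial.induction_on with
  | C a => simp
  | add p q hp hq => simp [hp, hq]
  | mul_X p i hp => simp [hp]

open MvPolynomial in
theorem symm_real {n : ℕ} (p : MvPolynomial (Fin n) ℂ)
    (h : ∀ (σ : Equiv.Perm (Fin n)) (x : Fin n → ℝ),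
      eval (fun l => (x (σ l) : ℂ)) p = eval (fun l => (x l : ℂ)) p) (σ : Equiv.Perm (Fin n)) :
    rename σ p = p := by
  refine MvPolynomial.funext_set (fun _ => Set.range ((↑) : ℝ → ℂ))
    (fun _ => Set.infinite_range_of_injective Complex.ofReal_injective) ?_
  intro x hx
  have : ∀ i, ∃ y : ℝ, (y : ℂ) = x i := fun i => hx i (Set.mem_univ i)
  choose y hy using this
  obtain rfl : x = fun i => (y i : ℂ) := funext fun i => (hy i).symm
  rw [eval_rename]
  exact h σ y

open MvPolynomial in
theorem grad_zero {n m : ℕ} (p : MvPolynomial (Fin n) ℂ)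
    (hs : ∀ σ : Equiv.Perm (Fin n), rename σ p = p)
    (H : ∀ x : Fin n → ℝ, (Finset.univ.image x).card < m → eval (fun l => (x l : ℂ)) p = 0)
    (z : Fin n → ℝ) (hz : (Finset.univ.image z).card < m) (l : Fin n) :
    eval (fun l => (z l : ℂ)) (pderiv l p) = 0 := by
  classical
  have heq : ∀ l', z l' = z l → eval (fun l => (z l : ℂ)) (pderiv l' p)
      = eval (fun l => (z l : ℂ)) (pderiv l p) := by
    intro l' hl
    have h1 := pderiv_rename (R := ℂ) (f := Equiv.swap l l') (Equiv.injective _) l p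
    rw [hs, Equiv.swap_apply_left] at h1
    rw [h1, eval_rename]
    congr 2
    funext i
    simp only [Function.comp]
    by_cases h1 : i = l
    · simp [h1, hl]
    by_cases h2 : i = l'
    · simp [h2, hl]
    rw [Equiv.swap_apply_of_ne_of_ne h1 h2]
  set v : Fin n → ℂ := fun i => if z i = z l then 1 else 0 with hv
  have hzero : aeval (fun l => Polynomial.C (z l : ℂ) + Polynomial.C (v l) * Polynomial.X) p
      = 0 := by
    refine Polynomial.eq_zero_of_infinite_isRoot _ ?_
    refine Set.Infinite.mono ?_ (Set.infinite_range_of_injective Complex.ofReal_injective)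
    rintro _ ⟨t, rfl⟩
    simp only [Set.mem_ofPred_eq, Polynomial.IsRoot]
    rw [eval_line]
    have := H (fun i => z i + (if z i = z l then 1 else 0) * t) ?_
    · convert this using 3
      simp only [hv]; funext i; split_ifs <;> simp
    · refine lt_of_le_of_lt ?_ hz
      have : (fun i => z i + (if z i = z l then 1 else 0) * t) =
        (fun w => w + (if w = z l then 1 else 0) * t) ∘ z := rfl
      rw [this, ← Finset.image_image]
      exact Finset.card_image_le
  have hd := congrArg (Polynomial.eval 0) (line_derivative p (fun l => (z l : ℂ)) v)
  rw [hzero, Polynomial.eval_finsetSum] at hd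
  simp only [Polynomial.eval_mul, eval_line, Polynomial.eval_C, mul_zero, add_zero] at hd
  have h2 : ∑ x, v x * eval (fun l => (z l : ℂ)) (pderiv x p) =
      ∑ x, v x * eval (fun l => (z l : ℂ)) (pderiv l p) := by
    refine Finset.sum_congr rfl fun i _ => ?_
    simp only [hv]; split_ifs with h
    · rw [heq i h]
    · simp
  rw [h2, ← Finset.sum_mul] at hd
  simp only [map_zero, Polynomial.eval_zero] at hd
  have h3 : (∑ x, v x) ≠ 0 := by
    simp only [hv, Finset.sum_boole]
    exact_mod_cast (Finset.card_pos.2 ⟨l, by simp⟩).ne'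
  exact (mul_eq_zero.1 hd.symm).resolve_left h3

theorem double_roots (h : Polynomial ℂ) (T : Finset ℂ)
    (h0 : ∀ t ∈ T, h.eval t = 0) (h1 : ∀ t ∈ T, h.derivative.eval t = 0)
    (hd : h.natDegree < 2 * T.card) : h = 0 := by
  by_contra hne
  have : 2 • T.val ≤ h.roots := by
    rw [Multiset.le_iff_count]
    intro a
    rw [Multiset.count_nsmul, Polynomial.count_roots]
    by_cases ha : a ∈ T
    · have := (Polynomial.one_lt_rootMultiplicity_iff_isRoot hne).2 ⟨h0 a ha, h1 a ha⟩
      rw [Multiset.count_eq_one_of_mem T.nodup ha]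
      omega
    · rw [Multiset.count_eq_zero_of_notMem (by simpa using ha)]; simp
  have h2 := Multiset.card_le_card this
  have h3 := h.card_roots'
  simp at h2
  omega

/-- generic parameter -/
theorem exists_param (V : Finset ℝ) : ∃ s : ℝ,
    (∀ u ∈ V, ∀ v ∈ V, u < v → u^2+u*v+v^2 + s*(u+v) ≠ 0) ∧
    (∀ u ∈ V, ∀ v ∈ V, ∀ u' ∈ V, ∀ v' ∈ V, u < v → u' < v' →
      u^2+u*v+v^2 + s*(u+v) = u'^2+u'*v'+v'^2 + s*(u'+v') → u = u' ∧ v = v') := by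
  classical
  set B1 : Finset ℝ := (V ×ˢ V).image fun q => -(q.1^2+q.1*q.2+q.2^2)/(q.1+q.2)
  set B2 : Finset ℝ := ((V ×ˢ V) ×ˢ (V ×ˢ V)).image fun q =>
    ((q.2.1^2+q.2.1*q.2.2+q.2.2^2) - (q.1.1^2+q.1.1*q.1.2+q.1.2^2))/
      ((q.1.1+q.1.2) - (q.2.1+q.2.2))
  obtain ⟨s, hs⟩ := Infinite.exists_notMem_finset (B1 ∪ B2)
  rw [Finset.mem_union, not_or] at hs
  refine ⟨s, ?_, ?_⟩
  · intro u hu v hv huv h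
    by_cases h0 : u + v = 0
    · rw [h0] at h
      nlinarith [sq_pos_of_pos (sub_pos.2 huv)]
    · apply hs.1
      refine Finset.mem_image.2 ⟨(u,v), by simp [hu, hv], ?_⟩
      simp only
      rw [div_eq_iff h0]; linarith
  · intro u hu v hv u' hu' v' hv' huv huv' h
    by_cases h0 : (u + v) - (u' + v') = 0
    · have e : v' = u + v - u' := by linarith
      subst e
      have : (u - u') * (u' - v) = 0 := by nlinarith
      rcases mul_eq_zero.1 this with h | h
      · constructor <;> linarith
      · exfalso; linarith
    · exfalso
      apply hs.2
      refine Finset.mem_image.2 ⟨((u,v),(u',v')), by simp [hu, hv, hu', hv'], ?_⟩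
      simp only
      rw [div_eq_iff h0]; linarith

open MvPolynomial in
theorem vanish_step {n m : ℕ} (p : MvPolynomial (Fin n) ℂ)
    (hs : ∀ σ : Equiv.Perm (Fin n), rename σ p = p)
    (H : ∀ x : Fin n → ℝ, (Finset.univ.image x).card < m → eval (fun l => (x l : ℂ)) p = 0)
    (hdeg : p.totalDegree < m * (m - 1))
    (x : Fin n → ℝ) (hx : (Finset.univ.image x).card = m) :
    eval (fun l => (x l : ℂ)) p = 0 := by
  classical
  set V := Finset.univ.image x with hV
  obtain ⟨s, h1, h2⟩ := exists_param V
  set b : ℝ → ℝ := fun u => u^3 + s*u^2 with hb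
  set D : ℝ × ℝ → ℝ := fun q => q.1^2+q.1*q.2+q.2^2 + s*(q.1+q.2) with hD
  set h : Polynomial ℂ :=
    aeval (fun l => Polynomial.C (x l : ℂ) + Polynomial.C (b (x l) : ℂ) * Polynomial.X) p with hh
  set S := (V ×ˢ V).filter (fun q => q.1 < q.2) with hS
  have hScard : 2 * S.card = m * (m - 1) := by
    have e1 : V.offDiag = S ∪ (V ×ˢ V).filter (fun q => q.2 < q.1) := by
      ext q; simp only [hS, Finset.mem_offDiag, Finset.mem_union, Finset.mem_filter,
        Finset.mem_product]
      have := @lt_or_lt_iff_ne _ _ q.1 q.2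
      tauto
    have e2 : ((V ×ˢ V).filter (fun q => q.2 < q.1)).card = S.card := by
      refine Finset.card_bij (fun q _ => q.swap) ?_ ?_ ?_
      · simp [hS]; tauto
      · intro a _ b _ h; exact Prod.swap_injective h
      · intro a ha; refine ⟨a.swap, ?_, by simp⟩
        simp [hS] at ha ⊢; tauto
    have e3 := congrArg Finset.card e1
    rw [Finset.card_union_of_disjoint, e2, Finset.offDiag_card, hx] at e3
    · rw [Nat.mul_sub, mul_one]; omega
    · rw [Finset.disjoint_left]
      intro a ha hb
      simp [hS] at ha hb
      linarith
  set T : Finset ℂ := S.image fun q => ((-(D q)⁻¹ : ℝ) : ℂ) with hT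
  have hTcard : T.card = S.card := by
    apply Finset.card_image_of_injOn
    intro q hq q' hq' hqq
    simp only [hS, Finset.coe_filter, Finset.mem_product, Set.mem_ofPred_eq] at hq hq'
    have : D q = D q' := inv_injective (neg_injective (Complex.ofReal_injective hqq))
    have := h2 _ hq.1.1 _ hq.1.2 _ hq'.1.1 _ hq'.1.2 hq.2 hq'.2 this
    exact Prod.ext this.1 this.2
  have key : ∀ q ∈ S, (Finset.univ.image (fun l => x l + b (x l) * (-(D q)⁻¹))).card < m := by
    intro q hq
    simp only [hS, Finset.mem_filter, Finset.mem_product] at hq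
    have hne := h1 _ hq.1.1 _ hq.1.2 hq.2
    change D q ≠ 0 at hne
    have : (fun l => x l + b (x l) * (-(D q)⁻¹)) = (fun u => u + b u * (-(D q)⁻¹)) ∘ x := rfl
    rw [this, ← Finset.image_image, ← hV, ← hx]
    refine lt_of_le_of_ne Finset.card_image_le fun hc => ?_
    rw [Finset.card_image_iff] at hc
    refine hq.2.ne (hc hq.1.1 hq.1.2 ?_)
    simp only
    field_simp
    simp only [hb, hD]
    ring
  have hz : h = 0 := by
    apply double_roots h T
    · intro t ht
      obtain ⟨q, hq, rfl⟩ := Finset.mem_image.1 ht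
      rw [hh, eval_line, ← H _ (key q hq)]
      congr 2; funext l; push_cast; rfl
    · intro t ht
      obtain ⟨q, hq, rfl⟩ := Finset.mem_image.1 ht
      rw [hh, line_derivative, Polynomial.eval_finsetSum]
      refine Finset.sum_eq_zero fun l _ => ?_
      rw [Polynomial.eval_mul, eval_line]
      have := grad_zero p hs H _ (key q hq) l
      push_cast at this ⊢
      rw [this, mul_zero]
    · rw [hTcard, hScard]
      refine lt_of_le_of_lt ?_ hdeg
      have := MvPolynomial.aeval_natDegree_le p le_rfl
        (fun l => Polynomial.C (x l : ℂ) + Polynomial.C (b (x l) : ℂ) * Polynomial.X) (n := 1)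
        (fun i => by rw [add_comm]; exact Polynomial.natDegree_linear_le)
      simpa using this
  have := eval_line p (fun l => (x l : ℂ)) (fun l => (b (x l) : ℂ)) 0
  rw [← hh, hz] at this
  simpa using this.symm

open MvPolynomial in
theorem vanish_all {n m : ℕ} (p : MvPolynomial (Fin n) ℂ)
    (hs : ∀ σ : Equiv.Perm (Fin n), rename σ p = p)
    (H : ∀ x : Fin n → ℝ, (Finset.univ.image x).card < m → eval (fun l => (x l : ℂ)) p = 0)
    (hdeg : p.totalDegree < m * (m - 1))
    (x : Fin n → ℝ) : eval (fun l => (x l : ℂ)) p = 0 := by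
  have : ∀ j, ∀ x : Fin n → ℝ, (Finset.univ.image x).card < m + j →
      eval (fun l => (x l : ℂ)) p = 0 := by
    intro j
    induction j with
    | zero => simpa using H
    | succ j ih =>
      intro x hx
      rcases Nat.lt_succ_iff_lt_or_eq.1 hx with h | h
      · exact ih x h
      · refine vanish_step p hs ih (hdeg.trans_le ?_) x h
        exact Nat.mul_le_mul (by omega) (by omega)
  exact this ((Finset.univ.image x).card + 1) x (by omega)

theorem dep_powers {n m : ℕ} (x : Fin n → ℝ) (hx : (Finset.univ.image x).card < m) :
    ¬ LinearIndependent ℂ (fun r : Fin m =>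
      (Matrix.diagonal (fun l => (x l : ℂ))) ^ (r : ℕ)) := by
  intro hli
  rw [Fintype.linearIndependent_iff] at hli
  set Q : Polynomial ℂ := ∏ v ∈ Finset.univ.image x, (Polynomial.X - Polynomial.C (v : ℂ)) with hQ
  have hQm : Q.Monic := Polynomial.monic_prod_of_monic _ _ fun _ _ => Polynomial.monic_X_sub_C _
  have hQd : Q.natDegree = (Finset.univ.image x).card := by
    rw [hQ, Polynomial.natDegree_prod_of_monic _ _ fun _ _ => Polynomial.monic_X_sub_C _]
    simp
  have h0 := hli (fun r => Q.coeff r) ?_ ⟨_, hx⟩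
  · simp only [← hQd] at h0
    rw [Polynomial.coeff_natDegree, hQm.leadingCoeff] at h0
    exact one_ne_zero h0
  · simp only [Matrix.diagonal_pow]
    ext i j
    by_cases hij : i = j
    · subst hij
      rw [Matrix.sum_apply]
      simp only [Matrix.smul_apply, Matrix.diagonal_apply_eq, Pi.pow_apply, smul_eq_mul,
        Matrix.zero_apply]
      rw [Fin.sum_univ_eq_sum_range (fun r => Q.coeff r * (x i : ℂ) ^ r) m,
        ← Polynomial.eval_eq_sum_range' (hQd ▸ hx), hQ, Polynomial.eval_prod]
      exact Finset.prod_eq_zero (Finset.mem_image_of_mem x (Finset.mem_univ i)) (by simp)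
    · rw [Matrix.sum_apply]
      simp [Matrix.diagonal_apply_ne _ hij]

open Matrix in
theorem unitary_inv {n : ℕ} (hn : 2 ≤ n) (f : MvPolynomial (Fin n × Fin n) ℂ)
    (hinv : ∀ g : Matrix (Fin n) (Fin n) ℂ, g * g.conjTranspose = 1 → g.det = 1 →
      ∀ A : Matrix (Fin n) (Fin n) ℂ, A.IsHermitian →
        MvPolynomial.eval (fun p => (g * A * g.conjTranspose) p.1 p.2) f =
          MvPolynomial.eval (fun p => A p.1 p.2) f)
    (U : Matrix (Fin n) (Fin n) ℂ) (hU : U * Uᴴ = 1) (x : Fin n → ℝ) :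
    MvPolynomial.eval (fun p => (U * diagonal (fun l => (x l : ℂ)) * Uᴴ) p.1 p.2) f =
      MvPolynomial.eval (fun p => (diagonal (fun l => (x l : ℂ))) p.1 p.2) f := by
  set i0 : Fin n := ⟨0, by omega⟩
  have hdet : U.det * star U.det = 1 := by
    rw [← det_conjTranspose, ← det_mul, hU, det_one]
  set e : Fin n → ℂ := fun i => if i = i0 then star U.det else 1 with he
  have hee : ∀ i, e i * star (e i) = 1 := by
    intro i; simp only [he]; split_ifs
    · rw [star_star, mul_comm]; exact hdet
    · simp
  have hg : (diagonal e) * (diagonal e)ᴴ = 1 := by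
    rw [diagonal_conjTranspose, diagonal_mul_diagonal, ← diagonal_one]
    congr 1; funext i; exact hee i
  have h1 := hinv (U * diagonal e) ?_ ?_ (diagonal (fun l => (x l : ℂ))) ?_
  · rw [← h1]
    have : U * diagonal e * diagonal (fun l => (x l : ℂ)) * (U * diagonal e)ᴴ
        = U * diagonal (fun l => (x l : ℂ)) * Uᴴ := by
      have h3 : diagonal e * diagonal (fun l => (x l : ℂ)) * (diagonal e)ᴴ
          = diagonal (fun l => (x l : ℂ)) := by
        rw [diagonal_conjTranspose, diagonal_mul_diagonal, diagonal_mul_diagonal]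
        congr 1; funext i
        have := hee i
        simp only [Pi.star_apply]
        linear_combination (x i : ℂ) * this
      rw [conjTranspose_mul]
      conv_rhs => rw [← h3]
      simp only [Matrix.mul_assoc]
    rw [this]
  · rw [conjTranspose_mul, Matrix.mul_assoc, ← Matrix.mul_assoc (diagonal e), hg,
      Matrix.one_mul, hU]
  · rw [det_mul, det_diagonal]
    simp only [he]
    rw [Finset.prod_ite_eq' Finset.univ i0]
    simpa using hdet
  · rw [Matrix.IsHermitian, diagonal_conjTranspose]
    congr 1; funext i; simp

open Matrix in
theorem eval_diag {n : ℕ} (f : MvPolynomial (Fin n × Fin n) ℂ) (x : Fin n → ℝ) :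
    MvPolynomial.eval (fun l => (x l : ℂ)) (MvPolynomial.aeval (fun q : Fin n × Fin n =>
      if q.1 = q.2 then (MvPolynomial.X q.1 : MvPolynomial (Fin n) ℂ) else 0) f) =
      MvPolynomial.eval (fun q => (diagonal (fun l => (x l : ℂ))) q.1 q.2) f := by
  induction f using MvPolynomial.induction_on with
  | C a => simp
  | add p q hp hq => simp only [map_add, hp, hq]
  | mul_X p i hp =>
    simp only [map_mul, hp, MvPolynomial.aeval_X, MvPolynomial.eval_X, diagonal_apply]
    split_ifs <;> simp

open Matrix

/-- For `n ≥ 2`, `0 ≤ k ≤ n-2`: a homogeneous `SU(n)`-invariant polynomial of degree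
`d < (n-k)(n-k-1)` vanishing on all Hermitian matrices with at most `n-k-1` distinct
eigenvalues vanishes on all Hermitian matrices. -/
theorem stmt_14 (n k : ℕ) (hn : 2 ≤ n) (hk : k ≤ n - 2)
    (f : MvPolynomial (Fin n × Fin n) ℂ) (d : ℕ)
    (hf : f.IsHomogeneous d) (hd : d < (n - k) * (n - k - 1))
    (hinv : ∀ g : Matrix (Fin n) (Fin n) ℂ, g * g.conjTranspose = 1 → g.det = 1 →
      ∀ A : Matrix (Fin n) (Fin n) ℂ, A.IsHermitian →
        MvPolynomial.eval (fun p => (g * A * g.conjTranspose) p.1 p.2) f =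
          MvPolynomial.eval (fun p => A p.1 p.2) f)
    (hvan : ∀ A : Matrix (Fin n) (Fin n) ℂ, A.IsHermitian →
      ¬ LinearIndependent ℂ (fun r : Fin (n - k) => A ^ (r : ℕ)) →
      MvPolynomial.eval (fun p => A p.1 p.2) f = 0) :
    ∀ A : Matrix (Fin n) (Fin n) ℂ, A.IsHermitian →
      MvPolynomial.eval (fun p => A p.1 p.2) f = 0 := by
  intro A hA
  set p : MvPolynomial (Fin n) ℂ :=
    MvPolynomial.aeval (fun q : Fin n × Fin n =>
      if q.1 = q.2 then (MvPolynomial.X q.1 : MvPolynomial (Fin n) ℂ) else 0) f with hp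
  have hpe : ∀ x : Fin n → ℝ, MvPolynomial.eval (fun l => (x l : ℂ)) p =
      MvPolynomial.eval (fun q => (diagonal (fun l => (x l : ℂ))) q.1 q.2) f := by
    intro x
    rw [hp]
    exact eval_diag f x
  have hpd : p.totalDegree ≤ d := by
    have : p.IsHomogeneous (1 * d) := by
      refine hf.aeval _ fun q => ?_
      split_ifs
      · exact MvPolynomial.isHomogeneous_X _ _
      · exact MvPolynomial.isHomogeneous_zero _ _ _
    simpa using this.totalDegree_le
  have hsym := symm_real p (by
    intro σ x
    rw [hpe, hpe, ← unitary_inv hn f hinv (σ.permMatrix ℂ) ?_ x]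
    · congr 2
      funext q
      rw [conjTranspose_permMatrix, Equiv.Perm.permMatrix, Equiv.Perm.permMatrix,
        PEquiv.toMatrix_toPEquiv_mul, PEquiv.mul_toMatrix_toPEquiv,
        show (Equiv.symm σ⁻¹) = σ from rfl]
      by_cases h : q.1 = q.2
      · simp [h]
      · have h' : σ q.1 ≠ σ q.2 := fun hc => h (σ.injective hc)
        simp [h, diagonal_apply]
    · rw [conjTranspose_permMatrix, ← permMatrix_mul]
      simp)
  have hall := vanish_all p hsym (m := n - k) (fun x hx => by
      rw [hpe]
      refine hvan _ ?_ (dep_powers x hx)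
      rw [Matrix.IsHermitian, diagonal_conjTranspose]
      congr 1; funext i; simp) (hpd.trans_lt hd)
  have hspec := hA.spectral_theorem
  rw [Unitary.conjStarAlgAut_apply] at hspec
  have hU : (hA.eigenvectorUnitary : Matrix (Fin n) (Fin n) ℂ) *
    (hA.eigenvectorUnitary : Matrix (Fin n) (Fin n) ℂ)ᴴ = 1 :=
    Unitary.coe_mul_star_self hA.eigenvectorUnitary
  have h5 := unitary_inv hn f hinv _ hU hA.eigenvalues
  rw [← hpe, hall] at h5
  rw [← h5]
  congr 2
  funext q
  exact congrFun (congrFun hspec q.1) q.2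
end

section
/- Let n ≥ 2 and 0 ≤ k ≤ n−2. Let f ∈ MvPolynomial (Fin n × Fin n) ℂ be homogeneous of degree exactly (n−k)(n−k−1), invariant under special unitary conjugation on Hermitian matrices (f(g·A·g*) = f(A) for all g with g·g* = 1, det g = 1, and all Hermitian A), and suppose f(A) = 0 for every Hermitian A with at most n−k−1 distinct eigenvalues (equivalently, A^0, …, A^{n−k−1} linearly dependent). Then there exists a constant c ∈ ℂ such that for every Hermitian A with eigenvalues λ₁(A), …, λ_n(A) (listed with multiplicity), f(A) = c · Σ_{1≤i₁<⋯<i_{n−k}≤n} ∏_{1≤s<t≤n−k} (λ_{i_s}(A) − λ_{i_t}(A))². -/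
namespace SubDisc
open MvPolynomial Finset

variable {n : ℕ}

/-- The map identifying `j` with `i`. -/
def mg (i j : Fin n) : Fin n → Fin n := Function.update id j i

lemma mg_j (i j : Fin n) : mg i j j = i := by simp [mg]
lemma mg_ne (i j k : Fin n) (h : k ≠ j) : mg i j k = k := by simp [mg, h]
lemma mg_i (i j : Fin n) : mg i j i = i := by
  by_cases h : i = j
  · subst h; simp [mg]
  · simp [mg, h]

lemma mg_eq_iff (i j a b : Fin n) (hab : a ≠ b) (h : mg i j a = mg i j b) :
    (a = i ∧ b = j) ∨ (a = j ∧ b = i) := by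
  by_cases ha : a = j
  · subst ha
    rw [mg_j, mg_ne _ _ _ hab.symm] at h
    exact Or.inr ⟨rfl, h.symm⟩
  · by_cases hb : b = j
    · subst hb
      rw [mg_j, mg_ne _ _ _ ha] at h
      exact Or.inl ⟨h, rfl⟩
    · rw [mg_ne _ _ _ ha, mg_ne _ _ _ hb] at h
      exact absurd h hab

lemma pderiv_rename_sum (π : Fin n → Fin n) (a : Fin n) (q : MvPolynomial (Fin n) ℂ) :
    pderiv a (rename π q) = ∑ k with π k = a, rename π (pderiv k q) := by
  induction q using MvPolynomial.induction_on with
  | C c => simp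
  | add p q hp hq => simp only [map_add, hp, hq, Finset.sum_add_distrib]
  | mul_X p i hp =>
    simp only [map_mul, rename_X, Derivation.leibniz, smul_eq_mul, map_add, hp,
      Finset.sum_add_distrib, ← Finset.mul_sum]
    congr 2
    by_cases h : π i = a
    · subst h
      rw [pderiv_X_self, Finset.sum_eq_single i]
      · simp
      · intro b _ hb
        rw [pderiv_X_of_ne hb.symm, map_zero]
      · simp
    · rw [pderiv_X_of_ne h, Finset.sum_eq_zero]
      intro b hb
      rw [pderiv_X_of_ne, map_zero]
      rintro rfl
      simp at hb
      exact h hb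

lemma sub_dvd_sub (i j : Fin n) (q : MvPolynomial (Fin n) ℂ) :
    X i - X j ∣ q - rename (mg i j) q := by
  induction q using MvPolynomial.induction_on with
  | C c => simp
  | add p q hp hq =>
    rw [map_add, add_sub_add_comm]
    exact dvd_add hp hq
  | mul_X p k hp =>
    rw [map_mul, rename_X]
    have h : X i - X j ∣ (X k - X (mg i j k) : MvPolynomial (Fin n) ℂ) := by
      by_cases hk : k = j
      · subst hk
        rw [mg_j]
        exact ⟨-1, by ring⟩
      · rw [mg_ne _ _ _ hk, sub_self]; exact dvd_zero _
    have : p * X k - rename (mg i j) p * X (mg i j k)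
      = (p - rename (mg i j) p) * X k + rename (mg i j) p * (X k - X (mg i j k)) := by ring
    rw [this]
    exact dvd_add (Dvd.dvd.mul_right hp _) (Dvd.dvd.mul_left h _)

lemma rename_mg_sub (i j : Fin n) :
    rename (mg i j) (X i - X j : MvPolynomial (Fin n) ℂ) = 0 := by
  simp [mg_i, mg_j]

lemma dvd_iff (i j : Fin n) (q : MvPolynomial (Fin n) ℂ) :
    X i - X j ∣ q ↔ rename (mg i j) q = 0 := by
  constructor
  · rintro ⟨r, rfl⟩
    rw [map_mul, rename_mg_sub, zero_mul]
  · intro h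
    simpa [h] using sub_dvd_sub i j q

lemma sub_ne_zero' (i j : Fin n) (h : i ≠ j) : (X i - X j : MvPolynomial (Fin n) ℂ) ≠ 0 := by
  rw [sub_ne_zero]
  exact fun h' => h (X_injective h')

lemma prime_sub (i j : Fin n) (h : i ≠ j) : Prime (X i - X j : MvPolynomial (Fin n) ℂ) := by
  refine ⟨sub_ne_zero' i j h, ?_, ?_⟩
  · intro hu
    have := (dvd_iff i j 1).1 hu.dvd
    simp at this
  · intro a b hab
    simp only [dvd_iff, map_mul, mul_eq_zero] at *
    exact hab

/-- ordered pairs in s -/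
def prs (s : Finset (Fin n)) : Finset (Fin n × Fin n) := s.offDiag.filter (fun p => p.1 < p.2)

lemma mem_prs (s : Finset (Fin n)) (p) : p ∈ prs s ↔ p.1 ∈ s ∧ p.2 ∈ s ∧ p.1 < p.2 := by
  simp only [prs, mem_filter, mem_offDiag]
  constructor
  · rintro ⟨⟨a, b, c⟩, d⟩; exact ⟨a, b, d⟩
  · rintro ⟨a, b, d⟩; exact ⟨⟨a, b, d.ne⟩, d⟩

/-- The discriminant on the variables in `s`. -/
noncomputable def D (s : Finset (Fin n)) : MvPolynomial (Fin n) ℂ :=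
  ∏ p ∈ prs s, (X p.1 - X p.2) ^ 2

lemma offDiag_prod {M : Type*} [CommMonoid M] (s : Finset (Fin n)) (g : Fin n × Fin n → M) :
    ∏ p ∈ s.offDiag, g p = ∏ p ∈ prs s, (g p * g p.swap) := by
  rw [Finset.prod_mul_distrib, ← Finset.prod_filter_mul_prod_filter_not s.offDiag (fun p => p.1 < p.2)]
  congr 1
  refine Finset.prod_bij' (fun p _ => p.swap) (fun p _ => p.swap) ?_ ?_ ?_ ?_ ?_
  · rintro ⟨a, b⟩ h
    simp [mem_prs] at h ⊢
    exact ⟨h.1.2.1, h.1.1, lt_of_le_of_ne h.2 (Ne.symm h.1.2.2)⟩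
  · rintro ⟨a, b⟩ h
    simp [mem_prs] at h ⊢
    exact ⟨⟨h.2.1, h.1, h.2.2.ne'⟩, h.2.2.le⟩
  · simp
  · simp
  · simp

lemma card_prs (s : Finset (Fin n)) : 2 * (prs s).card = s.card * (s.card - 1) := by
  have := offDiag_prod s (fun _ => Multiplicative.ofAdd (1:ℕ))
  have h2 := congrArg Multiplicative.toAdd this
  simp [offDiag_card] at h2
  rw [Nat.mul_sub, mul_one, h2, mul_comm]

lemma prod_eq_D (s : Finset (Fin n)) :
    ∏ p ∈ s.offDiag, (X p.1 - X p.2) = (-1 : MvPolynomial (Fin n) ℂ) ^ (prs s).card * D s := by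
  rw [offDiag_prod s (fun p => (X p.1 - X p.2 : MvPolynomial (Fin n) ℂ)), D, ← Finset.prod_const,
    ← Finset.prod_mul_distrib]
  refine Finset.prod_congr rfl fun p _ => ?_
  simp only [Prod.fst_swap, Prod.snd_swap]
  ring

lemma D_hom (s : Finset (Fin n)) : (D s).IsHomogeneous (s.card * (s.card - 1)) := by
  rw [← card_prs]
  have := IsHomogeneous.prod (prs s) (fun p => (X p.1 - X p.2 : MvPolynomial (Fin n) ℂ)^2)
    (fun _ => 2) (fun p _ => by
      simpa using ((isHomogeneous_X ℂ p.1).sub (isHomogeneous_X ℂ p.2)).pow 2)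
  simpa [D, mul_comm] using this

lemma D_ne_zero (s : Finset (Fin n)) : D s ≠ 0 := by
  rw [D, Finset.prod_ne_zero_iff]
  intro p hp
  exact pow_ne_zero _ (sub_ne_zero' _ _ ((mem_prs _ _).1 hp).2.2.ne)

/-- vanishing on points with at most `l` distinct coordinates -/
def V (p : MvPolynomial (Fin n) ℂ) (l : ℕ) : Prop :=
  ∀ π : Fin n → Fin n, (univ.image π).card ≤ l → rename π p = 0

lemma comp_swap (ρ : Fin n → Fin n) (k k' : Fin n) (h : ρ k = ρ k') :
    ρ ∘ (Equiv.swap k k') = ρ := by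
  funext x
  simp only [Function.comp_apply, Equiv.swap_apply_def]
  split_ifs with h1 h2
  · rw [h1, h]
  · rw [h2, h]
  · rfl

lemma sym_rename {p : MvPolynomial (Fin n) ℂ} (hp : p.IsSymmetric) (ρ : Fin n → Fin n)
    (k k' : Fin n) (h : ρ k = ρ k') : rename ρ (pderiv k p) = rename ρ (pderiv k' p) := by
  have h1 : pderiv (Equiv.swap k k' k) (rename (Equiv.swap k k') p)
     = rename (Equiv.swap k k') (pderiv k p) := pderiv_rename (Equiv.injective _) k p
  rw [hp, Equiv.swap_apply_left] at h1
  rw [h1, rename_rename]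
  rw [comp_swap ρ k k' h]

lemma block_zero {p : MvPolynomial (Fin n) ℂ} (hp : p.IsSymmetric) (ρ : Fin n → Fin n)
    (h0 : rename ρ p = 0) (k : Fin n) : rename ρ (pderiv k p) = 0 := by
  have h1 := pderiv_rename_sum ρ (ρ k) p
  rw [h0, map_zero] at h1
  have h2 : ∀ k' ∈ ({x | ρ x = ρ k} : Finset (Fin n)),
      rename ρ (pderiv k' p) = rename ρ (pderiv k p) := by
    intro k' hk'
    simp at hk'
    exact sym_rename hp ρ _ _ hk'
  rw [Finset.sum_congr rfl h2, Finset.sum_const, eq_comm, smul_eq_zero] at h1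
  rcases h1 with h1 | h1
  · rw [Finset.card_eq_zero] at h1
    have : k ∈ ({x | ρ x = ρ k} : Finset (Fin n)) := by simp
    rw [h1] at this
    simp at this
  · exact h1

lemma card_mg (π : Fin n → Fin n) (i j : Fin n) (hij : i ≠ j)
    (hi : i ∈ univ.image π) (hj : j ∈ univ.image π) :
    (univ.image (mg i j ∘ π)).card + 1 ≤ (univ.image π).card := by
  have : univ.image (mg i j ∘ π) ⊆ (univ.image π).erase j := by
    intro x hx
    simp only [mem_image, mem_univ, true_and, Function.comp_apply] at hx
    obtain ⟨y, rfl⟩ := hx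
    by_cases h : π y = j
    · rw [h, mg_j]; exact mem_erase.2 ⟨hij, hi⟩
    · rw [mg_ne _ _ _ h]
      exact mem_erase.2 ⟨h, mem_image_of_mem _ (mem_univ _)⟩
  have h2 := card_le_card this
  rw [card_erase_of_mem hj] at h2
  have := card_pos.2 ⟨j, hj⟩
  omega

lemma mg_pderiv_zero {p : MvPolynomial (Fin n) ℂ} (hp : p.IsSymmetric) {l : ℕ} (hV : V p l)
    (π : Fin n → Fin n) (hπ : (univ.image π).card = l + 1) (i j : Fin n) (hij : i ≠ j)
    (hi : i ∈ univ.image π) (hj : j ∈ univ.image π) (k : Fin n) :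
    rename (mg i j ∘ π) (pderiv k p) = 0 := by
  refine block_zero hp _ (hV _ ?_) k
  have := card_mg π i j hij hi hj
  omega

lemma sq_dvd {p : MvPolynomial (Fin n) ℂ} (hp : p.IsSymmetric) {l : ℕ} (hV : V p l)
    (π : Fin n → Fin n) (hπ : (univ.image π).card = l + 1) (i j : Fin n) (hij : i ≠ j)
    (hi : i ∈ univ.image π) (hj : j ∈ univ.image π) :
    (X i - X j) ^ 2 ∣ rename π p := by
  have h0 : rename (mg i j) (rename π p) = 0 := by
    rw [rename_rename]
    apply hV
    have := card_mg π i j hij hi hj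
    omega
  obtain ⟨r, hr⟩ := (dvd_iff i j _).2 h0
  have h1 : rename (mg i j) (pderiv i (rename π p)) = 0 := by
    rw [pderiv_rename_sum, map_sum]
    refine Finset.sum_eq_zero fun k _ => ?_
    rw [rename_rename]
    exact mg_pderiv_zero hp hV π hπ i j hij hi hj k
  rw [hr] at h1 ⊢
  rw [Derivation.leibniz, map_sub, pderiv_X_self, pderiv_X_of_ne hij.symm] at h1
  simp only [smul_eq_mul, map_add, map_mul, rename_mg_sub, zero_mul, sub_zero, mul_one,
    zero_add] at h1
  rw [pow_two]
  exact mul_dvd_mul_left _ ((dvd_iff i j _).2 h1)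

lemma D_dvd {p : MvPolynomial (Fin n) ℂ} (hp : p.IsSymmetric) {l : ℕ} (hV : V p l)
    (π : Fin n → Fin n) (hπ : (univ.image π).card = l + 1) :
    D (univ.image π) ∣ rename π p := by
  refine Finset.prod_dvd_of_isRelPrime ?_ ?_
  · intro a ha b hb hab
    have ha' := (mem_prs _ _).1 ha
    have hb' := (mem_prs _ _).1 hb
    refine IsRelPrime.pow ?_
    rw [(prime_sub _ _ ha'.2.2.ne).irreducible.isRelPrime_iff_not_dvd, dvd_iff, map_sub, rename_X,
      rename_X, sub_eq_zero]
    intro h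
    rcases mg_eq_iff _ _ _ _ hb'.2.2.ne (X_injective h) with h | h
    · exact hab (Prod.ext h.1.symm h.2.symm)
    · have h1 := ha'.2.2
      have h2 := hb'.2.2
      rw [h.1, h.2] at h2
      exact absurd h1 h2.asymm
  · intro a ha
    have ha' := (mem_prs _ _).1 ha
    exact sq_dvd hp hV π hπ _ _ ha'.2.2.ne ha'.1 ha'.2.1

lemma const_mul {p : MvPolynomial (Fin n) ℂ} (hp : p.IsSymmetric) {l d : ℕ} (hV : V p l)
    (hd : p.IsHomogeneous d) (hdl : d ≤ (l + 1) * l)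
    (π : Fin n → Fin n) (hπ : (univ.image π).card = l + 1) :
    ∃ c : ℂ, rename π p = C c * D (univ.image π) ∧ (d < (l + 1) * l → c = 0) := by
  obtain ⟨g, hg⟩ := D_dvd hp hV π hπ
  by_cases hg0 : g = 0
  · exact ⟨0, by rw [hg, hg0]; simp, fun _ => rfl⟩
  have hne : rename π p ≠ 0 := by rw [hg]; exact mul_ne_zero (D_ne_zero _) hg0
  have h1 := (hd.rename_isHomogeneous (f := π)).totalDegree hne
  rw [hg, totalDegree_mul_of_isDomain (D_ne_zero _) hg0, (D_hom _).totalDegree (D_ne_zero _), hπ,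
    Nat.add_sub_cancel] at h1
  refine ⟨coeff 0 g, ?_, fun h => by omega⟩
  rw [hg, mul_comm, ← totalDegree_eq_zero_iff_eq_C.1 (show g.totalDegree = 0 by omega)]

lemma step_up {p : MvPolynomial (Fin n) ℂ} (hp : p.IsSymmetric) {l d : ℕ} (hV : V p l)
    (hd : p.IsHomogeneous d) (hdl : d < (l + 1) * l) : V p (l + 1) := by
  intro π hπ
  rcases Nat.lt_or_ge l (univ.image π).card with h | h
  · obtain ⟨c, h1, h2⟩ := const_mul hp hV hd hdl.le π (by omega)
    rw [h1, h2 hdl]; simp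
  · exact hV π h

lemma V_all {p : MvPolynomial (Fin n) ℂ} (hp : p.IsSymmetric) {l d : ℕ} (hV : V p l)
    (hd : p.IsHomogeneous d) (hdl : d < (l + 1) * l) (r : ℕ) : V p (l + r) := by
  induction r with
  | zero => exact hV
  | succ r ih =>
    refine step_up (l := l + r) hp ih hd (lt_of_lt_of_le hdl ?_)
    exact Nat.mul_le_mul (by omega) (by omega)

lemma zero_of_V {p : MvPolynomial (Fin n) ℂ} (hp : p.IsSymmetric) {l d : ℕ} (hV : V p l)
    (hd : p.IsHomogeneous d) (hdl : d < (l + 1) * l) : p = 0 := by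
  have := V_all hp hV hd hdl n id ((card_le_univ _).trans (by simp))
  simpa using this

/-- Hessian entries along `ρ`. -/
noncomputable def hs (p : MvPolynomial (Fin n) ℂ) (ρ : Fin n → Fin n) (k k' : Fin n) :
    MvPolynomial (Fin n) ℂ := rename ρ (pderiv k' (pderiv k p))

lemma hs_inv {p : MvPolynomial (Fin n) ℂ} (hp : p.IsSymmetric) (ρ : Fin n → Fin n)
    (a b : Fin n) (hab : ρ a = ρ b) (k k' : Fin n) :
    hs p ρ (Equiv.swap a b k) (Equiv.swap a b k') = hs p ρ k k' := by
  have h1 : pderiv (Equiv.swap a b k) (rename (Equiv.swap a b) p)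
     = rename (Equiv.swap a b) (pderiv k p) := pderiv_rename (Equiv.injective _) k p
  have h2 : pderiv (Equiv.swap a b k') (rename (Equiv.swap a b) (pderiv k p))
     = rename (Equiv.swap a b) (pderiv k' (pderiv k p)) :=
    pderiv_rename (Equiv.injective _) k' _
  rw [← h1, hp] at h2
  rw [hs, h2, rename_rename, comp_swap ρ a b hab, hs]

lemma hs_diag {p : MvPolynomial (Fin n) ℂ} (hp : p.IsSymmetric) (ρ : Fin n → Fin n)
    (k k' : Fin n) (hk : ρ k = ρ k') : hs p ρ k k = hs p ρ k' k' := by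
  have := hs_inv hp ρ k k' hk k k
  rw [Equiv.swap_apply_left] at this
  exact this.symm

lemma hs_off {p : MvPolynomial (Fin n) ℂ} (hp : p.IsSymmetric) (ρ : Fin n → Fin n)
    (h0 : rename ρ p = 0) (i k k' : Fin n) (hk : ρ k = i) (hk' : ρ k' = i) (hne : k ≠ k') :
    hs p ρ k k' = (-(((univ.filter (fun x => ρ x = i)).card : ℂ) - 1)⁻¹) • hs p ρ k k := by
  set B := univ.filter (fun x => ρ x = i) with hB
  have hkB : k ∈ B := by simp [hB, hk]
  have hkB' : k' ∈ B := by simp [hB, hk']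
  have h1 := pderiv_rename_sum ρ i (pderiv k p)
  rw [block_zero hp ρ h0 k, map_zero, ← Finset.add_sum_erase _ _ hkB] at h1
  have h2 : ∀ x ∈ B.erase k, rename ρ (pderiv x (pderiv k p)) = hs p ρ k k' := by
    intro x hx
    rw [mem_erase] at hx
    have hx2 : ρ x = i := by simpa [hB] using hx.2
    have := hs_inv hp ρ x k' (hx2.trans hk'.symm) k x
    rw [Equiv.swap_apply_left, Equiv.swap_apply_of_ne_of_ne hx.1.symm hne] at this
    exact this.symm
  rw [Finset.sum_congr rfl h2, Finset.sum_const, card_erase_of_mem hkB,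
    ← Nat.cast_smul_eq_nsmul ℂ] at h1
  have hc : 2 ≤ B.card := by
    have : ({k, k'} : Finset (Fin n)) ⊆ B := by
      intro x hx
      simp at hx
      rcases hx with rfl | rfl <;> assumption
    have := card_le_card this
    rwa [card_pair hne] at this
  have hcc : ((B.card : ℂ) - 1) ≠ 0 := by
    rw [sub_ne_zero]
    norm_cast
    omega
  rw [Nat.cast_sub (by omega), Nat.cast_one] at h1
  change 0 = hs p ρ k k + _ at h1
  rw [eq_comm, add_comm, ← eq_neg_iff_add_eq_zero] at h1
  have h3 := congrArg (fun z => ((B.card : ℂ) - 1)⁻¹ • z) h1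
  simp only [smul_smul, inv_mul_cancel₀ hcc, one_smul] at h3
  rw [h3, smul_neg, neg_smul]

lemma second_deriv {p : MvPolynomial (Fin n) ℂ} (π : Fin n → Fin n) (i j : Fin n) :
    rename (mg i j) (pderiv i (pderiv i (rename π p))) =
      ∑ k with π k = i, ∑ k' with π k' = i, hs p (mg i j ∘ π) k k' := by
  rw [pderiv_rename_sum, map_sum, map_sum]
  refine Finset.sum_congr rfl fun k _ => ?_
  rw [pderiv_rename_sum, map_sum]
  refine Finset.sum_congr rfl fun k' _ => ?_
  rw [rename_rename, hs]

lemma second_deriv_eq {p : MvPolynomial (Fin n) ℂ} (hp : p.IsSymmetric)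
    (π : Fin n → Fin n) (i j : Fin n) (hij : i ≠ j)
    (h0 : rename (mg i j ∘ π) p = 0) (t u : Fin n) (ht : mg i j (π t) = i)
    (hi : i ∈ univ.image π) (hu : π u = j) :
    ∃ c : ℂ, c ≠ 0 ∧ rename (mg i j) (pderiv i (pderiv i (rename π p))) =
      c • hs p (mg i j ∘ π) t t := by
  set ρ := mg i j ∘ π with hρ
  set A := (univ.filter (fun x => ρ x = i)).card with hA
  set a := (univ.filter (fun x => π x = i)).card with ha
  have hsub : ∀ x, π x = i → ρ x = i := by
    intro x hx
    simp [hρ, hx, mg_i]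
  have ha0 : 0 < a := by
    obtain ⟨x, -, hx⟩ := mem_image.1 hi
    exact card_pos.2 ⟨x, by simp [hx]⟩
  have haA : a < A := by
    apply card_lt_card
    rw [ssubset_iff_of_subset]
    · refine ⟨u, ?_, ?_⟩
      · simp [hρ, hu, mg_j]
      · simp [hu, hij.symm]
    · intro x hx
      simp only [mem_filter, mem_univ, true_and] at hx ⊢
      exact hsub x hx
  have hA1 : (A : ℂ) - 1 ≠ 0 := by
    rw [sub_ne_zero]
    norm_cast
    omega
  have key : ∀ k ∈ univ.filter (fun x => π x = i), ∑ k' with π k' = i, hs p ρ k k' =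
      ((A - a : ℂ) / (A - 1)) • hs p ρ t t := by
    intro k hk
    have hk' : π k = i := by simpa using hk
    have e1 : hs p ρ k k = hs p ρ t t := hs_diag hp ρ k t ((hsub k hk').trans ht.symm)
    rw [← Finset.add_sum_erase _ _ hk]
    have h2 : ∀ x ∈ (univ.filter (fun x => π x = i)).erase k, hs p ρ k x =
        (-((A : ℂ) - 1)⁻¹) • hs p ρ t t := by
      intro x hx
      rw [mem_erase] at hx
      have hx2 : π x = i := by simpa using hx.2
      rw [hs_off hp ρ h0 i k x (hsub k hk') (hsub x hx2) hx.1.symm, e1]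
    rw [Finset.sum_congr rfl h2, Finset.sum_const, card_erase_of_mem hk,
      ← Nat.cast_smul_eq_nsmul ℂ, smul_smul, e1, ← ha, Nat.cast_sub (by omega), Nat.cast_one]
    nth_rewrite 1 [← one_smul ℂ (hs p ρ t t)]
    rw [← add_smul]
    congr 1
    field_simp
    ring
  refine ⟨a * ((A - a : ℂ) / (A - 1)), ?_, ?_⟩
  · refine mul_ne_zero (by norm_cast; omega) (div_ne_zero ?_ hA1)
    rw [sub_ne_zero]
    norm_cast
    omega
  · rw [second_deriv, Finset.sum_congr rfl key, Finset.sum_const, ← Nat.cast_smul_eq_nsmul ℂ,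
      smul_smul]

lemma D_split (S : Finset (Fin n)) (i j : Fin n) (hij : i ≠ j) (hi : i ∈ S) (hj : j ∈ S) :
    ∃ R, D S = (X i - X j) ^ 2 * R ∧ rename (mg i j) R ≠ 0 := by
  have aux : ∀ q ∈ prs S, (∀ x ∈ (prs S).erase q, ¬ ((x.1 = i ∧ x.2 = j) ∨ (x.1 = j ∧ x.2 = i))) →
      (X q.1 - X q.2 : MvPolynomial (Fin n) ℂ) ^ 2 = (X i - X j) ^ 2 →
      ∃ R, D S = (X i - X j) ^ 2 * R ∧ rename (mg i j) R ≠ 0 := by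
    intro q hq h1 h2
    refine ⟨∏ x ∈ (prs S).erase q, (X x.1 - X x.2) ^ 2, ?_, ?_⟩
    · rw [← h2, D, ← Finset.mul_prod_erase _ _ hq]
    · rw [map_prod, Finset.prod_ne_zero_iff]
      intro x hx
      rw [map_pow, map_sub, rename_X, rename_X]
      refine pow_ne_zero _ (sub_ne_zero' _ _ ?_)
      intro h
      exact h1 x hx (mg_eq_iff _ _ _ _ ((mem_prs _ _).1 (mem_of_mem_erase hx)).2.2.ne h)
  rcases lt_or_gt_of_ne hij with h | h
  · refine aux (i, j) ((mem_prs _ _).2 ⟨hi, hj, h⟩) ?_ rfl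
    intro x hx h'
    rw [mem_erase, mem_prs] at hx
    rcases h' with h' | h'
    · exact hx.1 (Prod.ext h'.1 h'.2)
    · have := hx.2.2.2
      rw [h'.1, h'.2] at this
      exact absurd h this.asymm
  · refine aux (j, i) ((mem_prs _ _).2 ⟨hj, hi, h⟩) ?_ (by ring)
    intro x hx h'
    rw [mem_erase, mem_prs] at hx
    rcases h' with h' | h'
    · have := hx.2.2.2
      rw [h'.1, h'.2] at this
      exact absurd h this.asymm
    · exact hx.1 (Prod.ext h'.1 h'.2)

lemma d2 (i j : Fin n) (hij : i ≠ j) (G : MvPolynomial (Fin n) ℂ) :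
    rename (mg i j) (pderiv i (pderiv i ((X i - X j) ^ 2 * G))) = 2 * rename (mg i j) G := by
  have hX : pderiv i (X i - X j : MvPolynomial (Fin n) ℂ) = 1 := by
    rw [map_sub, pderiv_X_self, pderiv_X_of_ne hij.symm, sub_zero]
  simp only [pow_two, Derivation.leibniz, smul_eq_mul, map_add, map_mul, rename_mg_sub, hX]
  simp
  ring

lemma transfer {p : MvPolynomial (Fin n) ℂ} (hp : p.IsSymmetric) {l : ℕ} (hV : V p l)
    (hd : p.IsHomogeneous ((l + 1) * l)) (π π' : Fin n → Fin n)
    (hπ : (univ.image π).card = l + 1) (him : univ.image π' = univ.image π) (t : Fin n)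
    (heq : ∀ x, x ≠ t → π' x = π x) (h0 : rename π p = 0) : rename π' p = 0 := by
  by_cases hij : π t = π' t
  · have : π' = π := by
      funext x
      by_cases hx : x = t
      · rw [hx, hij]
      · exact heq x hx
    rw [this, h0]
  obtain ⟨i, hi⟩ : ∃ i, i = π t := ⟨_, rfl⟩
  obtain ⟨j, hj⟩ : ∃ j, j = π' t := ⟨_, rfl⟩
  rw [← hi, ← hj] at hij
  have hρ : mg i j ∘ π' = mg i j ∘ π := by
    funext x
    by_cases hx : x = t
    · simp [hx, ← hi, ← hj, mg_i, mg_j]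
    · simp [heq x hx]
  have hiS : i ∈ univ.image π := by rw [hi]; exact mem_image_of_mem _ (mem_univ _)
  have hjS : j ∈ univ.image π := by rw [← him, hj]; exact mem_image_of_mem _ (mem_univ _)
  have hr0 : rename (mg i j ∘ π) p = 0 := by
    apply hV
    have := card_mg π i j hij hiS hjS
    omega
  obtain ⟨u, -, hu⟩ := mem_image.1 hjS
  obtain ⟨c, hc, h1⟩ := second_deriv_eq hp π i j hij hr0 t u (by rw [← hi, mg_i]) hiS hu
  rw [h0, map_zero, map_zero, map_zero, eq_comm, smul_eq_zero] at h1
  have hα := h1.resolve_left hc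
  obtain ⟨c', -, h2⟩ := second_deriv_eq hp π' i j hij (by rw [hρ, hr0]) t t (by rw [← hj, mg_j])
    (by rw [him]; exact hiS) hj.symm
  rw [hρ, hα, smul_zero] at h2
  obtain ⟨e, he, -⟩ := const_mul hp hV hd le_rfl π' (by rw [him, hπ])
  obtain ⟨R, hR, hR0⟩ := D_split (univ.image π') i j hij (by rw [him]; exact hiS)
    (by rw [him]; exact hjS)
  rw [he, hR, mul_left_comm, d2 i j hij, map_mul, rename_C] at h2
  have h3 : (C e : MvPolynomial (Fin n) ℂ) = 0 := by
    simpa [hR0] using h2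
  rw [he, h3, zero_mul]

lemma transfer_many {p : MvPolynomial (Fin n) ℂ} (hp : p.IsSymmetric) {l : ℕ} (hV : V p l)
    (hd : p.IsHomogeneous ((l + 1) * l)) (S : Finset (Fin n)) (hS : S.card = l + 1)
    (π π' : Fin n → Fin n) (h1 : ∀ x, π x ∈ S) (h1' : ∀ x, π' x ∈ S)
    (h2 : ∀ x ∈ S, π x = x) (h2' : ∀ x ∈ S, π' x = x) (h0 : rename π p = 0) :
    rename π' p = 0 := by
  have main : ∀ T : Finset (Fin n), rename (T.piecewise π' π) p = 0 := by
    have im : ∀ T : Finset (Fin n), univ.image (T.piecewise π' π) = S := by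
      intro T
      ext x
      constructor
      · intro hx
        obtain ⟨y, -, rfl⟩ := mem_image.1 hx
        by_cases hy : y ∈ T
        · simpa [hy] using h1' y
        · simpa [hy] using h1 y
      · intro hx
        refine mem_image.2 ⟨x, mem_univ _, ?_⟩
        by_cases hy : x ∈ T
        · simpa [hy] using h2' x hx
        · simpa [hy] using h2 x hx
    intro T
    induction T using Finset.induction_on with
    | empty => simpa using h0
    | insert a T ha ih =>
      refine transfer hp hV hd (T.piecewise π' π) _ (by rw [im, hS]) (by rw [im, im]) a ?_ ih
      intro x hx
      simp [Finset.piecewise, hx]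
  simpa using main univ

lemma ext_perm (T : Finset (Fin n)) (h : Fin n → Fin n) (hh : Set.InjOn h T) :
    ∃ e : Equiv.Perm (Fin n), ∀ x ∈ T, e x = h x := by
  obtain ⟨g, hg⟩ := Finset.exists_equiv_extend_of_card_eq (α := Fin n) (t := (univ : Finset (Fin n)))
    (by simp) (s := T) (f := h) (by simp) hh
  exact ⟨g.trans (Equiv.subtypeUnivEquiv (by simp)), fun x hx => by simpa using hg x hx⟩

/-- The first `m` indices. -/
def T0 (n m : ℕ) : Finset (Fin n) := univ.filter (fun x => x.val < m)

lemma card_T0 (m : ℕ) (hm : m ≤ n) : (T0 n m).card = m := by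
  rw [T0, Fin.card_filter_val_lt, min_eq_right hm]

lemma normalize {p : MvPolynomial (Fin n) ℂ} (hp : p.IsSymmetric) (m : ℕ) (hm : m ≤ n)
    (π : Fin n → Fin n) (hπ : (univ.image π).card = m) :
    ∃ π₁ : Fin n → Fin n, (∀ x, π₁ x ∈ T0 n m) ∧ (∀ x ∈ T0 n m, π₁ x = x) ∧
      (rename π₁ p = 0 ↔ rename π p = 0) := by
  classical
  let g := (univ.image π).equivFinOfCardEq hπ
  have hpre : ∀ y : univ.image π, ∃ x, π x = y := by
    intro y
    obtain ⟨x, -, hx⟩ := mem_image.1 y.2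
    exact ⟨x, hx⟩
  choose sec hsec using hpre
  let h : Fin n → Fin n := fun k => if hk : k.val < m then sec (g.symm ⟨k, hk⟩) else k
  have hh : ∀ k (hk : k.val < m), π (h k) = g.symm ⟨k, hk⟩ := by
    intro k hk
    simp only [h, hk, dif_pos, hsec]
  have inj : Set.InjOn (π ∘ h) (T0 n m) := by
    intro a ha b hb hab
    have ha' : a.val < m := by simpa [T0] using ha
    have hb' : b.val < m := by simpa [T0] using hb
    simp only [Function.comp_apply, hh a ha', hh b hb'] at hab
    have := g.symm.injective (Subtype.ext hab)
    simpa [Fin.ext_iff] using this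
  have inj' : Set.InjOn h (T0 n m) := fun a ha b hb hab =>
    inj ha hb (by simp only [Function.comp_apply, hab])
  obtain ⟨e, he⟩ := ext_perm _ _ inj
  obtain ⟨τ, hτ⟩ := ext_perm _ _ inj'
  have hid : ∀ x ∈ T0 n m, e.symm (π (τ x)) = x := by
    intro x hx
    rw [Equiv.symm_apply_eq, he x hx, hτ x hx]
    rfl
  refine ⟨fun x => e.symm (π (τ x)), ?_, hid, ?_⟩
  · have hsub : T0 n m ⊆ (univ.image π).image e.symm := by
      intro x hx
      rw [← hid x hx]
      exact mem_image_of_mem _ (mem_image_of_mem _ (mem_univ _))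
    have := Finset.eq_of_subset_of_card_le hsub (by
      rw [card_T0 m hm]
      exact card_image_le.trans hπ.le)
    intro x
    rw [this]
    exact mem_image_of_mem _ (mem_image_of_mem _ (mem_univ _))
  · have : rename (fun x => e.symm (π (τ x))) p = rename e.symm (rename π p) := by
      conv_rhs => rw [← hp τ]
      rw [rename_rename, rename_rename]
      rfl
    rw [this]
    exact map_eq_zero_iff _ (rename_injective _ e.symm.injective)

lemma eq_zero_of_one {p : MvPolynomial (Fin n) ℂ} (hp : p.IsSymmetric) {l : ℕ} (hl : l + 1 ≤ n)
    (hV : V p l) (hd : p.IsHomogeneous ((l + 1) * l)) (π₀ : Fin n → Fin n)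
    (hπ : (univ.image π₀).card = l + 1) (h0 : rename π₀ p = 0) : p = 0 := by
  obtain ⟨π₁, a1, a2, a3⟩ := normalize hp (l + 1) hl π₀ hπ
  refine zero_of_V (l := l + 1) hp ?_ hd (by
    rw [mul_comm]
    exact Nat.mul_lt_mul_of_pos_right (by omega) (by omega))
  intro π hc
  rcases Nat.lt_or_ge l (univ.image π).card with h | h
  · obtain ⟨π₂, b1, b2, b3⟩ := normalize hp (l + 1) hl π (by omega)
    exact b3.1 (transfer_many hp hV hd _ (card_T0 (l + 1) hl) π₁ π₂ a1 b1 a2 b2 (a3.2 h0))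
  · exact hV π h

/-- The subdiscriminant polynomial. -/
noncomputable def SD (n m : ℕ) : MvPolynomial (Fin n) ℂ :=
  ∑ s ∈ (univ : Finset (Fin n)).powersetCard m, D s

lemma SD_eq (m : ℕ) : (-1 : MvPolynomial (Fin n) ℂ) ^ (m * (m - 1) / 2) * SD n m =
    ∑ s ∈ (univ : Finset (Fin n)).powersetCard m, ∏ p ∈ s.offDiag, (X p.1 - X p.2) := by
  rw [SD, Finset.mul_sum]
  refine Finset.sum_congr rfl fun s hs => ?_
  rw [prod_eq_D]
  have h1 := card_prs s
  rw [(mem_powersetCard.1 hs).2] at h1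
  congr 2
  omega

lemma SD_sym (m : ℕ) : (SD n m).IsSymmetric := by
  intro e
  have h0 : (-1 : MvPolynomial (Fin n) ℂ) ^ (m * (m - 1) / 2) ≠ 0 := by simp
  apply mul_left_cancel₀ h0
  have : (-1 : MvPolynomial (Fin n) ℂ) ^ (m * (m - 1) / 2) =
    rename e ((-1 : MvPolynomial (Fin n) ℂ) ^ (m * (m - 1) / 2)) := by simp
  conv_lhs => rw [this]
  rw [← map_mul, SD_eq, map_sum]
  refine Finset.sum_equiv e.finsetCongr ?_ ?_
  · intro s; simp [mem_powersetCard]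
  · intro s _
    rw [map_prod]
    refine Finset.prod_equiv (Equiv.prodCongr e e) ?_ ?_
    · rintro ⟨a, b⟩; simp [mem_offDiag]
    · rintro ⟨a, b⟩ _; simp

lemma SD_hom (m : ℕ) : (SD n m).IsHomogeneous (m * (m - 1)) := by
  refine IsHomogeneous.sum _ _ _ fun s hs => ?_
  have := D_hom s
  rwa [(mem_powersetCard.1 hs).2] at this

lemma SD_V (l : ℕ) : V (SD n (l + 1)) l := by
  intro π hπ
  rw [SD, map_sum]
  refine Finset.sum_eq_zero fun s hs => ?_
  have hs' := (mem_powersetCard.1 hs).2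
  obtain ⟨a, ha, b, hb, hab, h⟩ := Finset.exists_ne_map_eq_of_card_lt_of_maps_to
    (s := s) (t := univ.image π) (f := π) (by omega)
    (fun x _ => mem_coe.2 (mem_image_of_mem _ (mem_univ _)))
  rw [D, map_prod]
  rcases lt_or_gt_of_ne hab with hlt | hlt
  · refine Finset.prod_eq_zero ((mem_prs _ (a, b)).2 ⟨ha, hb, hlt⟩) ?_
    simp [h]
  · refine Finset.prod_eq_zero ((mem_prs _ (b, a)).2 ⟨hb, ha, hlt⟩) ?_
    simp [h]

lemma SD_ne (m : ℕ) (hm : m ≤ n) (π : Fin n → Fin n) (hπ : ∀ x ∈ T0 n m, π x = x) :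
    rename π (SD n m) ≠ 0 := by
  intro h
  have h1 := congrArg (eval (fun i : Fin n => ((i.val : ℝ) : ℂ))) h
  rw [eval_rename, map_zero, SD, map_sum] at h1
  have h2 : ∀ s : Finset (Fin n), eval ((fun i : Fin n => ((i.val : ℝ) : ℂ)) ∘ π) (D s) =
      ((∏ q ∈ prs s, (((π q.1).val : ℝ) - ((π q.2).val : ℝ)) ^ 2 : ℝ) : ℂ) := by
    intro s
    simp [D, map_prod]
  simp only [h2] at h1
  rw [← Complex.ofReal_sum, Complex.ofReal_eq_zero] at h1
  refine absurd h1 (ne_of_gt ?_)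
  refine Finset.sum_pos' (fun s _ => Finset.prod_nonneg fun q _ => sq_nonneg _) ⟨T0 n m, ?_, ?_⟩
  · simp [mem_powersetCard, card_T0 m hm]
  · refine Finset.prod_pos fun q hq => ?_
    have hq' := (mem_prs _ _).1 hq
    rw [hπ _ hq'.1, hπ _ hq'.2.1]
    refine pow_pos_of_ne hq'.2.2
where
  pow_pos_of_ne {a b : Fin n} (h : a < b) : 0 < ((a.val : ℝ) - (b.val : ℝ)) ^ 2 := by
    have : (a.val : ℝ) < b.val := by exact_mod_cast h
    have h3 : (a.val : ℝ) - b.val ≠ 0 := by linarith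
    positivity

theorem main_poly {p : MvPolynomial (Fin n) ℂ} (hp : p.IsSymmetric) {l : ℕ} (hl : l + 1 ≤ n)
    (hV : V p l) (hd : p.IsHomogeneous ((l + 1) * l)) : ∃ c : ℂ, p = C c * SD n (l + 1) := by
  let π₀ : Fin n → Fin n := fun x => if x.val < l + 1 then x else ⟨0, by omega⟩
  have hid : ∀ x ∈ T0 n (l + 1), π₀ x = x := by
    intro x hx
    have : x.val < l + 1 := by simpa [T0] using hx
    exact if_pos this
  have him : univ.image π₀ = T0 n (l + 1) := by
    ext x
    constructor
    · intro hx
      obtain ⟨y, -, rfl⟩ := mem_image.1 hx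
      simp only [π₀, T0, mem_filter, mem_univ, true_and]
      split_ifs with h
      · exact h
      · simp
    · intro hx
      exact mem_image.2 ⟨x, mem_univ _, hid x hx⟩
  have hc : (univ.image π₀).card = l + 1 := by rw [him, card_T0 _ hl]
  have hSh : (SD n (l + 1)).IsHomogeneous ((l + 1) * l) := SD_hom (l + 1)
  obtain ⟨c0, h0, -⟩ := const_mul hp hV hd le_rfl π₀ hc
  obtain ⟨c1, h1, -⟩ := const_mul (SD_sym (l + 1)) (SD_V l) hSh le_rfl π₀ hc
  have hc1 : c1 ≠ 0 := by
    rintro rfl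
    exact SD_ne (l + 1) hl π₀ hid (by rw [h1]; simp)
  refine ⟨c0 / c1, ?_⟩
  rw [← sub_eq_zero]
  refine eq_zero_of_one (l := l) ?_ hl ?_ (hd.sub (hSh.C_mul _)) π₀ hc ?_
  · intro e
    rw [map_sub, map_mul, rename_C, hp e, SD_sym (l + 1) e]
  · intro π hπ
    rw [map_sub, map_mul, hV π hπ, SD_V l π hπ]
    simp
  · rw [map_sub, map_mul, rename_C, h0, h1, ← mul_assoc, ← C_mul, div_mul_cancel₀ _ hc1, sub_self]

lemma eval_D (s : Finset (Fin n)) (x : Fin n → ℂ) :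
    eval x (D s) = ∏ i ∈ s, ∏ j ∈ s.filter (fun j => i < j), (x i - x j) ^ 2 := by
  have : prs s = (s ×ˢ s).filter (fun p => p.1 < p.2) := by
    ext p
    simp [mem_prs, and_assoc]
  rw [D, map_prod, this, Finset.prod_filter, Finset.prod_product]
  refine Finset.prod_congr rfl fun i _ => ?_
  rw [Finset.prod_filter]
  refine Finset.prod_congr rfl fun j _ => ?_
  simp

/-- Restriction to diagonal matrices. -/
noncomputable def dg (f : MvPolynomial (Fin n × Fin n) ℂ) : MvPolynomial (Fin n) ℂ :=
  aeval (fun p : Fin n × Fin n => if p.1 = p.2 then (X p.1 : MvPolynomial (Fin n) ℂ) else 0) f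

lemma eval_dg (f : MvPolynomial (Fin n × Fin n) ℂ) (x : Fin n → ℂ) :
    eval x (dg f) = eval (fun p => (Matrix.diagonal x) p.1 p.2) f := by
  induction f using MvPolynomial.induction_on with
  | C c => simp [dg]
  | add p q hp hq => simp only [dg, map_add] at *; rw [hp, hq]
  | mul_X p i hp =>
    simp only [dg, map_mul] at *
    rw [hp]
    simp only [aeval_X, eval_X, Matrix.diagonal_apply]
    split_ifs <;> simp

lemma dg_hom (f : MvPolynomial (Fin n × Fin n) ℂ) (d : ℕ) (hf : f.IsHomogeneous d) :
    (dg f).IsHomogeneous d := by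
  have := hf.aeval (fun p : Fin n × Fin n =>
    if p.1 = p.2 then (X p.1 : MvPolynomial (Fin n) ℂ) else 0) (n := 1) (fun p => by
      split_ifs
      · exact isHomogeneous_X _ _
      · exact isHomogeneous_zero _ _ _)
  simpa [dg] using this

lemma funext_real {p q : MvPolynomial (Fin n) ℂ}
    (h : ∀ x : Fin n → ℝ, eval (fun i => (x i : ℂ)) p = eval (fun i => (x i : ℂ)) q) : p = q := by
  refine funext_set (fun _ => Set.range ((↑) : ℝ → ℂ))
    (fun _ => Set.infinite_range_of_injective Complex.ofReal_injective) fun x hx => ?_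
  choose y hy using fun i => hx i (Set.mem_univ i)
  have : x = fun i => (y i : ℂ) := by funext i; exact (hy i).symm
  rw [this]
  exact h y

lemma herm_diag (x : Fin n → ℝ) : (Matrix.diagonal (fun i => (x i : ℂ))).IsHermitian := by
  refine Matrix.isHermitian_diagonal_of_self_adjoint _ ?_
  ext i
  simp

lemma unitary_inv (hn : n ≠ 0) (f : MvPolynomial (Fin n × Fin n) ℂ)
    (hinv : ∀ g : Matrix (Fin n) (Fin n) ℂ, g * g.conjTranspose = 1 → g.det = 1 →
      ∀ A : Matrix (Fin n) (Fin n) ℂ, A.IsHermitian →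
        MvPolynomial.eval (fun p => (g * A * g.conjTranspose) p.1 p.2) f =
          MvPolynomial.eval (fun p => A p.1 p.2) f)
    (g : Matrix (Fin n) (Fin n) ℂ) (hg : g * g.conjTranspose = 1)
    (A : Matrix (Fin n) (Fin n) ℂ) (hA : A.IsHermitian) :
    MvPolynomial.eval (fun p => (g * A * g.conjTranspose) p.1 p.2) f =
          MvPolynomial.eval (fun p => A p.1 p.2) f := by
  obtain ⟨z, hz⟩ := IsAlgClosed.exists_pow_nat_eq (g.det)⁻¹ (Nat.pos_of_ne_zero hn)
  have hdet : g.det * star g.det = 1 := by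
    rw [← Matrix.det_conjTranspose, ← Matrix.det_mul, hg, Matrix.det_one]
  have hnd : ‖g.det‖ = 1 := by
    have := congrArg norm hdet
    rw [norm_mul, norm_star, norm_one] at this
    nlinarith [norm_nonneg g.det]
  have hg0 : g.det ≠ 0 := by
    intro h; rw [h] at hnd; simp at hnd
  have hnz : ‖z‖ = 1 := by
    have := congrArg norm hz
    rw [norm_pow, norm_inv, hnd, inv_one] at this
    exact (pow_eq_one_iff_of_nonneg (norm_nonneg _) hn).1 this
  have hzz : z * star z = 1 := by
    have := Complex.mul_conj z
    rw [Complex.normSq_eq_norm_sq, hnz] at this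
    simpa using this
  have hconj : ∀ B : Matrix (Fin n) (Fin n) ℂ, (z • g) * B * (z • g).conjTranspose =
      g * B * g.conjTranspose := by
    intro B
    rw [Matrix.conjTranspose_smul, Matrix.smul_mul, Matrix.smul_mul, Matrix.mul_smul, smul_smul, hzz,
      one_smul]
  have h := hinv (z • g) (by simpa [hg] using hconj 1) (by
    rw [Matrix.det_smul, Fintype.card_fin, hz, inv_mul_cancel₀ hg0]) A hA
  rwa [hconj] at h

end SubDisc

theorem stmt_15 (n k : ℕ) (hn : 2 ≤ n) (hk : k ≤ n - 2)
    (f : MvPolynomial (Fin n × Fin n) ℂ)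
    (hf : f.IsHomogeneous ((n - k) * (n - k - 1)))
    (hinv : ∀ g : Matrix (Fin n) (Fin n) ℂ, g * g.conjTranspose = 1 → g.det = 1 →
      ∀ A : Matrix (Fin n) (Fin n) ℂ, A.IsHermitian →
        MvPolynomial.eval (fun p => (g * A * g.conjTranspose) p.1 p.2) f =
          MvPolynomial.eval (fun p => A p.1 p.2) f)
    (hvan : ∀ A : Matrix (Fin n) (Fin n) ℂ, A.IsHermitian →
      ¬ LinearIndependent ℂ (fun r : Fin (n - k) => A ^ (r : ℕ)) →
      MvPolynomial.eval (fun p => A p.1 p.2) f = 0) :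
    ∃ c : ℂ, ∀ A : Matrix (Fin n) (Fin n) ℂ, ∀ hA : A.IsHermitian,
      MvPolynomial.eval (fun p => A p.1 p.2) f =
        c * ∑ s ∈ Finset.univ.powersetCard (n - k),
          ∏ i ∈ s, ∏ j ∈ s.filter (fun j => i < j),
            ((hA.eigenvalues i : ℂ) - (hA.eigenvalues j : ℂ)) ^ 2 := by
  have hU := SubDisc.unitary_inv (by omega) f hinv
  obtain ⟨l, hl⟩ : ∃ l, n - k = l + 1 := ⟨n - k - 1, by omega⟩
  rw [hl] at hf hvan ⊢
  have hsym : (SubDisc.dg f).IsSymmetric := by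
    intro e
    refine SubDisc.funext_real fun x => ?_
    rw [MvPolynomial.eval_rename, SubDisc.eval_dg, SubDisc.eval_dg]
    have h1 := hU (e.permMatrix ℂ) (by
      rw [Matrix.conjTranspose_permMatrix, ← Matrix.permMatrix_mul]
      simp) _ (SubDisc.herm_diag x)
    rw [← h1]
    congr 2
    funext q
    rw [Matrix.conjTranspose_permMatrix, PEquiv.toMatrix_toPEquiv_mul, PEquiv.mul_toMatrix_toPEquiv]
    have he : Equiv.symm e⁻¹ = e := rfl
    simp [Matrix.diagonal_apply, he]
  have hV : SubDisc.V (SubDisc.dg f) l := by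
    intro π hπ
    refine SubDisc.funext_real fun x => ?_
    rw [MvPolynomial.eval_rename, SubDisc.eval_dg, map_zero]
    refine hvan _ (SubDisc.herm_diag (x ∘ π)) ?_
    intro hli
    let P : Polynomial ℂ := ∏ v ∈ Finset.univ.image π, (Polynomial.X - Polynomial.C ((x v : ℝ) : ℂ))
    have hPm : P.Monic := Polynomial.monic_prod_X_sub_C _ _
    have hPd : P.natDegree = (Finset.univ.image π).card := by
      rw [Polynomial.natDegree_prod_of_monic _ _ (fun i _ => Polynomial.monic_X_sub_C _)]
      simp
    have hPz : Polynomial.aeval (Matrix.diagonal (fun i => (((x ∘ π) i : ℝ) : ℂ))) P = 0 := by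
      have h4 : Matrix.diagonal (fun i => (((x ∘ π) i : ℝ) : ℂ)) =
        Matrix.diagonalAlgHom ℂ (fun i => (((x ∘ π) i : ℝ) : ℂ)) := rfl
      rw [h4, Polynomial.aeval_algHom_apply]
      have h5 : Polynomial.aeval (fun i => (((x ∘ π) i : ℝ) : ℂ)) P = 0 := by
        funext i
        have h6 := Polynomial.aeval_algHom_apply (Pi.evalAlgHom ℂ (fun _ : Fin n => ℂ) i)
          (fun i => (((x ∘ π) i : ℝ) : ℂ)) P
        simp only [Pi.evalAlgHom_apply] at h6
        rw [← h6]
        simp only [P, map_prod]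
        refine Finset.prod_eq_zero (Finset.mem_image_of_mem π (Finset.mem_univ i)) ?_
        simp
      rw [h5, map_zero]
    rw [Polynomial.aeval_eq_sum_range' (n := l + 1) (by omega), ← Fin.sum_univ_eq_sum_range
      (fun i => P.coeff i • (Matrix.diagonal (fun i => (((x ∘ π) i : ℝ) : ℂ))) ^ i)] at hPz
    have := Fintype.linearIndependent_iff.1 hli (fun i => P.coeff i) hPz
      ⟨P.natDegree, by omega⟩
    simp [hPm] at this
  obtain ⟨c, hc⟩ := SubDisc.main_poly hsym (l := l) (by omega) hV (by
    simpa using SubDisc.dg_hom f _ hf)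
  refine ⟨c, fun A hA => ?_⟩
  have hsp := hA.spectral_theorem
  rw [Unitary.conjStarAlgAut_apply] at hsp
  have h2 := hU (hA.eigenvectorUnitary) (by
    rw [← Matrix.star_eq_conjTranspose]; exact Unitary.coe_mul_star_self _) _
    (SubDisc.herm_diag hA.eigenvalues)
  have h3 : MvPolynomial.eval (fun p => A p.1 p.2) f =
      MvPolynomial.eval (fun i => (hA.eigenvalues i : ℂ)) (SubDisc.dg f) := by
    rw [SubDisc.eval_dg, ← h2]
    conv_lhs => rw [hsp]
    rfl
  rw [h3, hc, map_mul, MvPolynomial.eval_C, SubDisc.SD, map_sum]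
  congr 1
  refine Finset.sum_congr rfl fun s _ => ?_
  rw [SubDisc.eval_D]
end
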